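/- arXiv:2604.15824 — 2 statements merged into one kernel-verified Lean document; each statement's English description precedes it below -/
import Mathlib

section
/- Every connected multigraph of order at least 4 is odd 4-edge-colorable. -/
/-- A multigraph is given by an edge-index type `E` and an incidence map `f : E → Sym2 V`
(loopless when no `f e` is a diagonal).  `MOddEdgeColorable f k` means: there is an
edge-coloring with `k` colors such that every vertex incident to an edge of a color class
has odd degree in that class. -/
def MOddEdgeColorable {V E : Type*} (f : E → Sym2 V) (k : ℕ) : Prop :=
  ∃ c : E → Fin k, ∀ (i : Fin k) (v : V),
    {e : E | v ∈ f e ∧ c e = i}.ncard ≠ 0 → Odd {e : E | v ∈ f e ∧ c e = i}.ncard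

/-!
Let `S` and `D` be the vertex pairs of odd and of even nonzero multiplicity. Only these matter: a
pair of `S` needs one color, and a pair of `D` needs two colors or a single color that already
covers both of its ends.

A forest is the disjoint union of two odd subgraphs. So if `F ⊆ S ∪ D` is a forest such that
`S ∆ F` has odd degree at every vertex, give `S ∆ F` one color and split `F` into two more; the
first color absorbs the pairs of `D` outside `F`. Such an `F` exists exactly when the order is
even.

In odd order the same is done off a vertex `v`, which fails only if the graph without `v` has an
odd component, and then two colors meeting only in `v` replace the first one. The pairs at `v` go
to the other three colors. If `v` has odd degree in `S`, the obstructions to doing so leave only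
three vertices. If `S` is Eulerian and nonempty, every `s(v, w) ∈ S` must leave an unbalanced union
of components of the graph without `v` and `w`, and a smallest one gives a contradiction. If `S` is
empty, `D` must be complete and is colored directly.
-/

namespace OddEdgeColoring

open Finset
open scoped symmDiff

section LinearAlgebra

theorem zmod_two_eq_zero_or_one (a : ZMod 2) : a = 0 ∨ a = 1 := by
  revert a; decide

theorem natCast_card_symmDiff {α : Type*} [DecidableEq α] (s t : Finset α) :
    (#(s ∆ t) : ZMod 2) = #s + #t := by
  rw [symmDiff_def, sup_eq_union, card_union_of_disjoint disjoint_sdiff_sdiff,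
    ← card_sdiff_add_card_inter s t, ← card_sdiff_add_card_inter t s, inter_comm t s]
  push_cast
  grind

open Matrix in
theorem exists_mulVec_eq_of_forall_vecMul_eq_zero {m n K : Type*} [Fintype m] [Fintype n]
    [Field K] (M : Matrix m n K) (w : m → K)
    (h : ∀ φ : m → K, φ ᵥ* M = 0 → φ ⬝ᵥ w = 0) : ∃ β, M *ᵥ β = w := by
  classical
  by_contra hw
  obtain ⟨f, hfw, hf⟩ := Submodule.exists_le_ker_of_notMem (p := LinearMap.range M.mulVecLin)
    (v := w) (by simpa using hw)
  have eval_f (u : m → K) : (fun i => f fun j => if i = j then 1 else 0) ⬝ᵥ u = f u := by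
    simp only [f.pi_apply_eq_sum_univ u, dotProduct, smul_eq_mul, mul_comm]
  refine hfw (eval_f w ▸ h _ (dotProduct_eq_zero _ fun u => ?_))
  rw [← dotProduct_mulVec, eval_f]
  exact hf ⟨u, rfl⟩

end LinearAlgebra

section Covers

variable {V : Type*}

/-- The vertex `x` is an end of an edge of `Y`. -/
def Covers (Y : Finset (Sym2 V)) (x : V) : Prop :=
  ∃ e ∈ Y, x ∈ e

/-- `C` is a union of components of the graph with edge set `K`. -/
def ClosedUnder (K : Finset (Sym2 V)) (C : Finset V) : Prop :=
  ∀ a b, s(a, b) ∈ K → a ∈ C → b ∈ C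

/-- No edge of `K` is a loop. -/
def Loopless (K : Finset (Sym2 V)) : Prop :=
  ∀ a, s(a, a) ∉ K

variable {K L Y Z : Finset (Sym2 V)} {C : Finset V} {a b x : V}

theorem Covers.mono (h : Y ⊆ Z) (hx : Covers Y x) : Covers Z x :=
  hx.imp fun _ he => ⟨h he.1, he.2⟩

theorem not_covers_iff : ¬ Covers Y x ↔ ∀ e ∈ Y, x ∉ e := by
  simp [Covers]

theorem covers_singleton : Covers {s(a, b)} x ↔ x = a ∨ x = b := by
  simp [Covers]

theorem Loopless.ne (h : Loopless K) (hab : s(a, b) ∈ K) : a ≠ b := by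
  rintro rfl; exact h a hab

theorem Loopless.mono (h : Loopless K) (hL : L ⊆ K) : Loopless L :=
  fun a ha => h a (hL ha)

theorem ClosedUnder.mem_iff (hC : ClosedUnder K C) (hab : s(a, b) ∈ K) : a ∈ C ↔ b ∈ C :=
  ⟨hC a b hab, hC b a (Sym2.eq_swap ▸ hab)⟩

theorem ClosedUnder.mono (hC : ClosedUnder K C) (h : L ⊆ K) : ClosedUnder L C :=
  fun a b hab => hC a b (h hab)

end Covers

variable {V : Type*} [DecidableEq V]

section Parity

/-- The degree parity of the vertex `x` in the graph with edge set `Y`, as an element of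
`ZMod 2`; a loop counts once. -/
def parity (Y : Finset (Sym2 V)) (x : V) : ZMod 2 :=
  ∑ e ∈ Y, if x ∈ e then 1 else 0

/-- `Y` induces an odd subgraph. -/
def IsOdd (Y : Finset (Sym2 V)) : Prop :=
  ∀ x, Covers Y x → parity Y x = 1

variable {Y Z : Finset (Sym2 V)} {C : Finset V} {a b x : V}

@[simp] theorem parity_empty : parity ∅ x = 0 := rfl

theorem parity_singleton : parity {s(a, b)} x = if x = a ∨ x = b then 1 else 0 := by
  rw [parity, sum_singleton]
  simp only [Sym2.mem_iff]

theorem parity_union (h : Disjoint Y Z) : parity (Y ∪ Z) x = parity Y x + parity Z x :=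
  sum_union h

theorem parity_insert {e : Sym2 V} (h : e ∉ Y) :
    parity (insert e Y) x = parity {e} x + parity Y x := by
  rw [insert_eq, parity_union (by simpa using h)]

theorem parity_symmDiff (Y Z : Finset (Sym2 V)) (x : V) :
    parity (Y ∆ Z) x = parity Y x + parity Z x := by
  have hY := parity_union (x := x) (disjoint_sdiff_inter Y Z)
  have hZ := parity_union (x := x) (disjoint_sdiff_inter Z Y)
  rw [sdiff_union_inter] at hY hZ
  rw [symmDiff_def, sup_eq_union, parity_union disjoint_sdiff_sdiff, hY, hZ, inter_comm Z Y]
  linear_combination -CharTwo.add_self_eq_zero (parity (Y ∩ Z) x)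

theorem covers_union : Covers (Y ∪ Z) x ↔ Covers Y x ∨ Covers Z x := by
  simp only [Covers, mem_union, or_and_right, exists_or]

theorem parity_eq_zero_of_not_covers (h : ¬ Covers Y x) : parity Y x = 0 :=
  sum_eq_zero fun e he => if_neg (not_covers_iff.1 h e he)

theorem covers_of_parity_eq_one (h : parity Y x = 1) : Covers Y x := by
  by_contra hx
  simp [parity_eq_zero_of_not_covers hx] at h

theorem exists_mem_of_parity_eq_one (h : parity Y x = 1) : ∃ y, s(x, y) ∈ Y := by
  obtain ⟨e, he, hxe⟩ := covers_of_parity_eq_one h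
  obtain ⟨y, rfl⟩ := Sym2.mem_iff_exists.1 hxe
  exact ⟨y, he⟩

theorem isOdd_empty : IsOdd (∅ : Finset (Sym2 V)) := by
  simp [IsOdd, Covers]

theorem isOdd_singleton : IsOdd {s(a, b)} := fun _ hx => by
  rw [parity_singleton, if_pos (covers_singleton.1 hx)]

theorem IsOdd.union (hY : IsOdd Y) (hZ : IsOdd Z) (h : ∀ x, Covers Y x → ¬ Covers Z x) :
    IsOdd (Y ∪ Z) := by
  have hdisj : Disjoint Y Z := disjoint_left.2 fun e heY heZ =>
    h e.out.1 ⟨e, heY, Sym2.out_fst_mem e⟩ ⟨e, heZ, Sym2.out_fst_mem e⟩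
  intro x hx
  rw [parity_union hdisj]
  rcases covers_union.1 hx with hxY | hxZ
  · rw [hY x hxY, parity_eq_zero_of_not_covers (h x hxY), add_zero]
  · rw [hZ x hxZ, parity_eq_zero_of_not_covers fun hxY => h x hxY hxZ, zero_add]

theorem sum_parity_singleton (hab : a ≠ b) :
    ∑ x ∈ C, parity {s(a, b)} x = (if a ∈ C then 1 else 0) + if b ∈ C then 1 else 0 := by
  have (x : V) : parity {s(a, b)} x = (if x = a then 1 else 0) + if x = b then 1 else 0 := by
    grind [parity_singleton]
  simp only [this, sum_add_distrib, sum_ite_eq']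

theorem sum_parity_eq_zero (hY : Loopless Y) (hC : ClosedUnder Y C) :
    ∑ x ∈ C, parity Y x = 0 := by
  unfold parity
  rw [sum_comm]
  refine sum_eq_zero fun e he => ?_
  induction e with | _ a b =>
  have := sum_parity_singleton (C := C) (hY.ne he)
  simp only [parity, sum_singleton] at this
  simp only [this, hC.mem_iff he, CharTwo.add_self_eq_zero]

end Parity

section Forest

/-- The vertex-edge incidence matrix of `K` over `ZMod 2`, with zero columns for the pairs that
are not in `K`. -/
def incidence (K : Finset (Sym2 V)) : Matrix V (Sym2 V) (ZMod 2) :=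
  Matrix.of fun x e => if e ∈ K ∧ x ∈ e then 1 else 0

/-- `L` is acyclic: its only even subgraph is empty. -/
def IsForest (L : Finset (Sym2 V)) : Prop :=
  ∀ Z ⊆ L, (∀ x, parity Z x = 0) → Z = ∅

variable {L M F P : Finset (Sym2 V)} {e : Sym2 V} {a b v x y z : V}

theorem IsForest.mono (h : IsForest L) (hM : M ⊆ L) : IsForest M :=
  fun Z hZ => h Z (hZ.trans hM)

theorem exists_isForest_subset (K : Finset (Sym2 V)) :
    ∃ F ⊆ K, IsForest F ∧ ∀ x, parity F x = parity K x := by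
  induction K using Finset.strongInduction with | _ K ih =>
  by_cases hK : IsForest K
  · exact ⟨K, Subset.rfl, hK, fun _ => rfl⟩
  · simp only [IsForest, not_forall] at hK
    obtain ⟨Z, hZK, hZ, hne⟩ := hK
    obtain ⟨F, hF, hforest, hparity⟩ := ih (K \ Z)
      (sdiff_ssubset hZK (nonempty_iff_ne_empty.2 hne))
    refine ⟨F, hF.trans sdiff_subset, hforest, fun x => ?_⟩
    rw [hparity, ← zero_add (parity (K \ Z) x), ← hZ x, ← parity_union disjoint_sdiff,
      union_sdiff_of_subset hZK]

theorem parity_eq_one_of_unique (he : e ∈ L) (hx : x ∈ e) (huniq : ∀ f ∈ L, x ∈ f → f = e) :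
    parity L x = 1 := by
  rw [parity, sum_eq_single_of_mem e he fun f hf hne => if_neg fun hxf => hne (huniq f hf hxf),
    if_pos hx]

theorem IsForest.insert_of_not_covers (hF : IsForest F) (hx : x ∈ e) (hcov : ¬ Covers F x) :
    IsForest (insert e F) := by
  intro Z hZ heven
  rw [not_covers_iff] at hcov
  by_cases he : e ∈ Z
  · have := parity_eq_one_of_unique he hx (by grind)
    simp [heven] at this
  · exact hF Z ((subset_insert_iff_of_notMem he).1 hZ) heven

theorem IsForest.exists_subset_parity_eq_of_not_isForest_insert (hF : IsForest F)
    (h : ¬ IsForest (insert e F)) : ∃ P ⊆ F, ∀ x, parity P x = parity {e} x := by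
  simp only [IsForest, not_forall] at h
  obtain ⟨Z, hZ, heven, hne⟩ := h
  have he : e ∈ Z := by
    by_contra he
    exact hne (hF Z ((subset_insert_iff_of_notMem he).1 hZ) heven)
  refine ⟨Z.erase e, subset_insert_iff.1 hZ, fun x => ?_⟩
  rw [← CharTwo.add_eq_zero, add_comm, ← parity_insert (notMem_erase e Z), insert_erase he, heven]

theorem IsForest.exists_subset_parity_eq_of_not_isForest_insert_insert (hF : IsForest F)
    (hv : ¬ Covers F v) (hyv : y ≠ v) (hzv : z ≠ v) (hyz : y ≠ z)
    (h : ¬ IsForest (insert s(v, y) (insert s(v, z) F))) :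
    ∃ P ⊆ F, ∀ x, parity P x = parity {s(y, z)} x := by
  obtain ⟨P, hP, hpar⟩ := (hF.insert_of_not_covers
    (Sym2.mem_mk_left v z) hv).exists_subset_parity_eq_of_not_isForest_insert h
  have hz : s(v, z) ∈ P := by
    obtain ⟨e, he, hve⟩ := covers_of_parity_eq_one (x := v) (by rw [hpar, parity_singleton]; simp)
    have := not_covers_iff.1 hv e
    grind
  refine ⟨P.erase s(v, z), subset_insert_iff.1 hP, fun x => ?_⟩
  have := parity_insert (x := x) (notMem_erase s(v, z) P)
  rw [insert_erase hz, hpar] at this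
  grind [parity_singleton]

theorem IsForest.insert_sdiff (hF : IsForest F) (hP : P ⊆ F)
    (hpar : ∀ x, parity P x = parity {e} x) (he : e ∉ F) : IsForest (insert e (F \ P)) := by
  by_contra h
  obtain ⟨Q, hQ, hparQ⟩ := (hF.mono sdiff_subset).exists_subset_parity_eq_of_not_isForest_insert h
  have hdisj : Disjoint Q P := disjoint_sdiff_self_left.mono_left hQ
  have hempty := hF (Q ∪ P) (union_subset (hQ.trans sdiff_subset) hP) fun x => by
    rw [parity_union hdisj, hparQ, hpar, CharTwo.add_self_eq_zero]
  obtain ⟨-, rfl⟩ := union_eq_empty.1 hempty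
  induction e with | _ a b =>
  simpa [parity_singleton] using hpar a

theorem parity_insert_sdiff (hP : P ⊆ F) (hpar : ∀ x, parity P x = parity {e} x) (he : e ∉ F)
    (x : V) : parity (insert e (F \ P)) x = parity F x := by
  rw [parity_insert (fun h => he (mem_sdiff.1 h).1), ← hpar, ← parity_union disjoint_sdiff,
    union_sdiff_of_subset hP]

/-- `A` and `B` partition the edge set `L` so that every covered even vertex outside `M` has odd
degree in both, while every other vertex has all its edges in one of the two. -/
structure IsSplitting (L : Finset (Sym2 V)) (M : Set V) (A B : Finset (Sym2 V)) : Prop where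
  union : A ∪ B = L
  disjoint : Disjoint A B
  parity_eq_one : ∀ x ∉ M, parity L x = 0 → Covers L x → parity A x = 1 ∧ parity B x = 1
  monochromatic : ∀ x, x ∈ M ∨ parity L x = 1 → ¬ Covers A x ∨ ¬ Covers B x

namespace IsSplitting

variable {A B : Finset (Sym2 V)} {M : Set V}

theorem symm (h : IsSplitting L M A B) : IsSplitting L M B A where
  union := union_comm A B ▸ h.union
  disjoint := h.disjoint.symm
  parity_eq_one x hx h₀ hcov := (h.parity_eq_one x hx h₀ hcov).symm
  monochromatic x hx := (h.monochromatic x hx).symm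

theorem parity_add (h : IsSplitting L M A B) (x : V) : parity L x = parity A x + parity B x := by
  rw [← h.union, parity_union h.disjoint]

theorem parity_left (h : IsSplitting L M A B) (hx : x ∉ M) (hcov : Covers A x) :
    parity A x = 1 := by
  rcases zmod_two_eq_zero_or_one (parity L x) with h₀ | h₁
  · exact (h.parity_eq_one x hx h₀ (hcov.mono (h.union ▸ subset_union_left))).1
  · have hB := (h.monochromatic x (.inr h₁)).resolve_left (not_not.2 hcov)
    rw [← h₁, h.parity_add, parity_eq_zero_of_not_covers hB, add_zero]

theorem parity_left_eq_zero (h : IsSplitting L M A B) (hx : x ∈ M) (h₀ : parity L x = 0) :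
    parity A x = 0 := by
  rw [h.parity_add] at h₀
  rcases h.monochromatic x (.inl hx) with hA | hB
  · exact parity_eq_zero_of_not_covers hA
  · rwa [parity_eq_zero_of_not_covers hB, add_zero] at h₀

end IsSplitting

open Matrix in
theorem incidence_mulVec [Fintype V] (K : Finset (Sym2 V)) (β : Sym2 V → ZMod 2) (x : V) :
    (incidence K *ᵥ β) x = parity {e ∈ K | β e = 1} x := by
  simp only [mulVec, dotProduct, incidence, of_apply, parity, sum_filter, ite_mul, one_mul,
    zero_mul]
  rw [← sum_subset (subset_univ K) (by simp +contextual)]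
  refine sum_congr rfl fun e he => ?_
  rcases zmod_two_eq_zero_or_one (β e) with h | h <;> simp [he, h]

open Matrix in
theorem vecMul_incidence [Fintype V] {K : Finset (Sym2 V)} (hab : a ≠ b)
    (he : s(a, b) ∈ K) (φ : V → ZMod 2) : (φ ᵥ* incidence K) s(a, b) = φ a + φ b := by
  have (x : V) : φ x * (if x = a ∨ x = b then 1 else 0) =
      (if x = a then φ x else 0) + if x = b then φ x else 0 := by grind
  simp [vecMul, dotProduct, incidence, he, this, sum_add_distrib]

variable [Finite V]

open Matrix in
theorem exists_subset_parity_eq (K : Finset (Sym2 V)) (t : V → ZMod 2)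
    (ht : ∀ C, ClosedUnder K C → ∑ x ∈ C, t x = 0) : ∃ F ⊆ K, ∀ x, parity F x = t x := by
  cases nonempty_fintype V
  obtain ⟨β, hβ⟩ := exists_mulVec_eq_of_forall_vecMul_eq_zero (incidence K) t fun φ hφ => by
    have closed : ClosedUnder K {x | φ x = 1} := by
      intro a b hab ha
      rcases eq_or_ne a b with rfl | hne
      · exact ha
      · have h := vecMul_incidence hne hab φ
        rw [hφ, Pi.zero_apply, eq_comm, CharTwo.add_eq_zero] at h
        simpa only [mem_filter_univ, h] using ha
    rw [← ht _ closed, sum_filter]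
    refine sum_congr rfl fun x _ => ?_
    rcases zmod_two_eq_zero_or_one (φ x) with h | h <;> simp [h]
  exact ⟨_, filter_subset _ K, fun x => by rw [← incidence_mulVec, hβ]⟩

open Matrix in
theorem IsForest.exists_potential (hL : IsForest L) (w : Sym2 V → ZMod 2) :
    ∃ β : V → ZMod 2, ∀ a b, a ≠ b → s(a, b) ∈ L → β a + β b = w s(a, b) := by
  cases nonempty_fintype V
  obtain ⟨β, hβ⟩ := exists_mulVec_eq_of_forall_vecMul_eq_zero (incidence L)ᵀ
    (fun e => if e ∈ L then w e else 0) fun φ hφ => by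
      rw [vecMul_transpose] at hφ
      have support_empty := hL _ (filter_subset (fun e => φ e = 1) L) fun x => by
        rw [← incidence_mulVec, hφ, Pi.zero_apply]
      rw [filter_eq_empty_iff] at support_empty
      refine sum_eq_zero fun e _ => ?_
      by_cases he : e ∈ L
      · simp [(zmod_two_eq_zero_or_one _).resolve_right (support_empty he)]
      · simp [he]
  refine ⟨β, fun a b hab he => ?_⟩
  rw [← vecMul_incidence hab he, ← mulVec_transpose, hβ]
  exact if_pos he

theorem IsForest.exists_edge_labeling (hL : IsForest L) (π : V → Sym2 V → ZMod 2) :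
    ∃ (c : Sym2 V → ZMod 2) (β : V → ZMod 2), ∀ e ∈ L, ∀ x ∈ e, c e = β x + π x e := by
  obtain ⟨β, hβ⟩ := hL.exists_potential fun e =>
    Sym2.lift ⟨fun a b => π a e + π b e, fun _ _ => add_comm _ _⟩ e
  refine ⟨fun e => β e.out.1 + π e.out.1 e, β, fun e he x hx => ?_⟩
  have hy := Sym2.out_fst_mem e
  dsimp only
  generalize e.out.1 = y at hy
  rcases eq_or_ne y x with rfl | hne
  · rfl
  · obtain rfl : e = s(y, x) := (Sym2.mem_and_mem_iff hne).1 ⟨hy, hx⟩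
    have := hβ y x hne he
    grind [Sym2.lift_mk]

theorem IsForest.exists_isSplitting (hL : IsForest L) (M : Set V) :
    ∃ A B, IsSplitting L M A B := by
  classical
  have exists_edge (x : V) : ∃ m, Covers L x → m ∈ L ∧ x ∈ m := by
    by_cases h : Covers L x
    · exact h.imp fun _ hm _ => hm
    · exact ⟨s(x, x), fun h' => absurd h' h⟩
  choose m hm using exists_edge
  -- At a vertex to be split, the edge `m x` gets one color and all the others get the other.
  obtain ⟨c, β, hc⟩ := hL.exists_edge_labeling fun x e =>
    if (x ∉ M ∧ parity L x = 0) ∧ e = m x then 1 else 0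
  have union : {e ∈ L | c e = 0} ∪ {e ∈ L | ¬ c e = 0} = L := filter_union_filter_not_eq _ _
  have disjoint : Disjoint {e ∈ L | c e = 0} {e ∈ L | ¬ c e = 0} :=
    disjoint_filter_filter_not _ _ _
  refine ⟨_, _, union, disjoint, fun x hx heven hcov => ?_, fun x hx => ?_⟩
  · have hsum := parity_union (x := x) disjoint
    rw [union, heven] at hsum
    have class_of_m (p : Sym2 V → Prop) [DecidablePred p]
        (hp : ∀ e ∈ L, x ∈ e → (p e ↔ e = m x)) : parity {e ∈ L | p e} x = 1 := by
      rw [parity, ← sum_subset (s₁ := {m x})]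
      all_goals grind
    rcases zmod_two_eq_zero_or_one (β x) with h | h
    · have := class_of_m (fun e => ¬ c e = 0) (by grind)
      grind
    · have := class_of_m (fun e => c e = 0) (by grind)
      grind
  · have hconst : ∀ e ∈ L, x ∈ e → c e = β x := by
      intro e he hxe
      rw [hc e he x hxe, if_neg (by grind), add_zero]
    rcases zmod_two_eq_zero_or_one (β x) with h | h <;> simp [not_covers_iff] <;> grind

end Forest

section Colorable

/-- `S` and `D` are the vertex pairs of odd multiplicity and of even nonzero multiplicity of a
multigraph, and `Y i` are the pairs that get color `i` an odd number of times. A pair of `D` may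
also get a single color on all its copies, provided both its ends are covered by that color
anyway. -/
structure IsColoring {k : ℕ} (S D : Finset (Sym2 V)) (Y : Fin k → Finset (Sym2 V)) : Prop where
  isOdd : ∀ i, IsOdd (Y i)
  card_eq_one : ∀ e ∈ S, #{i | e ∈ Y i} = 1
  card_eq_two_or_absorbed : ∀ e ∈ D,
    #{i | e ∈ Y i} = 2 ∨ #{i | e ∈ Y i} = 0 ∧ ∃ i, ∀ x ∈ e, Covers (Y i) x
  card_eq_zero : ∀ e, e ∉ S → e ∉ D → #{i | e ∈ Y i} = 0

/-- The simple-graph form of odd `k`-edge-colorability, for the multigraphs whose pairs of odd and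
of even nonzero multiplicity are `S` and `D`. -/
def Colorable (S D : Finset (Sym2 V)) (k : ℕ) : Prop :=
  ∃ Y : Fin k → Finset (Sym2 V), IsColoring S D Y

theorem exists_coloring_odd_iff_mem {E ι : Type*} [DecidableEq ι]
    {I : Finset ι} (hI : I.Nonempty) (T : Finset E) (hle : #I ≤ #T)
    (hpar : (#I : ZMod 2) = #T) :
    ∃ c : E → ι, (∀ e ∈ T, c e ∈ I) ∧
      ∀ i, (#{e ∈ T | c e = i} : ZMod 2) = if i ∈ I then 1 else 0 := by
  classical
  induction hI using Finset.Nonempty.cons_induction generalizing T with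
  | singleton i =>
    refine ⟨fun _ => i, by simp, fun j => ?_⟩
    rcases eq_or_ne i j with rfl | hij
    · simpa using hpar.symm
    · simp [hij, hij.symm]
  | cons i I hi hI ih =>
    rw [card_cons] at hle hpar
    obtain ⟨T, e₀, he₀, rfl⟩ := (card_pos.1 (by omega : 0 < #T)).exists_cons_eq
    rw [card_cons] at hle hpar
    obtain ⟨c, hcI, hc⟩ := ih T (by omega) (by push_cast at hpar; exact add_right_cancel hpar)
    refine ⟨Function.update c e₀ i, by grind, fun j => ?_⟩
    have hupdate : {e ∈ T | Function.update c e₀ i e = j} = {e ∈ T | c e = j} :=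
      filter_congr fun e he => by grind
    rw [cons_eq_insert, filter_insert, hupdate, cons_eq_insert, Function.update_self]
    rcases eq_or_ne i j with rfl | hij
    · rw [if_pos rfl, card_insert_of_notMem (by simp [he₀]), Nat.cast_add, hc, if_neg hi]
      simp
    · simp [hij, hij.symm, hc]

variable {S D : Finset (Sym2 V)} {k : ℕ} {Y : Fin k → Finset (Sym2 V)}

theorem IsColoring.exists_fiber_coloring (hY : IsColoring S D Y) {E : Type*} {T : Finset E}
    {p : Sym2 V} (h : p ∈ S ∧ Odd #T ∨ p ∈ D ∧ Even #T ∧ #T ≠ 0) :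
    ∃ c : E → Fin k, (∀ e ∈ T, ∀ x ∈ p, Covers (Y (c e)) x) ∧
      ∀ i, (#{e ∈ T | c e = i} : ZMod 2) = if p ∈ Y i then 1 else 0 := by
  obtain ⟨hcard, hle, hpar⟩ | ⟨heven, hnone, i, hi⟩ :
      (0 < #{i | p ∈ Y i} ∧ #{i | p ∈ Y i} ≤ #T ∧ (#{i | p ∈ Y i} : ZMod 2) = #T) ∨
        (#T : ZMod 2) = 0 ∧ #{i | p ∈ Y i} = 0 ∧ ∃ i, ∀ x ∈ p, Covers (Y i) x := by
    rcases h with ⟨hp, hodd⟩ | ⟨hp, heven, hne⟩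
    · have := hY.card_eq_one p hp
      exact .inl ⟨by omega, by have := hodd.pos; omega,
        by rw [this, ZMod.natCast_eq_one_iff_odd.2 hodd, Nat.cast_one]⟩
    · have hzero := ZMod.natCast_eq_zero_iff_even.2 heven
      refine (hY.card_eq_two_or_absorbed p hp).imp (fun h₂ => ?_) fun h₀ => ⟨hzero, h₀⟩
      obtain ⟨n, hn⟩ := heven
      exact ⟨by omega, by omega, by rw [h₂, hzero]; rfl⟩
  · obtain ⟨c, hcI, hc⟩ := exists_coloring_odd_iff_mem (card_pos.1 hcard) T hle hpar
    exact ⟨c, fun e he x hx => ⟨p, by simpa using hcI e he, hx⟩, by simpa using hc⟩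
  · rw [Finset.card_eq_zero, filter_eq_empty_iff] at hnone
    refine ⟨fun _ => i, fun _ _ => hi, fun j => ?_⟩
    rw [if_neg (hnone (mem_univ j)), filter_const]
    split_ifs <;> simp [heven]

variable [Fintype V] {E : Type*} [Fintype E] {f : E → Sym2 V}

theorem IsColoring.exists_edge_coloring
    (hY : IsColoring {p | Odd #{e | f e = p}} {p | Even #{e | f e = p} ∧ #{e | f e = p} ≠ 0} Y) :
    ∃ c : E → Fin k, (∀ e, ∀ x ∈ f e, Covers (Y (c e)) x) ∧
      ∀ i p, (#{e | f e = p ∧ c e = i} : ZMod 2) = if p ∈ Y i then 1 else 0 := by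
  have fiber (p : Sym2 V) (hp : p ∈ Set.range f) :=
    hY.exists_fiber_coloring (T := {e | f e = p}) (p := p) (by
      obtain ⟨e, rfl⟩ := hp
      have hne : #{e' | f e' = f e} ≠ 0 := card_ne_zero_of_mem (a := e) (by simp)
      simpa [hne] using (Nat.even_or_odd _).symm)
  choose c hcov hc using fiber
  refine ⟨fun e => c (f e) ⟨e, rfl⟩ e, fun e => hcov _ _ e (by simp), fun i p => ?_⟩
  by_cases hp : p ∈ Set.range f
  · rw [← hc p hp i, filter_filter]
    congr 2
    refine filter_congr fun e _ => and_congr_right ?_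
    rintro rfl
    rfl
  · have hnone := hY.card_eq_zero p (by simp_all) (by simp_all)
    rw [Finset.card_eq_zero, filter_eq_empty_iff] at hnone
    rw [if_neg (hnone (mem_univ i)), filter_false_of_mem (by simp_all), card_empty, Nat.cast_zero]

theorem Colorable.mOddEdgeColorable
    (h : Colorable {p | Odd #{e | f e = p}} {p | Even #{e | f e = p} ∧ #{e | f e = p} ≠ 0} k) :
    MOddEdgeColorable f k := by
  obtain ⟨Y, hY⟩ := h
  obtain ⟨c, hcov, hc⟩ := hY.exists_edge_coloring
  refine ⟨c, fun i v hne => ?_⟩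
  rw [Set.ncard_eq_toFinset_card', Set.toFinset_ofPred] at hne ⊢
  obtain ⟨e₀, he₀⟩ := card_ne_zero.1 hne
  rw [mem_filter_univ] at he₀
  obtain ⟨hve₀, rfl⟩ := he₀
  rw [← ZMod.natCast_eq_one_iff_odd, ← hY.isOdd _ v (hcov e₀ v hve₀)]
  generalize c e₀ = i
  calc (#{e | v ∈ f e ∧ c e = i} : ZMod 2)
    _ = ∑ p, (#{e | (v ∈ f e ∧ c e = i) ∧ f e = p} : ZMod 2) := by
      simp_rw [← filter_filter _ (fun e => f e = _)]
      rw [← Nat.cast_sum, ← card_eq_sum_card_fiberwise (by simp [Set.MapsTo])]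
    _ = ∑ p, if p ∈ Y i then if v ∈ p then 1 else 0 else 0 := by
      refine sum_congr rfl fun p _ => ?_
      by_cases hv : v ∈ p
      · rw [if_pos hv, ← hc]
        congr 2
        grind
      · rw [filter_false_of_mem (by grind), if_neg hv, ite_self, card_empty, Nat.cast_zero]
    _ = parity (Y i) v := by rw [parity, sum_ite_mem, univ_inter]

end Colorable

section Star

/-- The edges of `K` that avoid the vertex `v`. -/
def away (K : Finset (Sym2 V)) (v : V) : Finset (Sym2 V) :=
  {e ∈ K | v ∉ e}

/-- The star with center `v` and leaves `P`. -/
def star (v : V) (P : Finset V) : Finset (Sym2 V) :=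
  P.image fun u => s(v, u)

/-- The vertices joined to `v` by an edge of `K`. -/
def nbhd [Fintype V] (K : Finset (Sym2 V)) (v : V) : Finset V :=
  {u | s(v, u) ∈ K}

variable {K L : Finset (Sym2 V)} {P : Finset V} {e : Sym2 V} {u v x : V}

@[simp] theorem mem_away : e ∈ away K v ↔ e ∈ K ∧ v ∉ e := mem_filter

theorem away_subset : away K v ⊆ K := filter_subset _ _

theorem not_covers_of_subset_away (h : L ⊆ away K v) : ¬ Covers L v :=
  not_covers_iff.2 fun _ he => (mem_away.1 (h he)).2

@[simp] theorem mk_mem_star : s(v, u) ∈ star v P ↔ u ∈ P := by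
  simp only [star, mem_image, Sym2.congr_right, exists_eq_right]

theorem center_mem_of_mem_star (h : e ∈ star v P) : v ∈ e := by
  obtain ⟨u, -, rfl⟩ := mem_image.1 h
  exact Sym2.mem_mk_left v u

theorem disjoint_star_of_not_covers (h : ¬ Covers L v) : Disjoint L (star v P) :=
  disjoint_left.2 fun _ he he' => not_covers_iff.1 h _ he (center_mem_of_mem_star he')

theorem parity_star_center : parity (star v P) v = #P := by
  rw [parity, sum_congr rfl fun e he => if_pos (center_mem_of_mem_star he), sum_const,
    nsmul_eq_mul, mul_one, star, card_image_of_injective P fun _ _ => Sym2.congr_right.1]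

theorem covers_star_center : Covers (star v P) v ↔ P.Nonempty := by
  simp [Covers, star, Finset.Nonempty]

theorem covers_star (hx : x ≠ v) : Covers (star v P) x ↔ x ∈ P := by
  simp [Covers, star, hx]

theorem parity_star (hx : x ≠ v) : parity (star v P) x = if x ∈ P then 1 else 0 := by
  split_ifs with hxP
  · refine parity_eq_one_of_unique (mk_mem_star.2 hxP) (Sym2.mem_mk_right v x) fun f hf hxf => ?_
    exact (Sym2.mem_and_mem_iff hx.symm).1 ⟨center_mem_of_mem_star hf, hxf⟩
  · exact parity_eq_zero_of_not_covers (mt (covers_star hx).1 hxP)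

theorem isOdd_star (hP : Odd #P) : IsOdd (star v P) := by
  intro x hx
  rcases eq_or_ne x v with rfl | hxv
  · rw [parity_star_center, ZMod.natCast_eq_one_iff_odd.2 hP]
  · rw [parity_star hxv, if_pos ((covers_star hxv).1 hx)]

theorem union_star_pair (L : Finset (Sym2 V)) (v y z : V) :
    L ∪ star v {y, z} = insert s(v, y) (insert s(v, z) L) := by
  simp [star, image_insert]

theorem IsForest.union_star_pair (hL : IsForest L) (hv : ¬ Covers L v) (hx : ¬ Covers L x)
    (hxv : x ≠ v) (hxu : x ≠ u) : IsForest (L ∪ star v {x, u}) := by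
  rw [OddEdgeColoring.union_star_pair]
  refine (hL.insert_of_not_covers (Sym2.mem_mk_left v u) hv).insert_of_not_covers
    (Sym2.mem_mk_right v x) ?_
  rw [insert_eq, covers_union, covers_singleton]
  tauto

variable [Fintype V]

@[simp] theorem mem_nbhd : u ∈ nbhd K v ↔ s(v, u) ∈ K := mem_filter_univ _

theorem mem_nbhd_comm : u ∈ nbhd K v ↔ v ∈ nbhd K u := by
  rw [mem_nbhd, mem_nbhd, Sym2.eq_swap]

theorem mem_nbhd_union : u ∈ nbhd (K ∪ L) v ↔ u ∈ nbhd K v ∨ u ∈ nbhd L v := by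
  simp

theorem Loopless.self_notMem_nbhd (h : Loopless K) : v ∉ nbhd K v := by
  simpa using h v

theorem away_union_star_nbhd : away K v ∪ star v (nbhd K v) = K := by
  ext e
  by_cases he : v ∈ e
  · obtain ⟨u, rfl⟩ := Sym2.mem_iff_exists.1 he
    simp
  · simp [he, mt center_mem_of_mem_star he]

theorem parity_eq_parity_away_add :
    parity K x = parity (away K v) x + parity (star v (nbhd K v)) x := by
  rw [← parity_union (disjoint_star_of_not_covers (not_covers_of_subset_away Subset.rfl)),
    away_union_star_nbhd]

theorem parity_eq_card_nbhd : parity K v = #(nbhd K v) := by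
  rw [parity_eq_parity_away_add (v := v), parity_star_center,
    parity_eq_zero_of_not_covers (not_covers_of_subset_away Subset.rfl), zero_add]

theorem parity_away (hx : x ≠ v) :
    parity (away K v) x = parity K x + if x ∈ nbhd K v then 1 else 0 := by
  rw [parity_eq_parity_away_add (K := K) (v := v), parity_star hx, CharTwo.add_cancel_right]

end Star

section EvenOrder

variable {S D F Y₁ Y₄ : Finset (Sym2 V)}

theorem card_filter_mem_four (e : Sym2 V) (Y₁ Y₂ Y₃ Y₄ : Finset (Sym2 V)) :
    #{i | e ∈ ![Y₁, Y₂, Y₃, Y₄] i} = (if e ∈ Y₁ then 1 else 0) + (if e ∈ Y₂ then 1 else 0) +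
      (if e ∈ Y₃ then 1 else 0) + if e ∈ Y₄ then 1 else 0 := by
  rw [card_filter, Fin.sum_univ_four]
  rfl

theorem IsForest.exists_isOdd_union [Finite V] {L : Finset (Sym2 V)} (hL : IsForest L) :
    ∃ A B, A ∪ B = L ∧ Disjoint A B ∧ IsOdd A ∧ IsOdd B := by
  obtain ⟨A, B, h⟩ := hL.exists_isSplitting ∅
  exact ⟨A, B, h.union, h.disjoint, fun x => h.parity_left (Set.notMem_empty x),
    fun x => h.symm.parity_left (Set.notMem_empty x)⟩

theorem colorable_of_isForest [Finite V] (hSD : Disjoint S D) (hF : F ⊆ S ∪ D)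
    (hforest : IsForest F) (hunion : Y₁ ∪ Y₄ = S ∆ F) (hdisj : Disjoint Y₁ Y₄) (h₁ : IsOdd Y₁)
    (h₄ : IsOdd Y₄)
    (habs : ∀ e ∈ D, e ∉ F → (∀ x ∈ e, Covers Y₁ x) ∨ ∀ x ∈ e, Covers Y₄ x) :
    Colorable S D 4 := by
  obtain ⟨Y₂, Y₃, hF₂₃, hdisj₂₃, h₂, h₃⟩ := hforest.exists_isOdd_union
  refine ⟨![Y₁, Y₂, Y₃, Y₄], ?_, ?_, ?_, ?_⟩
  · simp [Fin.forall_fin_succ, h₁, h₂, h₃, h₄]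
  all_goals
    simp only [Finset.ext_iff, mem_union, mem_symmDiff, disjoint_left, subset_iff] at *
    intro e
    rw [card_filter_mem_four]
  · grind
  · intro he
    by_cases heF : e ∈ F
    · grind
    · exact .inr ⟨by grind, (habs e he heF).elim (fun h => ⟨0, h⟩) fun h => ⟨3, h⟩⟩
  · grind

variable [Fintype V]

/-- `S` and `D` partition the edges of a connected simple graph on `V`. -/
structure IsConnectedPair (S D : Finset (Sym2 V)) : Prop where
  disjoint : Disjoint S D
  loopless : Loopless (S ∪ D)
  eq_univ : ∀ C : Finset V, C.Nonempty → ClosedUnder (S ∪ D) C → C = univ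

theorem Loopless.sum_parity_univ {Y : Finset (Sym2 V)} (hY : Loopless Y) : ∑ x, parity Y x = 0 :=
  sum_parity_eq_zero hY fun _ _ _ _ => mem_univ _

namespace IsConnectedPair

theorem exists_isForest_parity_eq (h : IsConnectedPair S D) (t : V → ZMod 2)
    (ht : ∑ x, t x = 0) : ∃ F ⊆ S ∪ D, IsForest F ∧ ∀ x, parity F x = t x := by
  obtain ⟨K, hK, hparK⟩ := exists_subset_parity_eq (S ∪ D) t fun C hC => by
    rcases C.eq_empty_or_nonempty with rfl | hne
    · exact sum_empty
    · rwa [h.eq_univ C hne hC]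
  obtain ⟨F, hF, hforest, hparF⟩ := exists_isForest_subset K
  exact ⟨F, hF.trans hK, hforest, fun x => (hparF x).trans (hparK x)⟩

theorem exists_isForest_parity_symmDiff_eq (h : IsConnectedPair S D) (t : V → ZMod 2)
    (ht : ∑ x, t x = 0) : ∃ F ⊆ S ∪ D, IsForest F ∧ ∀ x, parity (S ∆ F) x = t x := by
  obtain ⟨F, hF, hforest, hpar⟩ := h.exists_isForest_parity_eq (fun x => parity S x + t x) (by
    rw [sum_add_distrib, ht, (h.loopless.mono subset_union_left).sum_parity_univ, add_zero])
  exact ⟨F, hF, hforest, fun x => by rw [parity_symmDiff, hpar, CharTwo.add_cancel_left]⟩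

theorem colorable_of_even_card (h : IsConnectedPair S D) (heven : Even (Fintype.card V)) :
    Colorable S D 4 := by
  obtain ⟨F, hF, hforest, hpar⟩ := h.exists_isForest_parity_symmDiff_eq 1 (by
    simpa using ZMod.natCast_eq_zero_iff_even.2 heven)
  exact colorable_of_isForest h.disjoint hF hforest (union_empty _) (disjoint_empty_right _)
    (fun x _ => hpar x) isOdd_empty fun _ _ _ => .inl fun x _ => covers_of_parity_eq_one (hpar x)

end IsConnectedPair

end EvenOrder

section CutVertex

variable {S D K : Finset (Sym2 V)} {C : Finset V} {v x : V}

/-- The edges of `K` with at least one end in `C`. -/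
def touching (K : Finset (Sym2 V)) (C : Finset V) : Finset (Sym2 V) :=
  {e ∈ K | ∃ x ∈ C, x ∈ e}

theorem touching_subset : touching K C ⊆ K := filter_subset _ _

theorem parity_sdiff_touching :
    parity (K \ touching K C) x = parity K x + parity (touching K C) x := by
  have := parity_union (x := x) (sdiff_disjoint (s := touching K C) (t := K))
  rw [sdiff_union_of_subset touching_subset] at this
  rw [this, CharTwo.add_cancel_right]

theorem not_covers_sdiff_touching (hx : x ∈ C) : ¬ Covers (K \ touching K C) x := by
  grind [not_covers_iff, touching]

theorem parity_touching_of_mem (hx : x ∈ C) : parity (touching K C) x = parity K x := by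
  have := parity_sdiff_touching (K := K) (C := C) (x := x)
  rwa [parity_eq_zero_of_not_covers (not_covers_sdiff_touching hx), eq_comm, CharTwo.add_eq_zero,
    eq_comm] at this

theorem not_covers_touching (hC : ClosedUnder (away K v) C) (hv : v ∉ C) (hx : x ∉ C)
    (hxv : x ≠ v) : ¬ Covers (touching K C) x := by
  rintro ⟨e, he, hxe⟩
  obtain ⟨heK, y, hy, hye⟩ := mem_filter.1 he
  have hyx : y ≠ x := ne_of_mem_of_not_mem hy hx
  obtain rfl := (Sym2.mem_and_mem_iff hyx).1 ⟨hye, hxe⟩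
  exact hx (hC y x (by grind [mem_away]) hy)

theorem parity_touching_center (hK : Loopless K) (hC : ClosedUnder (away K v) C) (hv : v ∉ C) :
    parity (touching K C) v = ∑ x ∈ C, parity K x := by
  have := sum_parity_eq_zero (C := insert v C) (hK.mono touching_subset) fun a b hab _ => by
    by_contra hb
    simp only [mem_insert, not_or] at hb
    exact not_covers_touching hC hv hb.2 hb.1 ⟨_, hab, Sym2.mem_mk_right a b⟩
  rwa [sum_insert hv, sum_congr rfl fun x hx => parity_touching_of_mem hx, CharTwo.add_eq_zero]
    at this

variable [Fintype V]

theorem IsConnectedPair.colorable_of_closedUnder_away (h : IsConnectedPair S D)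
    (hodd : Odd (Fintype.card V)) (hv : v ∉ C) (hC : ClosedUnder (away (S ∪ D) v) C)
    (hcard : Odd #C) : Colorable S D 4 := by
  obtain ⟨F, hF, hforest, hpar⟩ := h.exists_isForest_parity_symmDiff_eq
    (fun x => 1 + if x = v then 1 else 0) (by
      simp [sum_add_distrib, ZMod.natCast_eq_one_iff_odd.2 hodd, CharTwo.add_self_eq_zero])
  have hSF : S ∆ F ⊆ S ∪ D := symmDiff_subset_union.trans (union_subset subset_union_left hF)
  have hCF : ClosedUnder (away (S ∆ F) v) C := hC.mono (filter_subset_filter _ hSF)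
  generalize hK : S ∆ F = K at *
  have center : parity (touching K C) v = 1 := by
    rw [parity_touching_center (h.loopless.mono hSF) hCF hv, sum_congr rfl fun x hx => by
      rw [hpar, if_neg (ne_of_mem_of_not_mem hx hv), add_zero]]
    simpa using ZMod.natCast_eq_one_iff_odd.2 hcard
  have inside (x : V) (hx : x ∈ C ∨ x = v) : parity (touching K C) x = 1 := by
    rcases hx with hx | rfl
    · grind [parity_touching_of_mem]
    · exact center
  have outside (x : V) (hx : x ∉ C) : parity (K \ touching K C) x = 1 := by
    rw [parity_sdiff_touching, hpar]
    by_cases hxv : x = v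
    · grind
    · simp [hxv, parity_eq_zero_of_not_covers (not_covers_touching hCF hv hx hxv)]
  refine colorable_of_isForest (Y₁ := touching K C) (Y₄ := K \ touching K C) h.disjoint hF hforest
    (hK ▸ union_sdiff_of_subset touching_subset) disjoint_sdiff ?_ ?_ fun e he _ => ?_
  · intro x hx
    by_contra hx'
    exact not_covers_touching hCF hv (by grind) (by grind) hx
  · exact fun x hx => outside x fun hxC => not_covers_sdiff_touching hxC hx
  · by_cases htouch : ∃ y ∈ C, y ∈ e
    · refine .inl fun x hx => covers_of_parity_eq_one (inside x ?_)
      by_contra! hx'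
      exact not_covers_touching hC hv hx'.1 hx'.2
        ⟨e, mem_filter.2 ⟨mem_union_right S he, htouch⟩, hx⟩
    · exact .inr fun x hx => covers_of_parity_eq_one (outside x fun hxC => htouch ⟨x, hxC, hx⟩)

end CutVertex

section Center

variable {S D X F Y₂ Y₃ : Finset (Sym2 V)} {R P : Finset V} {v : V}

/-- `X` and `F` are sets of edges avoiding the center `v` such that `away S v ∆ F ∆ X`, the edge
set given to the first color, has odd degree at every other vertex. -/
structure IsCompletion (S D : Finset (Sym2 V)) (v : V) (X F : Finset (Sym2 V)) : Prop where
  left_subset : X ⊆ away (S ∪ D) v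
  right_subset : F ⊆ away (S ∪ D) v
  parity_eq : ∀ x, x ≠ v → parity F x = 1 + parity (away S v) x + parity X x

/-- The edge set given to the fourth color by the colorings with center `v`. -/
def fourth [Fintype V] (S : Finset (Sym2 V)) (v : V) (R : Finset V)
    (X : Finset (Sym2 V)) : Finset (Sym2 V) :=
  star v (nbhd S v ∆ R) ∪ X

theorem IsSplitting.isOdd_left_union_star {L A B : Finset (Sym2 V)}
    (h : IsSplitting L (insert v P : Finset V) A B) (hL : ∀ x ∈ insert v P, parity L x = 0)
    (hdisj : Disjoint L (star v P)) (hP : Odd #P) : IsOdd (A ∪ star v P) := by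
  intro x hx
  rw [parity_union (hdisj.mono_left (h.union ▸ subset_union_left))]
  by_cases hxP : x ∈ insert v P
  · have hstar : Covers (star v P) x := by
      rcases eq_or_ne x v with rfl | hxv
      · exact covers_star_center.2 (card_pos.1 hP.pos)
      · exact (covers_star hxv).2 (mem_of_mem_insert_of_ne hxP hxv)
    rw [h.parity_left_eq_zero (mem_coe.2 hxP) (hL x hxP), isOdd_star hP x hstar, zero_add]
  · rw [mem_insert, not_or] at hxP
    have hstar : ¬ Covers (star v P) x := mt (covers_star hxP.1).1 hxP.2
    rw [h.parity_left (by simpa using hxP) ((covers_union.1 hx).resolve_right hstar),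
      parity_eq_zero_of_not_covers hstar, add_zero]

namespace IsCompletion

theorem not_covers_right (h : IsCompletion S D v X F) : ¬ Covers F v :=
  not_covers_of_subset_away h.right_subset

theorem parity_first (h : IsCompletion S D v X F) {x : V} (hx : x ≠ v) :
    parity (away S v ∆ F ∆ X) x = 1 := by
  rw [parity_symmDiff, parity_symmDiff, h.parity_eq x hx]
  grind

theorem isOdd_first (h : IsCompletion S D v X F) : IsOdd (away S v ∆ F ∆ X) := by
  intro x hx
  refine h.parity_first ?_
  rintro rfl
  refine not_covers_of_subset_away (K := S ∪ D) (fun e he => ?_) hx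
  have hX := @h.left_subset e
  have hF := @h.right_subset e
  grind [mem_symmDiff, mem_away]

variable [Fintype V]

theorem colorable_of_isOdd (h : IsCompletion S D v X F) (hSD : Disjoint S D)
    (hFX : ∀ e ∈ F, e ∈ X → e ∉ S) (hR : R ⊆ nbhd (S ∪ D) v) (hP : P ⊆ nbhd D v \ R)
    (hinter : Y₂ ∩ Y₃ = star v P) (hunion : Y₂ ∪ Y₃ = F ∪ star v (R ∪ P))
    (h₂ : IsOdd Y₂) (h₃ : IsOdd Y₃) (h₄ : IsOdd (fourth S v R X))
    (habs : ∀ u ∈ nbhd D v, u ∉ R → u ∉ P → Covers Y₂ v ∧ Covers Y₂ u ∨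
      Covers Y₃ v ∧ Covers Y₃ u ∨ Covers (fourth S v R X) v ∧ Covers (fourth S v R X) u) :
    Colorable S D 4 := by
  have absorbed : ∀ e ∈ D, e ∉ star v (R ∪ P) →
      ∃ i, ∀ x ∈ e, Covers (![away S v ∆ F ∆ X, Y₂, Y₃, fourth S v R X] i) x := by
    intro e he hRP
    by_cases hve : v ∈ e
    · obtain ⟨u, rfl⟩ := Sym2.mem_iff_exists.1 hve
      rw [mk_mem_star, mem_union, not_or] at hRP
      simp only [Sym2.mem_iff, forall_eq_or_imp, forall_eq]
      obtain hu | hu | hu := habs u (mem_nbhd.2 he) hRP.1 hRP.2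
      exacts [⟨1, hu⟩, ⟨2, hu⟩, ⟨3, hu⟩]
    · exact ⟨0, fun x hx => covers_of_parity_eq_one (h.parity_first (ne_of_mem_of_not_mem hx hve))⟩
  refine ⟨![away S v ∆ F ∆ X, Y₂, Y₃, fourth S v R X], ?_, ?_, ?_, ?_⟩
  · simp [Fin.forall_fin_succ, h.isOdd_first, h₂, h₃, h₄]
  all_goals
    intro e
    have hX := @h.left_subset e
    have hF := @h.right_subset e
    have hSD_e : e ∈ S → e ∉ D := fun he => disjoint_left.1 hSD he
    have hinter_e := Finset.ext_iff.1 hinter e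
    have hunion_e := Finset.ext_iff.1 hunion e
    have hFX_e := hFX e
    have habs_e := absorbed e
    rw [card_filter_mem_four]
    clear absorbed habs h₂ h₃ h₄ hinter hunion hSD hFX h
    by_cases hve : v ∈ e
    · obtain ⟨u, rfl⟩ := Sym2.mem_iff_exists.1 hve
      have hR_u := @hR u
      have hP_u := @hP u
      grind [fourth, mem_away, mk_mem_star, mem_nbhd, mem_symmDiff]
    · grind [fourth, mem_away, mem_symmDiff, center_mem_of_mem_star]

theorem colorable_of_isForest (h : IsCompletion S D v X F) (hSD : Disjoint S D)
    (hFX : ∀ e ∈ F, e ∈ X → e ∉ S) (hR : R ⊆ nbhd (S ∪ D) v)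
    (hforest : IsForest (F ∪ star v R)) (h₄ : IsOdd (fourth S v R X))
    (habs : ∀ u ∈ nbhd D v, u ∉ R →
      R.Nonempty ∧ Even #R ∧ Covers F u ∨ Covers (fourth S v R X) v ∧ Covers (fourth S v R X) u) :
    Colorable S D 4 := by
  obtain ⟨Y₂, Y₃, hY⟩ := hforest.exists_isSplitting ∅
  have union := hY.union
  refine h.colorable_of_isOdd (P := ∅) hSD hFX hR (empty_subset _)
    (disjoint_iff_inter_eq_empty.1 hY.disjoint)
    (by rw [union, union_empty]) (fun x => hY.parity_left (Set.notMem_empty x))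
    (fun x => hY.symm.parity_left (Set.notMem_empty x)) h₄ fun u hu huR _ => ?_
  obtain ⟨hne, heven, hcov⟩ | hu₄ := habs u hu huR
  · have hv : parity (F ∪ star v R) v = 0 := by
      rw [parity_union (disjoint_star_of_not_covers h.not_covers_right), parity_star_center,
        parity_eq_zero_of_not_covers h.not_covers_right,
        ZMod.natCast_eq_zero_iff_even.2 heven, zero_add]
    obtain ⟨h₂, h₃⟩ := hY.parity_eq_one v (Set.notMem_empty v) hv
      (covers_union.2 (.inr (covers_star_center.2 hne)))
    have hcov_u : Covers Y₂ u ∨ Covers Y₃ u := by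
      rw [← covers_union, union]
      exact hcov.mono subset_union_left
    exact hcov_u.imp (fun hc => ⟨covers_of_parity_eq_one h₂, hc⟩)
      fun hc => .inl ⟨covers_of_parity_eq_one h₃, hc⟩
  · exact .inr (.inr hu₄)

theorem colorable_of_odd_card (h : IsCompletion S D v X F) (hSD : Disjoint S D)
    (hFX : ∀ e ∈ F, e ∈ X → e ∉ S) (hR : R ⊆ nbhd (S ∪ D) v) (hReven : Even #R)
    (hforest : IsForest (F ∪ star v R)) (hP : P ⊆ nbhd D v \ R) (hPodd : Odd #P)
    (hPF : ∀ u ∈ P, parity F u = 0) (h₄ : IsOdd (fourth S v R X))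
    (habs : ∀ u ∈ nbhd D v, u ∉ R → u ∉ P →
      Covers F u ∨ Covers (fourth S v R X) v ∧ Covers (fourth S v R X) u) :
    Colorable S D 4 := by
  obtain ⟨A, B, hAB⟩ := hforest.exists_isSplitting (insert v P : Finset V)
  have heven (x : V) (hx : x ∈ insert v P) : parity (F ∪ star v R) x = 0 := by
    rw [parity_union (disjoint_star_of_not_covers h.not_covers_right)]
    rcases eq_or_ne x v with rfl | hxv
    · rw [parity_eq_zero_of_not_covers h.not_covers_right, parity_star_center,
        ZMod.natCast_eq_zero_iff_even.2 hReven, zero_add]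
    · have hxP := mem_of_mem_insert_of_ne hx hxv
      rw [hPF x hxP, parity_star hxv, if_neg (mem_sdiff.1 (hP hxP)).2, zero_add]
  have hdisj : Disjoint (F ∪ star v R) (star v P) := by
    refine disjoint_union_left.2 ⟨disjoint_star_of_not_covers h.not_covers_right, ?_⟩
    rw [star, star, disjoint_image fun _ _ => Sym2.congr_right.1]
    exact disjoint_right.2 fun u hu => (mem_sdiff.1 (hP hu)).2
  have hcenter : Covers (star v P) v := covers_star_center.2 (card_pos.1 hPodd.pos)
  refine h.colorable_of_isOdd (Y₂ := A ∪ star v P) (Y₃ := B ∪ star v P) hSD hFX hR hP ?_ ?_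
    (hAB.isOdd_left_union_star heven hdisj hPodd)
    (hAB.symm.isOdd_left_union_star heven hdisj hPodd) h₄ fun u hu huR huP => ?_
  · rw [← inter_union_distrib_right, disjoint_iff_inter_eq_empty.1 hAB.disjoint, empty_union]
  · rw [← union_union_distrib_right, hAB.union, union_assoc, star, star, star, ← image_union]
  · obtain hcov | hu₄ := habs u hu huR huP
    · have hcov_u := covers_union.1 (hAB.union.symm ▸ hcov.mono subset_union_left)
      simp only [covers_union, hcenter]
      tauto
    · exact .inr (.inr hu₄)

end IsCompletion

variable [Fintype V]

/-- A connected pair of odd order without coloring; even order is excluded by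
`IsConnectedPair.colorable_of_even_card`. -/
structure IsCounterexample (S D : Finset (Sym2 V)) : Prop extends IsConnectedPair S D where
  odd_card : Odd (Fintype.card V)
  not_colorable : ¬ Colorable S D 4

namespace IsCounterexample

theorem card_eq_zero (h : IsCounterexample S D) {C : Finset V} (hv : v ∉ C)
    (hC : ClosedUnder (away (S ∪ D) v) C) : (#C : ZMod 2) = 0 := by
  rw [ZMod.natCast_eq_zero_iff_even, ← Nat.not_odd_iff_even]
  exact fun hodd => h.not_colorable (h.colorable_of_closedUnder_away h.odd_card hv hC hodd)

theorem exists_isCompletion (h : IsCounterexample S D) (hX : X ⊆ away (S ∪ D) v) :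
    ∃ F, IsForest F ∧ IsCompletion S D v X F := by
  obtain ⟨K, hK, hparK⟩ := exists_subset_parity_eq (away (S ∪ D) v)
    (fun x => if x = v then 0 else 1 + parity (away S v) x + parity X x) fun C hC => by
      have hC' : ClosedUnder (away (S ∪ D) v) (C.erase v) := fun a b hab ha =>
        mem_erase.2 ⟨by rintro rfl; simp at hab, hC a b hab (mem_of_mem_erase ha)⟩
      have hloop : Loopless (away (S ∪ D) v) := h.loopless.mono away_subset
      have hS : away S v ⊆ away (S ∪ D) v := filter_subset_filter _ subset_union_left
      rw [sum_ite, sum_const_zero, zero_add, filter_ne', sum_add_distrib, sum_add_distrib,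
        sum_parity_eq_zero (hloop.mono hS) (hC'.mono hS),
        sum_parity_eq_zero (hloop.mono hX) (hC'.mono hX), sum_const, nsmul_one,
        h.card_eq_zero (notMem_erase v C) hC', zero_add, zero_add]
  obtain ⟨F, hF, hforest, hparF⟩ := exists_isForest_subset K
  exact ⟨F, hforest, hX, hF.trans hK, fun x hx => by rw [hparF, hparK, if_neg hx]⟩

end IsCounterexample

end Center

section OddVertex

variable {S D X F : Finset (Sym2 V)} {R P : Finset V} {u v x y z : V}

theorem IsSplitting.isOdd_left_union_star_pair {L A B : Finset (Sym2 V)} {p q : V}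
    (h : IsSplitting L (insert v {q} : Finset V) A B) (hv : ¬ Covers L v) (hq : parity L q = 0)
    (hp : Covers A p) (hpq : p ≠ q) (hpv : p ≠ v) (hqv : q ≠ v) (hpqL : s(p, q) ∉ L) :
    IsOdd (A ∪ star p {q, v}) := by
  have hA : A ⊆ L := h.union ▸ subset_union_left
  have hdisj : Disjoint A (star p {q, v}) := by
    rw [disjoint_right, star, forall_mem_image]
    intro x hx hxA
    rcases mem_insert.1 hx with rfl | hx
    · exact hpqL (hA hxA)
    · rw [mem_singleton.1 hx] at hxA
      exact hv ⟨_, hA hxA, Sym2.mem_mk_right p v⟩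
  intro x hx
  rw [parity_union hdisj]
  rcases eq_or_ne x p with rfl | hxp
  · rw [h.parity_left (by simp [hpv, hpq]) hp, parity_star_center, card_pair hqv]
    decide
  rw [covers_union, covers_star hxp] at hx
  rw [parity_star hxp]
  by_cases hxP : x ∈ ({q, v} : Finset V)
  · have : parity L x = 0 := by
      rcases mem_insert.1 hxP with rfl | hxv
      · exact hq
      · exact mem_singleton.1 hxv ▸ parity_eq_zero_of_not_covers hv
    rw [h.parity_left_eq_zero (by simpa [or_comm] using hxP) this, if_pos hxP, zero_add]
  · rw [h.parity_left (by simpa [or_comm] using hxP) (hx.resolve_right hxP), if_neg hxP, add_zero]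

theorem parity_eq_of_not_covers_erase {P : Finset (Sym2 V)} (hy : ¬ Covers (F.erase s(y, z)) y)
    (hz : ¬ Covers (F.erase s(y, z)) z) (hP : P ⊆ F) : parity P y = parity P z := by
  rw [not_covers_iff] at hy hz
  refine sum_congr rfl fun e he => ?_
  grind

variable [Fintype V]

theorem isOdd_fourth_empty (h : parity S v + #R = 1) : IsOdd (fourth S v R ∅) := by
  rw [fourth, union_empty]
  refine isOdd_star ?_
  rw [← ZMod.natCast_eq_one_iff_odd, natCast_card_symmDiff, ← parity_eq_card_nbhd, h]

namespace IsConnectedPair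

theorem ne_left (h : IsConnectedPair S D) (hxy : s(x, y) ∈ S) : x ≠ y :=
  h.loopless.ne (mem_union_left D hxy)

theorem ne_right (h : IsConnectedPair S D) (hxy : s(x, y) ∈ D) : x ≠ y :=
  h.loopless.ne (mem_union_right S hxy)

theorem notMem_left (h : IsConnectedPair S D) (hxy : s(x, y) ∈ D) : s(x, y) ∉ S :=
  disjoint_right.1 h.disjoint hxy

theorem parity_eq_of_mem_right (h : IsConnectedPair S D) (hF : IsCompletion S D v X F)
    (hu : s(v, u) ∈ D) : parity F u = 1 + parity S u + parity X u := by
  have huv : u ≠ v := (h.ne_right hu).symm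
  rw [hF.parity_eq u huv, parity_away huv, if_neg (mt mem_nbhd.1 (h.notMem_left hu)), add_zero]

theorem not_covers_of_nbhd_eq_singleton (h : IsConnectedPair S D) (hF : IsCompletion S D y ∅ F)
    (hD : nbhd D v = {y}) (hS : nbhd S v = {z}) : ¬ Covers F v := by
  have hy : s(y, v) ∈ D := by rw [← mem_nbhd, mem_nbhd_comm, hD]; exact mem_singleton_self y
  have hv : parity S v = 1 := by simp [parity_eq_card_nbhd, hS]
  have hF₀ : parity F v = 0 := by
    rw [h.parity_eq_of_mem_right hF hy, hv, parity_empty, add_zero, CharTwo.add_self_eq_zero]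
  have huniq (e : Sym2 V) (he : e ∈ F) (hve : v ∈ e) : e = s(v, z) := by
    obtain ⟨u, rfl⟩ := Sym2.mem_iff_exists.1 hve
    have := mem_away.1 (hF.right_subset he)
    rw [← mem_nbhd, mem_nbhd_union, hS, hD, mem_singleton, mem_singleton] at this
    grind
  rintro ⟨e, he, hve⟩
  have := parity_eq_one_of_unique he hve fun f hf hvf =>
    (huniq f hf hvf).trans (huniq e he hve).symm
  simp [hF₀] at this

theorem colorable_of_isCompletion_singleton (h : IsConnectedPair S D)
    (hF : IsCompletion S D v {s(u, z)} F) (hforest : IsForest F)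
    (hFX : s(u, z) ∈ F → s(u, z) ∉ S) (hu : s(v, u) ∈ D) (hz : s(v, z) ∉ S)
    (heven : ∀ x, s(v, x) ∈ D → parity S x = 0) (hv : nbhd S v = ∅ ∨ parity S v = 1)
    (hzD : s(v, z) ∈ D → parity S v = 1) : Colorable S D 4 := by
  have hvz : v ≠ u ∧ v ≠ z := by
    simpa using (mem_away.1 (hF.left_subset (mem_singleton_self _))).2
  have huz : u ≠ z := h.loopless.ne (mem_away.1 (hF.left_subset (mem_singleton_self _))).1
  have hfourth : fourth S v ∅ {s(u, z)} = star v (nbhd S v) ∪ {s(u, z)} := by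
    rw [fourth, ← bot_eq_empty, symmDiff_bot]
  have h₄ : IsOdd (fourth S v ∅ {s(u, z)}) := by
    rw [hfourth]
    refine IsOdd.union ?_ isOdd_singleton fun x hx hx' => ?_
    · obtain hv | hv := hv
      · rw [hv]; exact isOdd_empty
      · exact isOdd_star (ZMod.natCast_eq_one_iff_odd.1 (parity_eq_card_nbhd.symm.trans hv))
    · obtain rfl | rfl := covers_singleton.1 hx'
      · exact h.notMem_left hu (mem_nbhd.1 ((covers_star hvz.1.symm).1 hx))
      · exact hz (mem_nbhd.1 ((covers_star hvz.2.symm).1 hx))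
  refine hF.colorable_of_odd_card (R := ∅) (P := {u}) h.disjoint
    (fun e heF heX => mem_singleton.1 heX ▸ hFX (mem_singleton.1 heX ▸ heF)) (empty_subset _)
    (by simp) (by simpa [star] using hforest) (by simpa using hu) (by simp) ?_ h₄ ?_
  · rintro x hx
    obtain rfl := mem_singleton.1 hx
    rw [h.parity_eq_of_mem_right hF hu, heven x hu, parity_singleton, if_pos (.inl rfl), add_zero,
      CharTwo.add_self_eq_zero]
  · intro x hx _ hxu
    rw [mem_nbhd] at hx
    rcases eq_or_ne x z with rfl | hxz
    · obtain ⟨s, hs⟩ := exists_mem_of_parity_eq_one (hzD hx)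
      rw [hfourth, covers_union, covers_union, covers_star_center]
      exact .inr ⟨.inl ⟨s, mem_nbhd.2 hs⟩, .inr (covers_singleton.2 (.inr rfl))⟩
    · refine .inl (covers_of_parity_eq_one ?_)
      rw [h.parity_eq_of_mem_right hF hx, heven x hx, parity_singleton,
        if_neg (by simp_all), add_zero, add_zero]

end IsConnectedPair

namespace IsCounterexample

theorem exists_mem_right (h : IsCounterexample S D) (hv : parity S v = 1) : ∃ y, s(v, y) ∈ D := by
  by_contra! hD
  obtain ⟨F, hforest, hF⟩ := h.exists_isCompletion (v := v) (empty_subset _)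
  exact h.not_colorable <| hF.colorable_of_isForest (R := ∅) h.disjoint (by simp) (empty_subset _)
    (by simpa [star] using hforest) (isOdd_fourth_empty (by simpa using hv))
    fun u hu => absurd (mem_nbhd.1 hu) (hD u)

theorem not_odd_card_of_isCompletion (h : IsCounterexample S D) (hv : parity S v = 1)
    (hF : IsCompletion S D v ∅ F) (hR : R ⊆ nbhd (S ∪ D) v) (hReven : Even #R)
    (hforest : IsForest (F ∪ star v R)) (hP : P ⊆ nbhd D v \ R)
    (hPodd : ∀ u ∈ P, parity S u = 1)
    (hrest : ∀ u, s(v, u) ∈ D → parity S u = 1 → u ∉ R → u ∉ P → Covers F u) : ¬ Odd #P := by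
  intro hcard
  refine h.not_colorable <| hF.colorable_of_odd_card h.disjoint (by simp) hR hReven hforest hP hcard
    (fun u hu => ?_)
    (isOdd_fourth_empty (by rw [hv, ZMod.natCast_eq_zero_iff_even.2 hReven, add_zero]))
    fun u hu huR huP => .inl ?_
  · rw [h.parity_eq_of_mem_right hF (mem_nbhd.1 (mem_sdiff.1 (hP hu)).1), hPodd u hu, parity_empty,
      add_zero, CharTwo.add_self_eq_zero]
  · rw [mem_nbhd] at hu
    rcases zmod_two_eq_zero_or_one (parity S u) with hS | hS
    · exact covers_of_parity_eq_one (by simp [h.parity_eq_of_mem_right hF hu, hS])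
    · exact hrest u hu hS huR huP

theorem parity_eq_zero_of_mem_right (h : IsCounterexample S D) (hv : parity S v = 1)
    (hu : s(v, u) ∈ D) : parity S u = 0 := by
  by_contra hu₁
  replace hu₁ := (zmod_two_eq_zero_or_one _).resolve_left hu₁
  obtain ⟨F, hforest, hF⟩ := h.exists_isCompletion (v := v) (empty_subset _)
  set U : Finset V := {u ∈ nbhd D v | parity S u = 1} with hU
  have mem_U (x : V) : x ∈ U ↔ s(v, x) ∈ D ∧ parity S x = 1 := by simp [hU]
  have huU : u ∈ U := (mem_U u).2 ⟨hu, hu₁⟩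
  have hforest₀ : IsForest (F ∪ star v ∅) := by simpa [star] using hforest
  have hU_even : Even #U := by
    rw [← Nat.not_odd_iff_even]
    exact h.not_odd_card_of_isCompletion hv hF (empty_subset _) (by simp) hforest₀
      (fun x hx => by simpa using ((mem_U x).1 hx).1) (fun x hx => ((mem_U x).1 hx).2)
      fun x hx hx₁ _ hxU => absurd ((mem_U x).2 ⟨hx, hx₁⟩) hxU
  have hodd_erase (x : V) (hx : x ∈ U) : Odd #(U.erase x) := by
    rw [card_erase_of_mem hx]
    exact Nat.Even.sub_odd (card_pos.2 ⟨x, hx⟩) hU_even odd_one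
  have hu_F : ¬ Covers F u := fun hcov => by
    refine h.not_odd_card_of_isCompletion hv hF (empty_subset _) (by simp) hforest₀ ?_ ?_ ?_
      (hodd_erase u huU) <;> grind
  obtain ⟨s, hs⟩ := exists_mem_of_parity_eq_one hv
  have hus : u ≠ s := by rintro rfl; exact h.notMem_left hu hs
  refine h.not_odd_card_of_isCompletion (R := {u, s}) hv hF (by grind [mem_nbhd]) (by simp [hus])
    (hforest.union_star_pair hF.not_covers_right hu_F (h.ne_right hu).symm hus) ?_ ?_ ?_
    (hodd_erase u huU)
  · intro x hx
    have := (mem_U x).1 (mem_of_mem_erase hx)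
    have := h.notMem_left this.1
    grind [mem_nbhd]
  · grind
  · grind

theorem mem_left_of_mem_right_of_mem_right (h : IsCounterexample S D) (hv : parity S v = 1)
    (hy : s(v, y) ∈ D) (hyz : s(y, z) ∈ D) (hzv : z ≠ v) : s(v, z) ∈ S := by
  by_contra hz
  obtain ⟨F, hforest, hF⟩ := h.exists_isCompletion (X := {s(y, z)}) (v := v) (by
    simpa [hyz] using ⟨h.ne_right hy, hzv.symm⟩)
  exact h.not_colorable <| h.colorable_of_isCompletion_singleton hF hforest
    (fun _ => h.notMem_left hyz) hy hz (fun _ => h.parity_eq_zero_of_mem_right hv) (.inr hv)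
    fun _ => hv

theorem exists_mem_right_ne (h : IsCounterexample S D) (hv : parity S v = 1)
    (hy : s(v, y) ∈ D) : ∃ z, s(y, z) ∈ D ∧ z ≠ v := by
  by_contra! hD
  obtain ⟨F, hforest, hF⟩ := h.exists_isCompletion (v := y) (empty_subset _)
  refine h.not_colorable <| hF.colorable_of_isForest (R := {v}) h.disjoint (by simp) ?_ ?_
    (isOdd_fourth_empty ?_) fun u hu huv => absurd (hD u (mem_nbhd.1 hu)) (mt mem_singleton.2 huv)
  · simpa using Or.inr (Sym2.eq_swap ▸ hy)
  · rw [star, image_singleton, union_comm, ← insert_eq]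
    exact hforest.insert_of_not_covers (Sym2.mem_mk_left y v) hF.not_covers_right
  · rw [h.parity_eq_zero_of_mem_right hv hy, card_singleton, Nat.cast_one, zero_add]

theorem covers_of_mem_right (h : IsCounterexample S D) (hv : parity S v = 1)
    (hF : IsCompletion S D v ∅ F) (hu : s(v, u) ∈ D) : Covers F u := by
  refine covers_of_parity_eq_one ?_
  rw [h.parity_eq_of_mem_right hF hu, h.parity_eq_zero_of_mem_right hv hu, parity_empty, add_zero,
    add_zero]

theorem not_isForest_union_star_pair (h : IsCounterexample S D) (hv : parity S v = 1)
    (hF : IsCompletion S D v ∅ F) (hy : s(v, y) ∈ S ∪ D) (hz : s(v, z) ∈ S ∪ D) (hyz : y ≠ z) :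
    ¬ IsForest (F ∪ star v {y, z}) := by
  intro hforest
  have hcard : #{y, z} = 2 := card_pair hyz
  refine h.not_colorable <| hF.colorable_of_isForest h.disjoint (by simp) ?_ hforest
    (isOdd_fourth_empty (by rw [hv, hcard]; decide)) fun u hu _ => .inl ⟨insert_nonempty _ _, ?_,
      h.covers_of_mem_right hv hF (mem_nbhd.1 hu)⟩
  · simpa only [insert_subset_iff, singleton_subset_iff, mem_nbhd] using ⟨hy, hz⟩
  · rw [hcard]; exact even_two

theorem exists_subset_parity_eq (h : IsCounterexample S D) (hv : parity S v = 1)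
    (hforest : IsForest F) (hF : IsCompletion S D v ∅ F) (hy : s(v, y) ∈ S ∪ D)
    (hz : s(v, z) ∈ S ∪ D) (hyz : y ≠ z) : ∃ P ⊆ F, ∀ x, parity P x = parity {s(y, z)} x :=
  hforest.exists_subset_parity_eq_of_not_isForest_insert_insert hF.not_covers_right
    (h.loopless.ne hy).symm (h.loopless.ne hz).symm hyz
    (union_star_pair F v y z ▸ h.not_isForest_union_star_pair hv hF hy hz hyz)

theorem exists_isCompletion_mem (h : IsCounterexample S D) (hv : parity S v = 1)
    (hy : s(v, y) ∈ S ∪ D) (hz : s(v, z) ∈ S ∪ D) (hyz : s(y, z) ∈ S ∪ D) :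
    ∃ F, IsForest F ∧ IsCompletion S D v ∅ F ∧ s(y, z) ∈ F := by
  obtain ⟨F, hforest, hF⟩ := h.exists_isCompletion (v := v) (empty_subset _)
  by_cases hyzF : s(y, z) ∈ F
  · exact ⟨F, hforest, hF, hyzF⟩
  obtain ⟨P, hP, hpar⟩ := h.exists_subset_parity_eq hv hforest hF hy hz (h.loopless.ne hyz)
  refine ⟨insert s(y, z) (F \ P), hforest.insert_sdiff hP hpar hyzF, ⟨empty_subset _, ?_, ?_⟩,
    mem_insert_self _ _⟩
  · refine insert_subset ?_ (sdiff_subset.trans hF.right_subset)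
    simpa [← mem_union, hyz] using ⟨h.loopless.ne hy, h.loopless.ne hz⟩
  · intro x hx
    rw [parity_insert_sdiff hP hpar hyzF, hF.parity_eq x hx]

theorem not_covers_of_isSplitting (h : IsCounterexample S D) (hv : parity S v = 1)
    (hF : IsCompletion S D v ∅ F) {p q : V} (hp : s(v, p) ∈ S ∪ D) (hq : s(v, q) ∈ S ∪ D)
    (hpq : s(p, q) ∈ F) (hq₀ : parity (F.erase s(p, q)) q = 0) {A B : Finset (Sym2 V)}
    (hAB : IsSplitting (F.erase s(p, q)) (insert v {q} : Finset V) A B) : ¬ Covers A p := by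
  intro hA
  have hvp : v ≠ p := h.loopless.ne hp
  have hvq : v ≠ q := h.loopless.ne hq
  have hpq' : p ≠ q := h.loopless.ne (mem_away.1 (hF.right_subset hpq)).1
  have hv₀ : ¬ Covers (F.erase s(p, q)) v := mt (Covers.mono (erase_subset _ _)) hF.not_covers_right
  have h₂ : IsOdd (A ∪ star p {q, v}) :=
    hAB.isOdd_left_union_star_pair hv₀ hq₀ hA hpq' hvp.symm hvq.symm (notMem_erase _ _)
  have h₃ : IsOdd (B ∪ star v {q}) := hAB.symm.isOdd_left_union_star
    (by simp [hq₀, parity_eq_zero_of_not_covers hv₀]) (disjoint_star_of_not_covers hv₀) (by simp)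
  have hvF (e : Sym2 V) (he : e ∈ F) : v ∉ e := not_covers_iff.1 hF.not_covers_right e he
  have hunion (e : Sym2 V) : e ∈ A ∨ e ∈ B ↔ e ≠ s(p, q) ∧ e ∈ F := by
    rw [← mem_union, hAB.union, mem_erase]
  refine h.not_colorable <| hF.colorable_of_isOdd (R := {p, q}) (P := ∅) h.disjoint (by simp)
    ?_ (empty_subset _) ?_ ?_ h₂ h₃ (isOdd_fourth_empty (by rw [hv, card_pair hpq']; decide)) ?_
  · simpa only [insert_subset_iff, singleton_subset_iff, mem_nbhd] using ⟨hp, hq⟩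
  · have hdisj (e : Sym2 V) : e ∈ A → e ∉ B := fun he => disjoint_left.1 hAB.disjoint he
    ext e
    simp only [star, mem_inter, mem_union, mem_image, mem_insert, mem_singleton]
    grind
  · ext e
    simp only [star, mem_union, mem_image, mem_insert, mem_singleton, union_empty]
    grind
  · intro u hu _ _
    have hcenter₂ : Covers (A ∪ star p {q, v}) v := ⟨s(p, v), by simp, Sym2.mem_mk_right p v⟩
    have hcenter₃ : Covers (B ∪ star v {q}) v := ⟨s(v, q), by simp, Sym2.mem_mk_left v q⟩
    obtain ⟨e, he, hue⟩ : Covers F u := h.covers_of_mem_right hv hF (mem_nbhd.1 hu)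
    by_cases heB : e ∈ B
    · exact .inr (.inl ⟨hcenter₃, e, mem_union_left _ heB, hue⟩)
    · refine .inl ⟨hcenter₂, e, ?_, hue⟩
      grind [mk_mem_star]

theorem not_covers_erase (h : IsCounterexample S D) (hv : parity S v = 1)
    (hforest : IsForest F) (hF : IsCompletion S D v ∅ F) {p q : V} (hp : s(v, p) ∈ S ∪ D)
    (hq : s(v, q) ∈ S ∪ D) (hpq : s(p, q) ∈ F) (hq₀ : parity (F.erase s(p, q)) q = 0) :
    ¬ Covers (F.erase s(p, q)) p := by
  obtain ⟨A, B, hAB⟩ := (hforest.mono (erase_subset _ _)).exists_isSplitting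
    (insert v {q} : Finset V)
  rw [← hAB.union, covers_union, not_or]
  exact ⟨h.not_covers_of_isSplitting hv hF hp hq hpq hq₀ hAB,
    h.not_covers_of_isSplitting hv hF hp hq hpq hq₀ hAB.symm⟩

theorem not_covers_erase_and (h : IsCounterexample S D) (hv : parity S v = 1)
    (hforest : IsForest F) (hF : IsCompletion S D v ∅ F) (hy : s(v, y) ∈ D)
    (hz : s(v, z) ∈ S) (hyz : s(y, z) ∈ F) :
    ¬ Covers (F.erase s(y, z)) y ∧ ¬ Covers (F.erase s(y, z)) z := by
  have hy' : s(v, y) ∈ S ∪ D := mem_union_right S hy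
  have hz' : s(v, z) ∈ S ∪ D := mem_union_left D hz
  have hy₀ : parity (F.erase s(y, z)) y = 0 := by
    have := parity_insert (x := y) (notMem_erase s(y, z) F)
    rwa [insert_erase hyz, h.parity_eq_of_mem_right hF hy, h.parity_eq_zero_of_mem_right hv hy,
      parity_singleton, if_pos (.inl rfl), parity_empty, add_zero, add_zero, left_eq_add] at this
  have hzF : ¬ Covers (F.erase s(y, z)) z := by
    rw [Sym2.eq_swap] at hyz hy₀ ⊢
    exact h.not_covers_erase hv hforest hF hz' hy' hyz hy₀
  exact ⟨h.not_covers_erase hv hforest hF hy' hz' hyz (parity_eq_zero_of_not_covers hzF), hzF⟩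

theorem mem_iff_mem_of_not_covers_erase (h : IsCounterexample S D) (hv : parity S v = 1)
    (hforest : IsForest F) (hF : IsCompletion S D v ∅ F) (hy : ¬ Covers (F.erase s(y, z)) y)
    (hz : ¬ Covers (F.erase s(y, z)) z) {u w : V} (hu : s(v, u) ∈ S ∪ D) (hw : s(v, w) ∈ S ∪ D)
    (huw : u ≠ w) : y ∈ s(u, w) ↔ z ∈ s(u, w) := by
  obtain ⟨P, hP, hpar⟩ := h.exists_subset_parity_eq hv hforest hF hu hw huw
  have := parity_eq_of_not_covers_erase hy hz hP
  rw [hpar, hpar, parity_singleton, parity_singleton] at this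
  grind

theorem exists_nbhd_eq (h : IsCounterexample S D) (hv : parity S v = 1) :
    ∃ y z, nbhd D v = {y} ∧ nbhd S v = {z} ∧ nbhd D y = {v, z} ∧ parity S z = 1 := by
  obtain ⟨y, hy⟩ := h.exists_mem_right hv
  obtain ⟨z, hyz, hzv⟩ := h.exists_mem_right_ne hv hy
  have hz := h.mem_left_of_mem_right_of_mem_right hv hy hyz hzv
  have hy' : s(v, y) ∈ S ∪ D := mem_union_right S hy
  have hz' : s(v, z) ∈ S ∪ D := mem_union_left D hz
  obtain ⟨F, hforest, hF, hyzF⟩ :=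
    h.exists_isCompletion_mem hv hy' hz' (mem_union_right S hyz)
  obtain ⟨hyF, hzF⟩ := h.not_covers_erase_and hv hforest hF hy hz hyzF
  have hends {u w : V} := h.mem_iff_mem_of_not_covers_erase hv hforest hF hyF hzF (u := u) (w := w)
  have hD : nbhd D v = {y} := by
    refine eq_singleton_iff_unique_mem.2 ⟨mem_nbhd.2 hy, fun u hu => ?_⟩
    rw [mem_nbhd] at hu
    have huz : u ≠ z := by rintro rfl; exact h.notMem_left hu hz
    have := (hends (mem_union_right S hu) hz' huz).2 (Sym2.mem_mk_right u z)
    exact ((Sym2.mem_iff.1 this).resolve_right (h.ne_right hyz)).symm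
  have hS : nbhd S v = {z} := by
    refine eq_singleton_iff_unique_mem.2 ⟨mem_nbhd.2 hz, fun u hu => ?_⟩
    rw [mem_nbhd] at hu
    have hyu : y ≠ u := by rintro rfl; exact h.notMem_left hy hu
    have := (hends hy' (mem_union_left D hu) hyu).1 (Sym2.mem_mk_left y u)
    exact ((Sym2.mem_iff.1 this).resolve_left (h.ne_right hyz).symm).symm
  refine ⟨y, z, hD, hS, ?_, ?_⟩
  · ext u
    rw [mem_nbhd, mem_insert, mem_singleton]
    refine ⟨fun hu => or_iff_not_imp_left.2 fun huv => ?_, ?_⟩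
    · have := mem_nbhd.2 (h.mem_left_of_mem_right_of_mem_right hv hy hu huv)
      rwa [hS, mem_singleton] at this
    · rintro (rfl | rfl)
      exacts [Sym2.eq_swap ▸ hy, hyz]
  · have hFz : parity F z = 1 := parity_eq_one_of_unique hyzF (Sym2.mem_mk_right y z)
      fun e he hze => by_contra fun hne => hzF ⟨e, mem_erase.2 ⟨hne, he⟩, hze⟩
    rw [hF.parity_eq z hzv, parity_away hzv, if_pos (mem_nbhd.2 hz), parity_empty] at hFz
    grind

theorem nbhd_left_subset_pair (h : IsCounterexample S D) (hDv : nbhd D v = {y})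
    (hSv : nbhd S v = {z}) (hDz : nbhd D z = {y}) (hSz : nbhd S z = {v})
    (hDy : nbhd D y = {v, z}) : nbhd S y ⊆ {v, z} := by
  intro s hs
  by_contra hsvz
  simp only [mem_insert, mem_singleton, not_or] at hsvz
  have hv : parity S v = 1 := by simp [parity_eq_card_nbhd, hSv]
  have hy : parity S y = 0 := h.parity_eq_zero_of_mem_right hv (by simp [← mem_nbhd, hDv])
  have hvz : z ≠ v := (h.ne_left (x := v) (by simp [← mem_nbhd, hSv])).symm
  have hvy : v ≠ y := h.ne_right (by simp [← mem_nbhd, hDv])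
  have hzy : z ≠ y := h.ne_right (by simp [← mem_nbhd, hDz])
  obtain ⟨F, hforest, hF⟩ := h.exists_isCompletion (v := y) (empty_subset _)
  have hvF : ¬ Covers F v := h.not_covers_of_nbhd_eq_singleton hF hDv hSv
  have hzF : ¬ Covers F z := h.not_covers_of_nbhd_eq_singleton hF hDz hSz
  have hforest' : IsForest (F ∪ star y {z, v, s}) := by
    rw [star, image_insert, union_insert, ← star]
    refine (hforest.union_star_pair hF.not_covers_right hvF hvy (Ne.symm hsvz.1)
      ).insert_of_not_covers (Sym2.mem_mk_right y z) ?_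
    rw [covers_union, covers_star hzy]
    simpa [hzF, hvz] using Ne.symm hsvz.2
  refine h.not_colorable <| hF.colorable_of_isForest h.disjoint (by simp) (fun x hx => ?_) hforest'
    (isOdd_fourth_empty ?_) fun u hu hu' => ?_
  · have hs' := mem_nbhd_union (K := S) (L := D) (v := y) (u := x)
    grind
  · rw [hy, card_eq_three.2 ⟨z, v, s, hvz, Ne.symm hsvz.2, Ne.symm hsvz.1, rfl⟩]
    decide
  · rw [hDy] at hu
    grind

theorem card_le_three (h : IsCounterexample S D) (hv : parity S v = 1) : Fintype.card V ≤ 3 := by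
  obtain ⟨y, z, hDv, hSv, hDy, hz⟩ := h.exists_nbhd_eq hv
  obtain ⟨y', v', hDz, hSz, -, -⟩ := h.exists_nbhd_eq hz
  have hyz : s(y, z) ∈ D := by simp [← mem_nbhd, hDy]
  have hzy : nbhd D z = {y} := by
    have : y ∈ nbhd D z := mem_nbhd_comm.1 (mem_nbhd.2 hyz)
    rw [hDz, mem_singleton] at this
    rw [hDz, this]
  have hzv : nbhd S z = {v} := by
    have : v ∈ nbhd S z := mem_nbhd_comm.1 (by simp [hSv])
    rw [hSz, mem_singleton] at this
    rw [hSz, this]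
  have hSy := h.nbhd_left_subset_pair hDv hSv hzy hzv hDy
  have huniv : ({v, y, z} : Finset V) = univ := by
    refine h.eq_univ _ (insert_nonempty _ _) fun a b hab ha => ?_
    rw [← mem_nbhd, mem_nbhd_union] at hab
    have := @hSy b
    grind
  rw [← card_univ, ← huniv]
  exact Finset.card_le_three

end IsCounterexample

end OddVertex

section Eulerian

variable {S D M : Finset (Sym2 V)} {C W : Finset V} {v w x y z : V}

theorem exists_isOdd_covers_iff_mem (hne : W.Nonempty) (heven : Even #W) :
    ∃ M : Finset (Sym2 V), Loopless M ∧ IsOdd M ∧ ∀ u, Covers M u ↔ u ∈ W := by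
  obtain ⟨y, hy⟩ := hne
  have hodd : Odd #(W.erase y) := by
    rw [card_erase_of_mem hy]
    exact Nat.Even.sub_odd (card_pos.2 ⟨y, hy⟩) heven odd_one
  refine ⟨star y (W.erase y), fun a ha => ?_, isOdd_star hodd, fun u => ?_⟩
  · obtain rfl : y = a := by simpa using center_mem_of_mem_star ha
    simp at ha
  · rcases eq_or_ne u y with rfl | huy
    · simpa [covers_star_center, hy] using card_pos.1 hodd.pos
    · simp [covers_star huy, huy]

theorem card_filter_mem_eq_ite (hMcov : ∀ u, Covers M u ↔ u ∉ ({v, w, x} : Finset V))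
    (hvw : v ≠ w) (hy : y ∉ ({v, w, x} : Finset V)) (e : Sym2 V) :
    #{i | e ∈ ![{s(x, w)} ∪ M, star x {v, w, y}, {s(x, y)}, {s(x, v)} ∪ M] i} =
      if e ∈ M ∪ star x {v, w, y} then 2 else 0 := by
  rw [card_filter_mem_four]
  by_cases hx : x ∈ e
  · obtain ⟨u, rfl⟩ := Sym2.mem_iff_exists.1 hx
    have hM : s(x, u) ∉ M := fun hu => by simpa using (hMcov x).1 ⟨_, hu, hx⟩
    simp only [mem_union, mem_singleton, Sym2.congr_right, mk_mem_star, mem_insert, hM]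
    grind
  · have := mt (center_mem_of_mem_star (P := {v, w, y})) hx
    grind

theorem isColoring_empty_of_covers_iff (hD : ∀ a b, a ≠ b → s(a, b) ∈ D)
    (hM : Loopless M) (hMcov : ∀ u, Covers M u ↔ u ∉ ({v, w, x} : Finset V)) (hModd : IsOdd M)
    (hvw : v ≠ w) (hvx : v ≠ x) (hwx : w ≠ x) (hy : y ∉ ({v, w, x} : Finset V)) :
    IsColoring ∅ D ![{s(x, w)} ∪ M, star x {v, w, y}, {s(x, y)}, {s(x, v)} ∪ M] := by
  have hcount := card_filter_mem_eq_ite hMcov hvw hy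
  simp only [mem_insert, mem_singleton, not_or] at hMcov hy
  have isOdd_union {u : V} (hu : u = v ∨ u = w) : IsOdd ({s(x, u)} ∪ M) :=
    isOdd_singleton.union hModd fun z hz hz' => by grind [covers_singleton]
  refine ⟨?_, by simp, fun e _ => ?_, fun e _ he => ?_⟩
  · simp [Fin.forall_fin_succ, isOdd_union, isOdd_singleton, isOdd_star, -singleton_union,
      card_eq_three.2 ⟨v, w, y, hvw, Ne.symm hy.1, Ne.symm hy.2.1, rfl⟩, Nat.odd_iff]
  · rw [hcount]
    refine (em (e ∈ M ∪ star x {v, w, y})).imp (fun h => if_pos h) fun h => ⟨if_neg h, ?_⟩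
    by_cases hv : v ∈ e
    · by_cases hw : w ∈ e
      · rw [(Sym2.mem_and_mem_iff hvw).1 ⟨hv, hw⟩]
        exact ⟨1, by simp [covers_star, hvx, hwx]⟩
      · refine ⟨3, fun u hu => covers_union.2 ?_⟩
        rw [covers_singleton, hMcov]
        grind
    · refine ⟨0, fun u hu => covers_union.2 ?_⟩
      rw [covers_singleton, hMcov]
      grind
  · rw [hcount, if_neg]
    induction e with | _ a b =>
    obtain rfl : a = b := of_not_not (mt (hD a b) he)
    rw [mem_union, not_or]
    refine ⟨hM a, fun ha => ?_⟩
    obtain rfl : x = a := by simpa using center_mem_of_mem_star ha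
    simp [hvx.symm, hwx.symm, Ne.symm hy.2.2] at ha

variable [Fintype V]

theorem colorable_empty_of_forall_mem (hD : ∀ a b, a ≠ b → s(a, b) ∈ D)
    (hodd : Odd (Fintype.card V)) (hcard : 4 ≤ Fintype.card V) : Colorable ∅ D 4 := by
  obtain ⟨T, hT⟩ := exists_subset_card_eq (card_univ (α := V) ▸ (by omega : 3 ≤ Fintype.card V))
  have hcompl : #Tᶜ = Fintype.card V - 3 := by rw [card_compl, hT.2]
  have hne : Tᶜ.Nonempty := card_pos.1 (by omega)
  obtain ⟨M, hM, hModd, hMcov⟩ := exists_isOdd_covers_iff_mem hne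
    (hcompl ▸ Nat.Odd.sub_odd hodd (by decide))
  obtain ⟨v, w, x, hvw, hvx, hwx, rfl⟩ := card_eq_three.1 hT.2
  obtain ⟨y, hy⟩ := hne
  simp only [mem_compl] at hMcov hy
  exact ⟨_, isColoring_empty_of_covers_iff hD hM hMcov hModd hvw hvx hwx hy⟩

namespace IsCounterexample

theorem exists_isCompletion_notMem (h : IsCounterexample S D) (hE : ∀ x, parity S x = 0)
    (hz : nbhd S z = ∅) {e : Sym2 V} (he : e ∈ away (S ∪ D) z) :
    ∃ F, IsForest F ∧ IsCompletion S D z {e} F ∧ (e ∈ F → e ∉ S) := by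
  obtain ⟨F, hforest, hF⟩ := h.exists_isCompletion (singleton_subset_iff.2 he)
  by_cases heFS : e ∈ F ∧ e ∈ S
  · have hS : S ⊆ away (S ∪ D) z := fun e he => mem_away.2 ⟨mem_union_left D he, fun hze => by
      obtain ⟨u, rfl⟩ := Sym2.mem_iff_exists.1 hze
      simpa [hz] using mem_nbhd.2 he⟩
    obtain ⟨F', hF', hforest', hpar⟩ := exists_isForest_subset (F ∆ S)
    refine ⟨F', hforest', ⟨hF.left_subset, ?_, fun x hx => ?_⟩, fun he' => ?_⟩
    · exact hF'.trans (symmDiff_le_sup.trans (union_subset hF.right_subset hS))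
    · rw [hpar, parity_symmDiff, hE, add_zero, hF.parity_eq x hx]
    · have := hF' he'
      grind [mem_symmDiff]
  · exact ⟨F, hforest, hF, not_and.1 heFS⟩

theorem mem_right_of_nbhd_eq_empty (h : IsCounterexample S D) (hE : ∀ x, parity S x = 0)
    (hz : nbhd S z = ∅) (hxz : x ≠ z) : s(z, x) ∈ D := by
  have notMem (u : V) : s(z, u) ∉ S := by simp [← mem_nbhd, hz]
  suffices huniv : insert z (nbhd D z) = univ by
    simpa [hxz] using Finset.ext_iff.1 huniv x
  refine h.eq_univ _ (insert_nonempty _ _) fun u y huy hu => ?_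
  rw [mem_insert, mem_nbhd] at hu ⊢
  rcases hu with rfl | hu
  · exact .inr ((mem_union.1 huy).resolve_left (notMem y))
  · by_contra! hy
    obtain ⟨F, hforest, hF, hFS⟩ := h.exists_isCompletion_notMem hE hz
      (mem_away.2 ⟨huy, by simpa using ⟨h.ne_right hu, hy.1.symm⟩⟩)
    exact h.not_colorable <| h.colorable_of_isCompletion_singleton hF hforest hFS hu (notMem y)
      (fun x _ => hE x) (.inl hz) fun hyD => absurd hyD hy.2

end IsCounterexample

/-- `C` is a union of components of the graph without `v` and `w` that obstructs the coloring with
center `v` whose second color is the single edge `s(v, w)`. -/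
structure IsUnbalanced (S D : Finset (Sym2 V)) (v w : V) (C : Finset V) : Prop where
  mem_left : s(v, w) ∈ S
  left_notMem : v ∉ C
  right_notMem : w ∉ C
  closedUnder : ClosedUnder (away (away (S ∪ D) v) w) C
  odd_card : Odd #(C \ nbhd S v)

theorem IsUnbalanced.nonempty (h : IsUnbalanced S D v w C) : C.Nonempty :=
  (card_pos.1 h.odd_card.pos).mono sdiff_subset

theorem IsUnbalanced.mem_of_mem (h : IsUnbalanced S D v w C) (hxy : s(x, y) ∈ S ∪ D) (hx : x ∈ C)
    (hyv : y ≠ v) (hyw : y ≠ w) : y ∈ C := by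
  refine h.closedUnder x y ?_ hx
  have hxv : x ≠ v := ne_of_mem_of_not_mem hx h.left_notMem
  have hxw : x ≠ w := ne_of_mem_of_not_mem hx h.right_notMem
  simp only [mem_away, Sym2.mem_iff]
  tauto

namespace IsConnectedPair

theorem colorable_of_parity_eq (h : IsConnectedPair S D) (hE : ∀ x, parity S x = 0)
    (hvw : s(v, w) ∈ S) {X : Finset (Sym2 V)} (hX : X ⊆ away (away (S ∪ D) v) w)
    (hpar : ∀ x, parity X x = if x ∈ insert v (nbhd S v) then 0 else 1) : Colorable S D 4 := by
  have hXv : X ⊆ away (S ∪ D) v := hX.trans away_subset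
  have hw : w ∈ nbhd S v := mem_nbhd.2 hvw
  have parity_fourth (x : V) (hxw : x ≠ w) : parity (fourth S v {w} X) x = 1 := by
    rw [fourth, union_comm, parity_union
      (disjoint_star_of_not_covers (not_covers_of_subset_away hXv)), hpar]
    rcases eq_or_ne x v with rfl | hxv
    · rw [parity_star_center, natCast_card_symmDiff, ← parity_eq_card_nbhd, hE]
      simp
    · rw [parity_star hxv]
      grind [mem_symmDiff]
  have not_covers_fourth : ¬ Covers (fourth S v {w} X) w := by
    rw [fourth, covers_union, covers_star (h.ne_left hvw).symm]
    simp [mem_symmDiff, hw, not_covers_of_subset_away hX]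
  have hcompl : IsCompletion S D v X ∅ := by
    refine ⟨hXv, empty_subset _, fun x hx => ?_⟩
    rw [parity_away hx, hpar, hE, parity_empty]
    grind
  refine hcompl.colorable_of_isOdd (R := {w}) (P := ∅) (Y₂ := {s(v, w)}) (Y₃ := ∅) h.disjoint
    (by simp) (by simp [hvw]) (empty_subset _) (by simp [star]) (by simp [star])
    isOdd_singleton isOdd_empty
    (fun x hx => parity_fourth x fun hxw => not_covers_fourth (hxw ▸ hx))
    fun u _ huw _ => .inr (.inr ⟨?_, ?_⟩)
  · exact covers_of_parity_eq_one (parity_fourth v (h.ne_left hvw))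
  · exact covers_of_parity_eq_one (parity_fourth u (by simpa using huw))

theorem exists_isUnbalanced (h : IsConnectedPair S D) (hcol : ¬ Colorable S D 4)
    (hE : ∀ x, parity S x = 0) (hvw : s(v, w) ∈ S) : ∃ C, IsUnbalanced S D v w C := by
  by_contra! hbal
  obtain ⟨X, hX, hpar⟩ := exists_subset_parity_eq (away (away (S ∪ D) v) w)
    (fun x => if x ∈ insert v (nbhd S v) then 0 else 1) fun C hC => by
      have hclosed : ClosedUnder (away (away (S ∪ D) v) w) (C \ {v, w}) := fun a b hab ha => by
        have := hC a b hab
        simp only [mem_away, Sym2.mem_iff, mem_sdiff, mem_insert, mem_singleton] at hab ha ⊢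
        tauto
      have hodd := mt (IsUnbalanced.mk hvw (by simp) (by simp) hclosed) (hbal _)
      have hsdiff : (C \ {v, w}) \ nbhd S v = {x ∈ C | x ∉ insert v (nbhd S v)} := by
        have := mem_nbhd.2 hvw
        grind
      rw [sum_ite, sum_const_zero, zero_add, sum_const, nsmul_one,
        ZMod.natCast_eq_zero_iff_even, ← Nat.not_odd_iff_even, ← hsdiff]
      exact hodd
  exact hcol (h.colorable_of_parity_eq hE hvw hX hpar)

end IsConnectedPair

namespace IsUnbalanced

theorem compl (h : IsUnbalanced S D v w C) (hS : Loopless S) (hv : parity S v = 0)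
    (hcard : Odd (Fintype.card V)) : IsUnbalanced S D v w (insert v (insert w C))ᶜ := by
  refine ⟨h.mem_left, by simp, by simp, fun a b hab ha => ?_, ?_⟩
  · have := h.closedUnder b a (Sym2.eq_swap ▸ hab)
    simp only [mem_away, Sym2.mem_iff, mem_compl, mem_insert] at hab ha ⊢
    tauto
  · have hw : w ∈ nbhd S v := mem_nbhd.2 h.mem_left
    have hsdiff : (insert v (insert w C))ᶜ \ nbhd S v =
        (insert v (nbhd S v))ᶜ \ (C \ nbhd S v) := by
      have := h.right_notMem
      grind [mem_compl]
    have hsub : C \ nbhd S v ⊆ (insert v (nbhd S v))ᶜ := by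
      have := h.left_notMem
      grind [mem_compl]
    have heven : Even #(insert v (nbhd S v))ᶜ := by
      rw [card_compl, card_insert_of_notMem hS.self_notMem_nbhd]
      rw [parity_eq_card_nbhd, ZMod.natCast_eq_zero_iff_even] at hv
      exact Nat.Odd.sub_odd hcard hv.add_one
    rw [hsdiff, card_sdiff_of_subset hsub]
    exact Nat.Even.sub_odd (card_le_card hsub) heven h.odd_card

theorem inter {C' : Finset V} (h : IsCounterexample S D) (hC : IsUnbalanced S D v w C)
    (hC' : IsUnbalanced S D x z C') (hx : x ∈ C) (hv : v ∉ C') (hw : w ∉ C') :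
    IsUnbalanced S D x z (C ∩ C') := by
  have mem_C {a b : V} (hab : s(a, b) ∈ S ∪ D) (ha : a ∈ C) (hb : b ∈ C') : b ∈ C :=
    hC.mem_of_mem hab ha (ne_of_mem_of_not_mem hb hv) (ne_of_mem_of_not_mem hb hw)
  have heven : Even #(C' \ C) := by
    rw [← ZMod.natCast_eq_zero_iff_even]
    refine h.card_eq_zero (v := z) (fun hz => hC'.right_notMem (mem_sdiff.1 hz).1)
      fun a b hab ha => ?_
    obtain ⟨ha', ha⟩ := mem_sdiff.1 ha
    obtain ⟨hab, hz⟩ := mem_away.1 hab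
    have hb : b ∉ C := fun hb => ha (mem_C (Sym2.eq_swap ▸ hab) hb ha')
    exact mem_sdiff.2 ⟨hC'.mem_of_mem hab ha' (ne_of_mem_of_not_mem hx hb).symm
      (by rintro rfl; simp at hz), hb⟩
  have hsdiff : (C ∩ C') \ nbhd S x = (C' \ nbhd S x) \ (C' \ C) := by
    grind
  have hsub : C' \ C ⊆ C' \ nbhd S x := by
    have (b : V) := mem_C (a := x) (b := b)
    grind [mem_nbhd]
  refine ⟨hC'.mem_left, fun hx => hC'.left_notMem (mem_inter.1 hx).2,
    fun hz => hC'.right_notMem (mem_inter.1 hz).2, fun a b hab ha => ?_, ?_⟩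
  · obtain ⟨ha, ha'⟩ := mem_inter.1 ha
    have hb := hC'.closedUnder a b hab ha'
    exact mem_inter.2 ⟨mem_C (away_subset (away_subset hab)) ha hb, hb⟩
  · rw [hsdiff, card_sdiff_of_subset hsub]
    exact Nat.Odd.sub_even (card_le_card hsub) hC'.odd_card heven

end IsUnbalanced

namespace IsCounterexample

theorem exists_isUnbalanced_notMem (h : IsCounterexample S D) (hE : ∀ x, parity S x = 0)
    (hxz : s(x, z) ∈ S) (hvw : s(v, w) ∈ S ∪ D) (hxv : x ≠ v) (hxw : x ≠ w) :
    ∃ C, IsUnbalanced S D x z C ∧ v ∉ C ∧ w ∉ C := by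
  obtain ⟨C, hC⟩ := h.exists_isUnbalanced h.not_colorable hE hxz
  by_cases hvwC : v ∉ C ∧ w ∉ C
  · exact ⟨C, hC, hvwC⟩
  · have hv := hC.mem_of_mem hvw
    have hw := hC.mem_of_mem (Sym2.eq_swap ▸ hvw : s(w, v) ∈ S ∪ D)
    refine ⟨_, hC.compl (h.loopless.mono subset_union_left) (hE x) h.odd_card, ?_⟩
    simp only [mem_compl, mem_insert, not_not]
    grind

theorem not_isUnbalanced (h : IsCounterexample S D) (hE : ∀ x, parity S x = 0) :
    ¬ IsUnbalanced S D v w C := by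
  induction C using Finset.strongInduction generalizing v w with | _ C ih =>
  intro hC
  by_cases hS : ∃ x ∈ C, (nbhd S x).Nonempty
  · obtain ⟨x, hx, z, hz⟩ := hS
    obtain ⟨C', hC', hv, hw⟩ := h.exists_isUnbalanced_notMem hE (mem_nbhd.1 hz)
      (mem_union_left D hC.mem_left) (ne_of_mem_of_not_mem hx hC.left_notMem)
      (ne_of_mem_of_not_mem hx hC.right_notMem)
    refine ih (C ∩ C') ?_ (hC.inter h hC' hx hv hw)
    exact ⟨inter_subset_left, fun hsub => hC'.left_notMem (mem_inter.1 (hsub hx)).2⟩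
  · push Not at hS
    obtain ⟨x, hx⟩ := hC.nonempty
    obtain ⟨b, hb⟩ := (hC.compl (h.loopless.mono subset_union_left) (hE v) h.odd_card).nonempty
    simp only [mem_compl, mem_insert, not_or] at hb
    have hxb : s(x, b) ∈ D :=
      h.mem_right_of_nbhd_eq_empty hE (hS x hx) (ne_of_mem_of_not_mem hx hb.2.2).symm
    exact hb.2.2 (hC.mem_of_mem (mem_union_right S hxb) hx hb.1 hb.2.1)

end IsCounterexample

theorem IsConnectedPair.colorable (h : IsConnectedPair S D) (hcard : 4 ≤ Fintype.card V) :
    Colorable S D 4 := by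
  rcases Nat.even_or_odd (Fintype.card V) with heven | hodd
  · exact h.colorable_of_even_card heven
  by_contra hcol
  have hcex : IsCounterexample S D := ⟨h, hodd, hcol⟩
  have hE (x : V) : parity S x = 0 := (zmod_two_eq_zero_or_one _).resolve_right fun hx =>
    absurd (hcex.card_le_three hx) (by omega)
  rcases S.eq_empty_or_nonempty with rfl | ⟨⟨v, w⟩, hvw⟩
  · refine hcol (colorable_empty_of_forall_mem (fun a b hab => ?_) hodd hcard)
    exact hcex.mem_right_of_nbhd_eq_empty hE (by simp [nbhd]) hab.symm
  · obtain ⟨C, hC⟩ := h.exists_isUnbalanced hcol hE hvw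
    exact hcex.not_isUnbalanced hE hC

end Eulerian

theorem isConnectedPair_of_connected [Fintype V] {E : Type*} [Fintype E] {f : E → Sym2 V}
    (hloopless : ∀ e, ¬ (f e).IsDiag)
    (hconn : (SimpleGraph.fromEdgeSet (Set.range f)).Connected) :
    IsConnectedPair {p | Odd #{e | f e = p}} {p | Even #{e | f e = p} ∧ #{e | f e = p} ≠ 0} := by
  have mem_iff (p : Sym2 V) : p ∈ ({p | Odd #{e | f e = p}} : Finset (Sym2 V)) ∪
      ({p | Even #{e | f e = p} ∧ #{e | f e = p} ≠ 0} : Finset (Sym2 V)) ↔ p ∈ Set.range f := by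
    have hne : #{e | f e = p} ≠ 0 ↔ p ∈ Set.range f := by simp [filter_eq_empty_iff]
    rw [mem_union, mem_filter_univ, mem_filter_univ, ← hne]
    grind
  refine ⟨disjoint_filter.2 fun p _ hodd heven => Nat.not_even_iff_odd.2 hodd heven.1,
    fun a ha => ?_, fun C ⟨a, ha⟩ hC => eq_univ_of_forall fun b => ?_⟩
  · obtain ⟨e, he⟩ := (mem_iff _).1 ha
    exact hloopless e (he ▸ Sym2.mk_isDiag_iff.2 rfl)
  · obtain ⟨p⟩ := hconn.preconnected a b
    induction p with
    | nil => exact ha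
    | cons hadj _ ih =>
      exact ih (hC _ _ ((mem_iff _).2 ((SimpleGraph.fromEdgeSet_adj _).1 hadj).1) ha)

end OddEdgeColoring

/-- Every connected multigraph of order at least 4 is odd 4-edge-colorable. -/
theorem stmt3 {V E : Type*} [Fintype V] [Fintype E] (f : E → Sym2 V)
    (hloopless : ∀ e, ¬ (f e).IsDiag)
    (hconn : (SimpleGraph.fromEdgeSet (Set.range f)).Connected)
    (hcard : 4 ≤ Fintype.card V) :
    MOddEdgeColorable f 4 := by
  classical
  have hpair := OddEdgeColoring.isConnectedPair_of_connected hloopless hconn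
  exact (hpair.colorable hcard).mOddEdgeColorable
end

section
/- Every 4-connected simple graph of odd order is odd 3-edge-colorable. -/
/-- The degree of vertex `v` in the color class `i` of the edge-coloring `c` of `G`. -/
noncomputable def classDeg {V : Type*} (G : SimpleGraph V) {k : ℕ}
    (c : Sym2 V → Fin k) (i : Fin k) (v : V) : ℕ :=
  {e : Sym2 V | e ∈ G.edgeSet ∧ c e = i ∧ v ∈ e}.ncard

/-- `G` is odd `k`-edge-colorable: there is an edge-coloring with `k` colors such that
every vertex incident to an edge of a color class has odd degree in that class. -/
def OddEdgeColorable {V : Type*} (G : SimpleGraph V) (k : ℕ) : Prop :=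
  ∃ c : Sym2 V → Fin k, ∀ (i : Fin k) (v : V),
    classDeg G c i v ≠ 0 → Odd (classDeg G c i v)

/-- `G` is `k`-connected: it has more than `k` vertices and remains connected
after deleting any set of fewer than `k` vertices. -/
def IsKConnected {V : Type*} [Fintype V] (G : SimpleGraph V) (k : ℕ) : Prop :=
  k < Fintype.card V ∧ ∀ s : Set V, s.ncard < k → (G.induce sᶜ).Connected

/-!
By the handshake lemma some vertex `v` has even degree. Two of the three classes will cover all
edges at `v`, so the task is to split suitable subgraphs into two odd graphs.

* If another vertex has even degree, a shortest path from such a vertex to a neighbour of `v` can be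
  chosen so that `G - v` minus the path stays connected. Regard the edges at `v` as half-edges. On
  the path and on its complement there are two odd graphs with prescribed total parity and
  half-edges. Exactly one half-edge lies on the path, so exchanging the two graphs on the path
  corrects the parity at `v`. The edges left over form an odd graph.
* If all other degrees are odd and `v` is adjacent to every vertex, remove an odd subgraph spanning
  all vertices but `v` and two non-adjacent vertices `a`, `b`. What remains is even except at `a`
  and `b`; its edges at `a` extend to an odd subgraph whose complement is again odd.
* If all other degrees are odd and `v` is not adjacent to every vertex, there is a nonseparating
  cycle through an edge `st` with `s`, but not `t`, a neighbour of `v`. The edges at `v` extend to a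
  connected even subgraph `B`, and complementing `B` inside the cycle changes the parity of its
  order. When the order is even, `B` splits into two odd graphs, and `G \ B` is odd.
-/

open scoped Classical

section Star

variable {V : Type*} {G J : SimpleGraph V} {S : Set V} {v x : V}

/-- The star with centre `v` and leaves `S \ {v}`. -/
def starOn (v : V) (S : Set V) : SimpleGraph V :=
  SimpleGraph.fromRel fun x y ↦ x = v ∧ y ∈ S

lemma starOn_adj_center (hv : v ∉ S) (y : V) : (starOn v S).Adj v y ↔ y ∈ S := by
  rw [starOn, SimpleGraph.fromRel_adj]
  grind

lemma starOn_adj_of_ne (hx : x ≠ v) (y : V) :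
    (starOn v S).Adj x y ↔ y = v ∧ x ∈ S := by
  rw [starOn, SimpleGraph.fromRel_adj]
  grind

lemma starOn_le (h : ∀ y ∈ S, G.Adj v y) : starOn v S ≤ G := by
  rintro x y ⟨-, ⟨rfl, hy⟩ | ⟨rfl, hx⟩⟩
  exacts [h y hy, (h x hx).symm]

lemma disjoint_starOn (hv : v ∉ J.support) : Disjoint (starOn v S) J := by
  rw [disjoint_iff_inf_le]
  rintro x y ⟨⟨-, ⟨rfl, -⟩ | ⟨rfl, -⟩⟩, hJ⟩
  exacts [hv ⟨y, hJ⟩, hv ⟨x, hJ.symm⟩]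

end Star

section Closed

variable {V : Type*} {J : SimpleGraph V} {S : Set V} {x y : V}

lemma spanningCoe_induce_adj_of_closed (hS : ∀ x ∈ S, ∀ y, J.Adj x y → y ∈ S) :
    (J.induce S).spanningCoe.Adj x y ↔ J.Adj x y ∧ x ∈ S := by
  simp only [SimpleGraph.map_adj, SimpleGraph.comap_adj, Function.Embedding.subtype_apply,
    Subtype.exists, exists_and_left, exists_prop]
  grind

end Closed

section Parity

variable {V : Type*} [Fintype V] {J K : SimpleGraph V} {u v w x : V}

lemma zmodTwo_eq_zero_or_eq_one : ∀ t : ZMod 2, t = 0 ∨ t = 1 := by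
  decide

/-- The degree of `v` in `J` modulo two. -/
noncomputable def degParity (J : SimpleGraph V) (v : V) : ZMod 2 :=
  (J.degree v : ZMod 2)

lemma degParity_eq_sum (J : SimpleGraph V) (v : V) :
    degParity J v = ∑ w, if J.Adj v w then 1 else 0 := by
  rw [degParity, Finset.sum_boole, ← SimpleGraph.card_neighborFinset_eq_degree,
    SimpleGraph.neighborFinset_eq_filter]

lemma degParity_eq_one_iff : degParity J v = 1 ↔ Odd (J.degree v) :=
  ZMod.natCast_eq_one_iff_odd

lemma degParity_eq_zero_iff : degParity J v = 0 ↔ Even (J.degree v) :=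
  ZMod.natCast_eq_zero_iff_even

lemma degParity_eq_zero_of_notMem_support (h : v ∉ J.support) : degParity J v = 0 := by
  rw [degParity, (J.degree_eq_zero_iff_notMem_support v).2 h, Nat.cast_zero]

lemma mem_support_of_degParity_ne_zero (h : degParity J v ≠ 0) : v ∈ J.support :=
  not_imp_comm.1 degParity_eq_zero_of_notMem_support h

lemma degParity_congr (h : ∀ w, J.Adj v w ↔ K.Adj v w) : degParity J v = degParity K v := by
  simp only [degParity_eq_sum, h]

lemma degParity_sup (h : Disjoint J K) (v : V) :
    degParity (J ⊔ K) v = degParity J v + degParity K v := by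
  simp only [degParity_eq_sum, ← Finset.sum_add_distrib, SimpleGraph.sup_adj]
  refine Finset.sum_congr rfl fun w _ ↦ ?_
  have : ¬ (J.Adj v w ∧ K.Adj v w) := by
    simpa only [SimpleGraph.inf_adj, SimpleGraph.bot_adj, iff_false] using
      iff_of_eq (congrArg (·.Adj v w) h.eq_bot)
  by_cases hJ : J.Adj v w <;> simp_all

lemma degParity_sdiff (h : K ≤ J) (v : V) :
    degParity (J \ K) v = degParity J v + degParity K v := by
  have hsup := degParity_sup (disjoint_sdiff_self_left : Disjoint (J \ K) K) v
  rw [sdiff_sup_cancel h] at hsup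
  rw [hsup, add_assoc, CharTwo.add_self_eq_zero, add_zero]

lemma degParity_edge (h : u ≠ w) (x : V) :
    degParity (SimpleGraph.edge u w) x =
      (Pi.single u 1 + Pi.single w 1 : V → ZMod 2) x := by
  rw [degParity_eq_sum]
  have hadj : ∀ y, (SimpleGraph.edge u w).Adj x y ↔ (x = u ∧ y = w) ∨ (x = w ∧ y = u) := by
    intro y
    rw [SimpleGraph.edge_adj]
    aesop
  by_cases hxu : x = u
  · subst hxu
    simp [hadj, h]
  · by_cases hxw : x = w
    · subst hxw
      simp [hadj, h.symm]
    · simp [hadj, hxu, hxw]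

lemma sum_degParity (J : SimpleGraph V) : ∑ v, degParity J v = 0 := by
  simp only [degParity]
  rw [← Nat.cast_sum, ZMod.natCast_eq_zero_iff_even, SimpleGraph.sum_degrees_eq_twice_card_edges]
  exact even_two_mul _

lemma sum_degParity_of_support_subset {D : Finset V} (h : J.support ⊆ D) :
    ∑ x ∈ D, degParity J x = 0 := by
  rw [← sum_degParity J]
  exact Finset.sum_subset D.subset_univ fun x _ hx ↦
    degParity_eq_zero_of_notMem_support fun hx' ↦ hx (h hx')

lemma sum_degParity_of_closed {K : Finset V} (hK : ∀ x ∈ K, ∀ y, J.Adj x y → y ∈ K) :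
    ∑ x ∈ K, degParity J x = 0 := by
  have hsupp : (J.induce (K : Set V)).spanningCoe.support ⊆ K := fun x ⟨_, hxy⟩ ↦
    ((spanningCoe_induce_adj_of_closed hK).1 hxy).2
  rw [← sum_degParity_of_support_subset hsupp]
  exact Finset.sum_congr rfl fun x hx ↦ degParity_congr fun y ↦
    ((spanningCoe_induce_adj_of_closed hK).trans (and_iff_left hx)).symm

lemma degParity_starOn_center {S : Set V} (hv : v ∉ S) :
    degParity (starOn v S) v = ∑ x, if x ∈ S then 1 else 0 := by
  simp only [degParity_eq_sum, starOn_adj_center hv]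

lemma degParity_starOn_of_ne {S : Set V} (hx : x ≠ v) :
    degParity (starOn v S) x = if x ∈ S then 1 else 0 := by
  rw [degParity_eq_sum]
  by_cases hxS : x ∈ S <;> simp [starOn_adj_of_ne hx, hxS]

end Parity

section Coloring

variable {V : Type*} [Fintype V] {A B G : SimpleGraph V}

/-- Every vertex of `J` that is not isolated has odd degree. -/
def IsOdd (J : SimpleGraph V) : Prop :=
  ∀ x ∈ J.support, degParity J x = 1

lemma classDeg_eq_degree {k : ℕ} {c : Sym2 V → Fin k} {i : Fin k} {J : SimpleGraph V}
    (hJ : ∀ x y, G.Adj x y ∧ c s(x, y) = i ↔ J.Adj x y) (v : V) :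
    classDeg G c i v = J.degree v := by
  rw [classDeg, ← SimpleGraph.card_incidenceFinset_eq_degree, ← Set.ncard_coe_finset]
  congr 1
  ext e
  induction e with
  | h x y =>
    simp only [Set.mem_ofPred_eq, SimpleGraph.mem_edgeSet, SimpleGraph.coe_incidenceFinset,
      SimpleGraph.incidenceSet, ← hJ]
    tauto

lemma IsOdd.odd_classDeg {k : ℕ} {c : Sym2 V → Fin k} {i : Fin k} {J : SimpleGraph V}
    (h : IsOdd J) (hJ : ∀ x y, G.Adj x y ∧ c s(x, y) = i ↔ J.Adj x y) (v : V)
    (hv : classDeg G c i v ≠ 0) : Odd (classDeg G c i v) := by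
  rw [classDeg_eq_degree hJ] at hv ⊢
  refine degParity_eq_one_iff.1 (h v ?_)
  rwa [← SimpleGraph.degree_pos_iff_mem_support, Nat.pos_iff_ne_zero]

theorem oddEdgeColorable_of_le (hAB : A ≤ B) (hBG : B ≤ G) (hA : IsOdd A)
    (hBA : IsOdd (B \ A)) (hGB : IsOdd (G \ B)) : OddEdgeColorable G 3 := by
  let c : Sym2 V → Fin 3 := fun e ↦
    if e ∈ A.edgeSet then 0 else if e ∈ B.edgeSet then 1 else 2
  refine ⟨c, fun i ↦ ?_⟩
  fin_cases i
  on_goal 1 => refine hA.odd_classDeg fun x y ↦ ?_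
  on_goal 2 => refine hBA.odd_classDeg fun x y ↦ ?_
  on_goal 3 => refine hGB.odd_classDeg fun x y ↦ ?_
  all_goals
    have hxyA : A.Adj x y → B.Adj x y := @hAB x y
    have hxyB : B.Adj x y → G.Adj x y := @hBG x y
    by_cases hA_xy : A.Adj x y <;> by_cases hB_xy : B.Adj x y <;> simp_all [c]

end Coloring

section Connectivity

variable {V : Type*} {G : SimpleGraph V}

lemma exists_adj_of_preconnected_induce {D X : Set V} (hD : (G.induce D).Preconnected)
    (hX : (D ∩ X).Nonempty) (hX' : (D \ X).Nonempty) : ∃ a ∈ D ∩ X, ∃ b ∈ D \ X, G.Adj a b := by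
  obtain ⟨⟨x, hx, hxX⟩, y, hy, hyX⟩ := And.intro hX hX'
  obtain ⟨p⟩ := hD ⟨x, hx⟩ ⟨y, hy⟩
  obtain ⟨d, -, hfst, hsnd⟩ := p.exists_boundary_dart {z | z.1 ∈ X} hxX hyX
  exact ⟨d.fst, ⟨d.fst.2, hfst⟩, d.snd, ⟨d.snd.2, hsnd⟩, d.adj⟩

theorem finset_induction_of_preconnected {D : Finset V} (hD : (G.induce (D : Set V)).Preconnected)
    {r : V} (hr : r ∈ D) {P : Finset V → Prop} (singleton : P {r})
    (insert : ∀ E, ∀ u ∉ E, ∀ w ∈ E, G.Adj u w → P E → P (insert u E)) : P D := by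
  obtain ⟨E, hE, hmax⟩ := (D.powerset.filter fun E ↦ r ∈ E ∧ P E).exists_max_image Finset.card
    ⟨{r}, by simpa [hr] using singleton⟩
  simp only [Finset.mem_filter, Finset.mem_powerset] at hE hmax
  obtain ⟨hED, hrE, hPE⟩ := hE
  suffices hDE : D ⊆ E from (hED.antisymm hDE) ▸ hPE
  by_contra hDE
  obtain ⟨w, ⟨-, hwE⟩, u, ⟨huD, huE⟩, hwu⟩ :=
    exists_adj_of_preconnected_induce hD (X := E) ⟨r, hr, hrE⟩ (Set.sdiff_nonempty.2 (mod_cast hDE))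
  have hcard := hmax _ ⟨Finset.insert_subset huD hED, Finset.mem_insert_of_mem hrE,
    insert E u huE w hwE hwu.symm hPE⟩
  rw [Finset.card_insert_of_notMem huE] at hcard
  omega

lemma connected_induce_insert {D : Set V} (hD : (G.induce D).Connected) {u w : V} (hw : w ∈ D)
    (huw : G.Adj u w) : (G.induce (insert u D)).Connected := by
  rw [← Set.singleton_union]
  exact G.connected_induce_union (by simp) hD.preconnected (Set.mem_singleton u) hw huw

lemma connected_induce_of_universal {S : Set V} {v : V} (hv : v ∈ S) (huniv : ∀ x ≠ v, G.Adj v x) :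
    (G.induce S).Connected := by
  refine (G.induce S).connected_iff_exists_forall_reachable.2 ⟨⟨v, hv⟩, fun ⟨x, hx⟩ ↦ ?_⟩
  by_cases hxv : x = v
  · subst hxv
    rfl
  · exact SimpleGraph.Adj.reachable (huniv x hxv)

namespace IsKConnected

variable [Fintype V] {k : ℕ} {S : Finset V} {x y : V}

lemma connected_induce_compl (hG : IsKConnected G k) (hS : S.card < k) :
    (G.induce ((Sᶜ : Finset V) : Set V)).Connected := by
  rw [Finset.coe_compl]
  exact hG.2 S (by rwa [Set.ncard_coe_finset])

lemma le_card_of_separates (hG : IsKConnected G k) {X : Set V} (hx : x ∈ X) (hxS : x ∉ S)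
    (hy : y ∉ X) (hyS : y ∉ S) (hX : ∀ a ∈ X, ∀ b, G.Adj a b → b ∈ X ∨ b ∈ S) : k ≤ S.card := by
  by_contra! hcard
  have hconn := (hG.2 (S : Set V) (by rwa [Set.ncard_coe_finset])).preconnected
  obtain ⟨a, ⟨-, ha⟩, b, ⟨hbS, hb⟩, hab⟩ :=
    exists_adj_of_preconnected_induce hconn (X := X) ⟨x, hxS, hx⟩ ⟨y, hyS, hy⟩
  exact (hX a ha b hab).elim hb hbS

lemma exists_notMem (hG : IsKConnected G k) (hS : S.card ≤ k) : ∃ x, x ∉ S := by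
  by_contra! h
  have hcard := hG.1
  rw [← Finset.card_univ, ← Finset.eq_univ_iff_forall.2 h] at hcard
  omega

lemma exists_adj_notMem (hG : IsKConnected G k) (hS : S.card < k) (hx : x ∉ S) :
    ∃ y ∉ S, G.Adj x y := by
  by_contra! h
  obtain ⟨z, hz⟩ := hG.exists_notMem ((S.card_insert_le x).trans hS)
  rw [Finset.mem_insert, not_or] at hz
  refine (hG.le_card_of_separates (X := {x}) rfl hx hz.1 hz.2 fun a ha b hab ↦ ?_).not_gt hS
  rw [Set.mem_singleton_iff.1 ha] at hab
  exact Or.inr (not_imp_comm.1 (h b) (not_not.2 hab))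

end IsKConnected

end Connectivity

section HalfEdges

variable {V : Type*}

/-- A graph together with `half x` pendant half-edges at each vertex `x`. The half-edges stand for
edges that leave the vertex set under consideration. -/
structure HalfEdgeGraph (V : Type*) where
  graph : SimpleGraph V
  half : V → ℕ

namespace HalfEdgeGraph

/-- `P` with `a` half-edges added at `u`. -/
noncomputable def addHalf (P : HalfEdgeGraph V) (u : V) (a : ℕ) : HalfEdgeGraph V :=
  ⟨P.graph, P.half + Pi.single u a⟩

/-- `P` with a half-edge at `u` and a half-edge at `w` merged into the edge `uw`. -/
noncomputable def mergeHalf (P : HalfEdgeGraph V) (u w : V) : HalfEdgeGraph V :=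
  ⟨P.graph ⊔ SimpleGraph.edge u w, P.half - (Pi.single u 1 + Pi.single w 1)⟩

variable {P : HalfEdgeGraph V} {u w : V}

lemma half_mergeHalf (hu : P.half u ≠ 0) (hw : P.half w ≠ 0) (huw : u ≠ w) (x : V) :
    (P.mergeHalf u w).half x + (Pi.single u 1 + Pi.single w 1 : V → ℕ) x = P.half x := by
  refine Nat.sub_add_cancel ?_
  rw [Pi.add_apply, Pi.single_apply, Pi.single_apply]
  grind

variable [Fintype V] {G : SimpleGraph V} {D : Finset V}

/-- The number of edges and half-edges at `x`, modulo two. -/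
noncomputable def parity (P : HalfEdgeGraph V) (x : V) : ZMod 2 :=
  degParity P.graph x + P.half x

/-- `P` lives on the vertex set `D` of `G`, and each vertex carries no edge or half-edge of `P`, or
an odd number of them. -/
structure IsOddOn (G : SimpleGraph V) (D : Finset V) (P : HalfEdgeGraph V) : Prop where
  le : P.graph ≤ G
  support_subset : P.graph.support ⊆ D
  half_eq_zero : ∀ x ∉ D, P.half x = 0
  parity_eq_one : ∀ x, x ∈ P.graph.support ∨ P.half x ≠ 0 → P.parity x = 1

lemma parity_addHalf (P : HalfEdgeGraph V) (u : V) (a : ℕ) (x : V) :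
    (P.addHalf u a).parity x = P.parity x + (Pi.single u (a : ZMod 2) : V → ZMod 2) x := by
  by_cases hx : x = u
  · subst hx
    simp [parity, addHalf, add_assoc]
  · simp [parity, addHalf, hx]

lemma degParity_mergeHalf (hP : ¬ P.graph.Adj u w) (huw : u ≠ w) (x : V) :
    degParity (P.mergeHalf u w).graph x =
      degParity P.graph x + (Pi.single u 1 + Pi.single w 1 : V → ZMod 2) x := by
  rw [mergeHalf, degParity_sup (P.graph.disjoint_edge.2 hP), degParity_edge huw]

lemma parity_mergeHalf (hP : ¬ P.graph.Adj u w) (hu : P.half u ≠ 0) (hw : P.half w ≠ 0)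
    (huw : u ≠ w) (x : V) : (P.mergeHalf u w).parity x = P.parity x := by
  have hsingle : (Pi.single u 1 + Pi.single w 1 : V → ZMod 2) x =
      ((Pi.single u 1 + Pi.single w 1 : V → ℕ) x : ZMod 2) := by
    simp [Pi.single_apply]
  rw [parity, parity, degParity_mergeHalf hP huw, ← half_mergeHalf hu hw huw x, hsingle]
  push_cast
  ring

namespace IsOddOn

lemma degParity_eq_zero (hP : P.IsOddOn G D) (hu : u ∉ D) : degParity P.graph u = 0 :=
  degParity_eq_zero_of_notMem_support fun h ↦ hu (hP.support_subset h)

lemma parity_eq_zero (hP : P.IsOddOn G D) (hu : u ∉ D) : P.parity u = 0 := by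
  rw [parity, hP.half_eq_zero u hu, hP.degParity_eq_zero hu, Nat.cast_zero, add_zero]

lemma addHalf (hP : P.IsOddOn G D) (hu : u ∉ D) {a : ℕ} (ha : a ≠ 0 → (a : ZMod 2) = 1) :
    (P.addHalf u a).IsOddOn G (insert u D) where
  le := hP.le
  support_subset := hP.support_subset.trans (by simp)
  half_eq_zero x hx := by
    rw [Finset.mem_insert, not_or] at hx
    simp [HalfEdgeGraph.addHalf, hx.1, hP.half_eq_zero x hx.2]
  parity_eq_one x hx := by
    rw [parity_addHalf]
    by_cases hxu : x = u
    · subst hxu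
      have hxs : x ∉ P.graph.support := fun h ↦ hu (hP.support_subset h)
      rw [hP.parity_eq_zero hu, Pi.single_eq_same, zero_add]
      refine ha ?_
      simpa [HalfEdgeGraph.addHalf, hxs, hP.half_eq_zero x hu] using hx
    · rw [Pi.single_eq_of_ne hxu, add_zero]
      exact hP.parity_eq_one x (by simpa [HalfEdgeGraph.addHalf, hxu] using hx)

lemma mergeHalf (hP : P.IsOddOn G D) (hadj : ¬ P.graph.Adj u w) (hu : P.half u ≠ 0)
    (hw : P.half w ≠ 0) (huw : G.Adj u w) : (P.mergeHalf u w).IsOddOn G D where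
  le := sup_le hP.le (G.edge_le_iff.2 (Or.inr huw))
  support_subset := by
    have hD : ∀ x, P.half x ≠ 0 → x ∈ D := fun x ↦ not_imp_comm.1 (hP.half_eq_zero x)
    rintro x ⟨y, hxy | hxy⟩
    · exact hP.support_subset ⟨y, hxy⟩
    · rw [SimpleGraph.edge_adj] at hxy
      rcases hxy.1 with ⟨rfl, -⟩ | ⟨rfl, -⟩
      exacts [hD _ hu, hD _ hw]
  half_eq_zero x hx := by
    have := half_mergeHalf hu hw huw.ne x
    rw [hP.half_eq_zero x hx] at this
    omega
  parity_eq_one x hx := by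
    rw [parity_mergeHalf hadj hu hw huw.ne]
    refine hP.parity_eq_one x ?_
    rcases hx with ⟨y, hxy | hxy⟩ | hx
    · exact Or.inl ⟨y, hxy⟩
    · rw [SimpleGraph.edge_adj] at hxy
      rcases hxy.1 with ⟨rfl, -⟩ | ⟨rfl, -⟩
      exacts [Or.inr hu, Or.inr hw]
    · have := half_mergeHalf hu hw huw.ne x
      exact Or.inr (by omega)

end IsOddOn

/-- `P` and `Q` are edge-disjoint, odd on `D`, and together have degree `τ x` modulo two and `L x`
half-edges at every vertex `x` of `D`. -/
structure IsOddSplit (G : SimpleGraph V) (D : Finset V) (τ : V → ZMod 2) (L : V → ℕ)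
    (P Q : HalfEdgeGraph V) : Prop where
  left : P.IsOddOn G D
  right : Q.IsOddOn G D
  disjoint : Disjoint P.graph Q.graph
  degParity_add : ∀ x ∈ D, degParity P.graph x + degParity Q.graph x = τ x
  half_add : ∀ x ∈ D, P.half x + Q.half x = L x

variable {Q : HalfEdgeGraph V} {τ : V → ZMod 2} {L : V → ℕ}

namespace IsOddSplit

lemma swap (h : IsOddSplit G D τ L P Q) : IsOddSplit G D τ L Q P where
  left := h.right
  right := h.left
  disjoint := h.disjoint.symm
  degParity_add x hx := by rw [add_comm, h.degParity_add x hx]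
  half_add x hx := by rw [add_comm, h.half_add x hx]

lemma addHalf (h : IsOddSplit G D τ L P Q) (hu : u ∉ D) {a b : ℕ}
    (ha : a ≠ 0 → (a : ZMod 2) = 1) (hb : b ≠ 0 → (b : ZMod 2) = 1) :
    IsOddSplit G (insert u D) (Function.update τ u 0) (Function.update L u (a + b))
      (P.addHalf u a) (Q.addHalf u b) where
  left := h.left.addHalf hu ha
  right := h.right.addHalf hu hb
  disjoint := h.disjoint
  degParity_add x hx := by
    rcases Finset.mem_insert.1 hx with rfl | hx
    · rw [Function.update_self]
      simp only [HalfEdgeGraph.addHalf]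
      rw [h.left.degParity_eq_zero hu, h.right.degParity_eq_zero hu, add_zero]
    · rw [Function.update_of_ne (ne_of_mem_of_not_mem hx hu)]
      exact h.degParity_add x hx
  half_add x hx := by
    rcases Finset.mem_insert.1 hx with rfl | hx
    · simp [HalfEdgeGraph.addHalf, h.left.half_eq_zero x hu, h.right.half_eq_zero x hu]
    · have hxu := ne_of_mem_of_not_mem hx hu
      simp [HalfEdgeGraph.addHalf, hxu, h.half_add x hx]

lemma mergeHalf (h : IsOddSplit G D τ L P Q) (huw : G.Adj u w) (hPadj : ¬ P.graph.Adj u w)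
    (hQadj : ¬ Q.graph.Adj u w) (hu : P.half u ≠ 0) (hw : P.half w ≠ 0) :
    IsOddSplit G D (τ + (Pi.single u 1 + Pi.single w 1)) (L - (Pi.single u 1 + Pi.single w 1))
      (P.mergeHalf u w) Q where
  left := h.left.mergeHalf hPadj hu hw huw
  right := h.right
  disjoint := disjoint_sup_left.2 ⟨h.disjoint, (Q.graph.disjoint_edge.2 hQadj).symm⟩
  degParity_add x hx := by
    rw [degParity_mergeHalf hPadj huw.ne, Pi.add_apply τ, ← h.degParity_add x hx]
    ring
  half_add x hx := by
    have := half_mergeHalf hu hw huw.ne x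
    have := h.half_add x hx
    rw [Pi.sub_apply]
    omega

lemma congr (h : IsOddSplit G D τ L P Q) {τ' : V → ZMod 2} {L' : V → ℕ}
    (hτ : ∀ x ∈ D, τ x = τ' x) (hL : ∀ x ∈ D, L x = L' x) : IsOddSplit G D τ' L' P Q where
  left := h.left
  right := h.right
  disjoint := h.disjoint
  degParity_add x hx := (h.degParity_add x hx).trans (hτ x hx)
  half_add x hx := (h.half_add x hx).trans (hL x hx)

lemma empty (G : SimpleGraph V) (τ : V → ZMod 2) (L : V → ℕ) :
    IsOddSplit G ∅ τ L ⟨⊥, 0⟩ ⟨⊥, 0⟩ := by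
  have : IsOddOn G ∅ ⟨⊥, 0⟩ := ⟨bot_le, by simp, by simp, by simp⟩
  exact ⟨this, this, disjoint_bot_left, by simp, by simp⟩

end IsOddSplit

lemma exists_add_eq_and_parity_eq_one (l : ℕ) : ∃ a b : ℕ, a + b = l ∧
    (a ≠ 0 → (a : ZMod 2) = 1) ∧ (b ≠ 0 → (b : ZMod 2) = 1) ∧ (l ≠ 0 → a ≠ 0) := by
  simp only [ZMod.natCast_eq_one_iff_odd]
  rcases Nat.even_or_odd l with hl | hl
  · rcases eq_or_ne l 0 with rfl | hl0
    · exact ⟨0, 0, by simp⟩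
    · exact ⟨1, l - 1, by omega, by simp, fun _ ↦ Nat.Even.sub_odd (by omega) hl odd_one, by simp⟩
  · exact ⟨l, 0, by simp [hl]⟩

namespace IsOddSplit

lemma exists_insert_of_eq_zero (h : IsOddSplit G D τ L P Q) (hu : u ∉ D) (hτ : τ u = 0) :
    ∃ P' Q', IsOddSplit G (insert u D) τ L P' Q' := by
  obtain ⟨a, b, hab, ha, hb, -⟩ := exists_add_eq_and_parity_eq_one (L u)
  refine ⟨_, _, (h.addHalf hu ha hb).congr (fun x _ ↦ ?_) (fun x _ ↦ ?_)⟩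
  · rw [← hτ, Function.update_eq_self]
  · rw [hab, Function.update_eq_self]

lemma exists_insert_of_half_ne_zero
    (h : IsOddSplit G D (τ + Pi.single w 1) (L + Pi.single w 1) P Q) (hu : u ∉ D)
    (huw : G.Adj u w) (hτ : τ u = 1) (hw : P.half w ≠ 0) :
    ∃ P' Q', IsOddSplit G (insert u D) τ L P' Q' := by
  obtain ⟨a, b, hab, ha, hb, ha0⟩ := exists_add_eq_and_parity_eq_one (L u + 1)
  have hPu : ¬ P.graph.Adj u w := fun hadj ↦ hu (h.left.support_subset ⟨w, hadj⟩)
  have hQu : ¬ Q.graph.Adj u w := fun hadj ↦ hu (h.right.support_subset ⟨w, hadj⟩)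
  refine ⟨_, _, ((h.addHalf hu ha hb).mergeHalf huw hPu hQu ?_ ?_).congr
    (fun x _ ↦ ?_) (fun x _ ↦ ?_)⟩
  · simp [HalfEdgeGraph.addHalf, ha0]
  · simp [HalfEdgeGraph.addHalf, hw]
  · by_cases hx : x = u
    · subst hx
      simp [hτ, huw.ne]
    · simp [hx, add_assoc, CharTwo.add_self_eq_zero]
  · by_cases hx : x = u
    · subst hx
      simp [hab, huw.ne]
    · simp [hx]

end IsOddSplit

theorem exists_isOddSplit (hD : (G.induce (D : Set V)).Connected) (hτ : ∑ x ∈ D, τ x = 0)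
    (L : V → ℕ) : ∃ P Q, IsOddSplit G D τ L P Q := by
  obtain ⟨⟨r, hr⟩⟩ := hD.nonempty
  suffices h : ∀ τ L, ∑ x ∈ D, τ x = 0 → ∃ P Q, IsOddSplit G D τ L P Q from h τ L hτ
  refine finset_induction_of_preconnected hD.preconnected hr
    (P := fun E ↦ ∀ τ L, ∑ x ∈ E, τ x = 0 → ∃ P Q, IsOddSplit G E τ L P Q) ?_ ?_
  · intro τ L hτ
    rw [Finset.sum_singleton] at hτ
    exact (IsOddSplit.empty G τ L).exists_insert_of_eq_zero (Finset.notMem_empty r) hτ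
  · intro E u hu w hw huw ih τ L hτ
    rw [Finset.sum_insert hu] at hτ
    rcases zmodTwo_eq_zero_or_eq_one (τ u) with hτu | hτu
    · obtain ⟨P, Q, h⟩ := ih τ L (by rwa [hτu, zero_add] at hτ)
      exact h.exists_insert_of_eq_zero hu hτu
    · obtain ⟨P, Q, h⟩ := ih (τ + Pi.single w 1) (L + Pi.single w 1) (by
        simp only [Pi.add_apply, Finset.sum_add_distrib, Finset.sum_pi_single', hw, if_true]
        rw [← hτ, hτu, add_comm])
      have hhalf := h.half_add w hw
      rw [Pi.add_apply, Pi.single_eq_same] at hhalf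
      rcases Nat.eq_zero_or_pos (P.half w) with hPw | hPw
      · exact h.swap.exists_insert_of_half_ne_zero hu huw hτu (by omega)
      · exact h.exists_insert_of_half_ne_zero hu huw hτu hPw.ne'

end HalfEdgeGraph

end HalfEdges

section Closing

namespace HalfEdgeGraph

section

variable {V : Type*} {G : SimpleGraph V} {v : V} {P Q : HalfEdgeGraph V}

/-- `P` with all half-edges attached to the vertex `v`; at most one half-edge per vertex is kept. -/
def close (P : HalfEdgeGraph V) (v : V) : SimpleGraph V :=
  starOn v {x | P.half x ≠ 0} ⊔ P.graph

/-- The edge-wise union of `P` and `Q`, with their half-edges added up. -/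
def union (P Q : HalfEdgeGraph V) : HalfEdgeGraph V :=
  ⟨P.graph ⊔ Q.graph, P.half + Q.half⟩

lemma close_le (hP : P.graph ≤ G) (hv : ∀ x, P.half x ≠ 0 → G.Adj v x) : P.close v ≤ G :=
  sup_le (starOn_le hv) hP

lemma disjoint_close (hPQ : Disjoint P.graph Q.graph) (hP : v ∉ P.graph.support)
    (hQ : v ∉ Q.graph.support) (hhalf : ∀ x, P.half x = 0 ∨ Q.half x = 0) :
    Disjoint (P.close v) (Q.close v) := by
  have hstar : Disjoint (starOn v {x | P.half x ≠ 0}) (starOn v {x | Q.half x ≠ 0}) := by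
    rw [disjoint_iff_inf_le]
    rintro x y ⟨⟨hne, hx⟩, -, hy⟩
    have := hhalf x
    have := hhalf y
    grind
  exact disjoint_sup_left.2 ⟨disjoint_sup_right.2 ⟨hstar, disjoint_starOn hQ⟩,
    disjoint_sup_right.2 ⟨(disjoint_starOn hP).symm, hPQ⟩⟩

variable [Fintype V] {D E : Finset V}

namespace IsOddOn

lemma degParity_close (hP : P.IsOddOn G D) (hv : v ∉ D) (x : V) :
    degParity (P.close v) x =
      degParity (starOn v {x | P.half x ≠ 0}) x + degParity P.graph x :=
  degParity_sup (disjoint_starOn fun h ↦ hv (hP.support_subset h)) x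

lemma degParity_close_of_ne (hP : P.IsOddOn G D) (hv : v ∉ D) (hle : ∀ x, P.half x ≤ 1)
    {x : V} (hx : x ≠ v) : degParity (P.close v) x = P.parity x := by
  rw [hP.degParity_close hv, degParity_starOn_of_ne hx, parity, add_comm, Set.mem_ofPred_eq]
  rcases Nat.le_one_iff_eq_zero_or_eq_one.1 (hle x) with h | h <;> simp [h]

lemma degParity_close_center (hP : P.IsOddOn G D) (hv : v ∉ D) (hle : ∀ x, P.half x ≤ 1) :
    degParity (P.close v) v = ∑ x, (P.half x : ZMod 2) := by
  rw [hP.degParity_close hv, degParity_starOn_center (by simpa using hP.half_eq_zero v hv),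
    hP.degParity_eq_zero hv, add_zero]
  refine Finset.sum_congr rfl fun x _ ↦ ?_
  rcases Nat.le_one_iff_eq_zero_or_eq_one.1 (hle x) with h | h <;> simp [h]

lemma isOdd_close (hP : P.IsOddOn G D) (hv : v ∉ D) (hle : ∀ x, P.half x ≤ 1)
    (hsum : ∑ x, (P.half x : ZMod 2) = 1) : IsOdd (P.close v) := by
  intro x hx
  by_cases hxv : x = v
  · rw [hxv, hP.degParity_close_center hv hle, hsum]
  · rw [hP.degParity_close_of_ne hv hle hxv]
    refine hP.parity_eq_one x ?_
    rcases hx with ⟨y, hy | hy⟩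
    · exact Or.inr ((starOn_adj_of_ne hxv y).1 hy).2
    · exact Or.inl ⟨y, hy⟩

lemma disjoint_graph (hP : P.IsOddOn G D) (hQ : Q.IsOddOn G E) (hDE : Disjoint D E) :
    Disjoint P.graph Q.graph := by
  rw [disjoint_iff_inf_le]
  rintro x y ⟨hPxy, hQxy⟩
  exact Finset.disjoint_left.1 hDE (hP.support_subset ⟨y, hPxy⟩) (hQ.support_subset ⟨y, hQxy⟩)

lemma degParity_union (hP : P.IsOddOn G D) (hQ : Q.IsOddOn G E) (hDE : Disjoint D E) (x : V) :
    degParity (P.union Q).graph x = degParity P.graph x + degParity Q.graph x :=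
  degParity_sup (hP.disjoint_graph hQ hDE) x

lemma parity_union (hP : P.IsOddOn G D) (hQ : Q.IsOddOn G E) (hDE : Disjoint D E) (x : V) :
    (P.union Q).parity x = P.parity x + Q.parity x := by
  simp only [parity, hP.degParity_union hQ hDE]
  simp only [HalfEdgeGraph.union, Pi.add_apply, Nat.cast_add]
  ring

lemma union (hP : P.IsOddOn G D) (hQ : Q.IsOddOn G E) (hDE : Disjoint D E) :
    (P.union Q).IsOddOn G (D ∪ E) where
  le := sup_le hP.le hQ.le
  support_subset := by
    rw [Finset.coe_union]
    rintro x ⟨y, hy | hy⟩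
    exacts [Or.inl (hP.support_subset ⟨y, hy⟩), Or.inr (hQ.support_subset ⟨y, hy⟩)]
  half_eq_zero x hx := by
    rw [Finset.mem_union, not_or] at hx
    simp [HalfEdgeGraph.union, hP.half_eq_zero x hx.1, hQ.half_eq_zero x hx.2]
  parity_eq_one x hx := by
    have hx : (x ∈ P.graph.support ∨ P.half x ≠ 0) ∨ (x ∈ Q.graph.support ∨ Q.half x ≠ 0) := by
      rcases hx with ⟨y, hy | hy⟩ | hx
      · exact Or.inl (Or.inl ⟨y, hy⟩)
      · exact Or.inr (Or.inl ⟨y, hy⟩)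
      · simp only [HalfEdgeGraph.union, Pi.add_apply] at hx
        omega
    rw [hP.parity_union hQ hDE]
    rcases hx with hx | hx
    · have hxD : x ∈ D := hx.elim (hP.support_subset ·) (not_imp_comm.1 (hP.half_eq_zero x))
      rw [hP.parity_eq_one x hx, hQ.parity_eq_zero (Finset.disjoint_left.1 hDE hxD), add_zero]
    · have hxE : x ∈ E := hx.elim (hQ.support_subset ·) (not_imp_comm.1 (hQ.half_eq_zero x))
      rw [hQ.parity_eq_one x hx, hP.parity_eq_zero (Finset.disjoint_right.1 hDE hxE), zero_add]

end IsOddOn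

variable {τ : V → ZMod 2} {L : V → ℕ}

lemma IsOddSplit.union {P' Q' : HalfEdgeGraph V} (h : IsOddSplit G D τ L P Q)
    (h' : IsOddSplit G E τ L P' Q') (hDE : Disjoint D E) :
    IsOddSplit G (D ∪ E) τ L (P.union P') (Q.union Q') where
  left := h.left.union h'.left hDE
  right := h.right.union h'.right hDE
  disjoint := disjoint_sup_left.2
    ⟨disjoint_sup_right.2 ⟨h.disjoint, h.left.disjoint_graph h'.right hDE⟩,
      disjoint_sup_right.2 ⟨(h.right.disjoint_graph h'.left hDE).symm, h'.disjoint⟩⟩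
  degParity_add x hx := by
    rw [h.left.degParity_union h'.left hDE, h.right.degParity_union h'.right hDE,
      add_add_add_comm]
    rcases Finset.mem_union.1 hx with hx | hx
    · have hxE := Finset.disjoint_left.1 hDE hx
      rw [h.degParity_add x hx, h'.left.degParity_eq_zero hxE, h'.right.degParity_eq_zero hxE]
      simp
    · have hxD := Finset.disjoint_right.1 hDE hx
      rw [h'.degParity_add x hx, h.left.degParity_eq_zero hxD, h.right.degParity_eq_zero hxD]
      simp
  half_add x hx := by
    simp only [HalfEdgeGraph.union, Pi.add_apply]
    rw [add_add_add_comm]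
    rcases Finset.mem_union.1 hx with hx | hx
    · have hxE := Finset.disjoint_left.1 hDE hx
      rw [h.half_add x hx, h'.left.half_eq_zero x hxE, h'.right.half_eq_zero x hxE]
      simp
    · have hxD := Finset.disjoint_right.1 hDE hx
      rw [h'.half_add x hx, h.left.half_eq_zero x hxD, h.right.half_eq_zero x hxD]
      simp

lemma IsOddSplit.sum_half_add_sum_half
    (h : IsOddSplit G D τ L P Q) : ∑ x, (P.half x : ZMod 2) + ∑ x, (Q.half x : ZMod 2) =
      ∑ x ∈ D, (L x : ZMod 2) := by
  rw [← Finset.sum_add_distrib]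
  refine (Finset.sum_subset_zero_on_sdiff D.subset_univ (fun x hx ↦ ?_) fun x hx ↦ ?_).symm
  · have hxD : x ∉ D := (Finset.mem_sdiff.1 hx).2
    rw [h.left.half_eq_zero x hxD, h.right.half_eq_zero x hxD]
    simp
  · rw [← h.half_add x hx, Nat.cast_add]

end

end HalfEdgeGraph

/-- The degree modulo two that a subgraph of `G - v` has to have at `x` for `x` to get odd degree
once that subgraph and the edges at `v` are deleted from `G`. -/
noncomputable def residualParity {V : Type*} [Fintype V] (G : SimpleGraph V) (v x : V) : ZMod 2 :=
  degParity G x + (if G.Adj v x then 1 else 0) + 1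

open HalfEdgeGraph

variable {V : Type*} [Fintype V] {G : SimpleGraph V} {v : V}

lemma sum_residualParity (hcard : Odd (Fintype.card V)) (hv : degParity G v = 0) :
    ∑ x ∈ {v}ᶜ, residualParity G v x = 0 := by
  have hall : ∑ x, residualParity G v x = 1 := by
    simp only [residualParity, Finset.sum_add_distrib]
    rw [sum_degParity, ← degParity_eq_sum, hv, Finset.sum_const, Finset.card_univ, nsmul_one,
      ZMod.natCast_eq_one_iff_odd.2 hcard, zero_add, zero_add]
  have hself : residualParity G v v = 1 := by simp [residualParity, hv]
  rw [Fintype.sum_eq_add_sum_compl v, hself] at hall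
  grind

/-- A split of `G - v` in which the half-edges stand for the edges at `v`, and whose degrees are
such that closing up both sides at `v` leaves an odd graph. -/
abbrev IsResidualSplit (G : SimpleGraph V) (v : V) (P Q : HalfEdgeGraph V) : Prop :=
  IsOddSplit G {v}ᶜ (residualParity G v) (fun x ↦ if G.Adj v x then 1 else 0) P Q

namespace IsResidualSplit

variable {P Q : HalfEdgeGraph V}

lemma notMem_compl (v : V) : v ∉ ({v}ᶜ : Finset V) := by
  simp

lemma symm (h : IsResidualSplit G v P Q) : IsResidualSplit G v Q P :=
  h.swap

lemma half_add_half (h : IsResidualSplit G v P Q) (x : V) :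
    P.half x + Q.half x = if G.Adj v x then 1 else 0 := by
  by_cases hx : x = v
  · simp [hx, h.left.half_eq_zero v (notMem_compl v), h.right.half_eq_zero v (notMem_compl v)]
  · exact h.half_add x (by simpa using hx)

lemma half_le_one (h : IsResidualSplit G v P Q) (x : V) : P.half x ≤ 1 := by
  grind [h.half_add_half x]

lemma close_le (h : IsResidualSplit G v P Q) : P.close v ≤ G :=
  HalfEdgeGraph.close_le h.left.le fun x hx ↦ by grind [h.half_add_half x]

lemma disjoint_close (h : IsResidualSplit G v P Q) : Disjoint (P.close v) (Q.close v) :=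
  HalfEdgeGraph.disjoint_close h.disjoint (fun hv ↦ notMem_compl v (h.left.support_subset hv))
    (fun hv ↦ notMem_compl v (h.right.support_subset hv)) fun x ↦ by grind [h.half_add_half x]

lemma isOdd_sdiff_close (h : IsResidualSplit G v P Q) : IsOdd (G \ (P.close v ⊔ Q.close v)) := by
  rintro x ⟨y, hG, hnot⟩
  by_cases hx : x = v
  · subst hx
    have hy := h.half_add_half y
    rw [if_pos hG] at hy
    refine absurd ?_ hnot
    rcases Nat.eq_zero_or_pos (P.half y) with h0 | h0
    · exact Or.inr (Or.inl ⟨hG.ne, Or.inl ⟨rfl, show Q.half y ≠ 0 by omega⟩⟩)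
    · exact Or.inl (Or.inl ⟨hG.ne, Or.inl ⟨rfl, h0.ne'⟩⟩)
  · have hdeg := h.degParity_add x (by simpa using hx)
    have hhalf := congrArg (Nat.cast (R := ZMod 2)) (h.half_add_half x)
    rw [degParity_sdiff (sup_le h.close_le h.symm.close_le), degParity_sup h.disjoint_close,
      h.left.degParity_close_of_ne (notMem_compl v) h.half_le_one hx,
      h.right.degParity_close_of_ne (notMem_compl v) h.symm.half_le_one hx]
    rw [residualParity] at hdeg
    simp only [parity]
    push_cast at hhalf
    grind

end IsResidualSplit

theorem oddEdgeColorable_of_isResidualSplit {P Q : HalfEdgeGraph V} (hv : degParity G v = 0)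
    (h : IsResidualSplit G v P Q) (hsum : ∑ x, (P.half x : ZMod 2) = 1) :
    OddEdgeColorable G 3 := by
  have hsum' : ∑ x, (Q.half x : ZMod 2) = 1 := by
    have hadd := h.sum_half_add_sum_half
    have hdeg := degParity_eq_sum G v
    rw [Fintype.sum_eq_add_sum_compl v, if_neg (G.loopless.irrefl v), hv, zero_add] at hdeg
    push_cast at hadd
    grind
  have hv' := IsResidualSplit.notMem_compl v
  refine oddEdgeColorable_of_le le_sup_left (sup_le h.close_le h.symm.close_le)
    (h.left.isOdd_close hv' h.half_le_one hsum) ?_ h.isOdd_sdiff_close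
  rw [h.disjoint_close.sup_sdiff_cancel_left]
  exact h.right.isOdd_close hv' h.symm.half_le_one hsum'

theorem oddEdgeColorable_of_partition {D E : Finset V} (hcard : Odd (Fintype.card V))
    (hv : degParity G v = 0) (hDE : Disjoint D E) (hunion : D ∪ E = {v}ᶜ)
    (hD : (G.induce (D : Set V)).Connected) (hE : (G.induce (E : Set V)).Connected)
    (hadj : ∑ x ∈ D, (if G.Adj v x then (1 : ZMod 2) else 0) = 1)
    (hsum : ∑ x ∈ D, residualParity G v x = 0) : OddEdgeColorable G 3 := by
  have hsum' : ∑ x ∈ E, residualParity G v x = 0 := by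
    have := sum_residualParity hcard hv
    rwa [← hunion, Finset.sum_union hDE, hsum, zero_add] at this
  obtain ⟨P, Q, h⟩ := exists_isOddSplit hD hsum fun x ↦ if G.Adj v x then 1 else 0
  obtain ⟨P', Q', h'⟩ := exists_isOddSplit hE hsum' fun x ↦ if G.Adj v x then 1 else 0
  have hPQ : ∑ x, (P.half x : ZMod 2) + ∑ x, (Q.half x : ZMod 2) = 1 := by
    rw [h.sum_half_add_sum_half, ← hadj]
    push_cast
    rfl
  have hhalf : ∀ R : HalfEdgeGraph V, ∑ x, ((R.union P').half x : ZMod 2) =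
      ∑ x, (R.half x : ZMod 2) + ∑ x, (P'.half x : ZMod 2) := fun R ↦ by
    rw [← Finset.sum_add_distrib]
    exact Finset.sum_congr rfl fun x _ ↦ Nat.cast_add _ _
  -- An odd number of half-edges on `D` lets us fix the parity at `v` by swapping the sides on `D`.
  by_cases hP : ∑ x, (P.half x : ZMod 2) + ∑ x, (P'.half x : ZMod 2) = 1
  · exact oddEdgeColorable_of_isResidualSplit hv (hunion ▸ h.union h' hDE) ((hhalf P).trans hP)
  · refine oddEdgeColorable_of_isResidualSplit hv (hunion ▸ h.swap.union h' hDE)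
      ((hhalf Q).trans ?_)
    have hP' := (zmodTwo_eq_zero_or_eq_one _).resolve_right hP
    linear_combination hPQ - hP' + CharTwo.add_self_eq_zero (∑ x, (P'.half x : ZMod 2))

end Closing

section Join

variable {V : Type*} [Fintype V] {F G : SimpleGraph V} {D : Finset V} {τ : V → ZMod 2}

/-- `F` is a subgraph of `G[D]` with degree `τ x` modulo two at every `x ∈ D`; this is the usual
notion of a `T`-join of `G[D]`, where `T` is the set of `x ∈ D` with `τ x = 1`. -/
structure IsJoin (G : SimpleGraph V) (D : Finset V) (τ : V → ZMod 2) (F : SimpleGraph V) :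
    Prop where
  le : F ≤ G
  support_subset : F.support ⊆ D
  degParity_eq : ∀ x ∈ D, degParity F x = τ x

theorem exists_isJoin (hD : (G.induce (D : Set V)).Connected) (hτ : ∑ x ∈ D, τ x = 0) :
    ∃ F, IsJoin G D τ F := by
  obtain ⟨P, Q, h⟩ := HalfEdgeGraph.exists_isOddSplit hD hτ 0
  refine ⟨P.graph ⊔ Q.graph, sup_le h.left.le h.right.le, ?_, fun x hx ↦ ?_⟩
  · rintro x ⟨y, hxy | hxy⟩
    exacts [h.left.support_subset ⟨y, hxy⟩, h.right.support_subset ⟨y, hxy⟩]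
  · rw [degParity_sup h.disjoint, h.degParity_add x hx]

lemma IsJoin.degParity_eq_zero (hF : IsJoin G D τ F) {x : V} (hx : x ∉ D) : degParity F x = 0 :=
  degParity_eq_zero_of_notMem_support fun h ↦ hx (hF.support_subset h)

theorem exists_isJoin_reachable (hD : (G.induce (D : Set V)).Connected)
    (hτ : ∑ x ∈ D, τ x = 0) :
    ∃ F, IsJoin G D τ F ∧ ∀ x ∈ F.support, ∃ y ∈ D, F.Reachable x y ∧ τ y = 1 := by
  obtain ⟨F, hF⟩ := exists_isJoin hD hτ
  let S : Set V := {x | ∃ y ∈ D, F.Reachable x y ∧ τ y = 1}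
  have hS : ∀ x ∈ S, ∀ y, F.Adj x y → y ∈ S := fun x ⟨z, hz, hxz, hτz⟩ y hxy ↦
    ⟨z, hz, hxy.symm.reachable.trans hxz, hτz⟩
  have hreach : ∀ {x y}, x ∈ S → F.Walk x y → (F.induce S).spanningCoe.Reachable x y := by
    intro x y hx p
    induction p with
    | nil => rfl
    | cons hxz _ ih =>
      exact ((spanningCoe_induce_adj_of_closed hS).2 ⟨hxz, hx⟩).reachable.trans (ih (hS _ hx _ hxz))
  refine ⟨(F.induce S).spanningCoe, ⟨(F.spanningCoe_induce_le S).trans hF.le, ?_, ?_⟩, ?_⟩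
  · rintro x ⟨y, hxy⟩
    exact hF.support_subset ⟨y, F.spanningCoe_induce_le S hxy⟩
  · intro x hx
    by_cases hxS : x ∈ S
    · rw [← hF.degParity_eq x hx]
      exact degParity_congr fun y ↦
        (spanningCoe_induce_adj_of_closed hS).trans (and_iff_left hxS)
    · rw [(zmodTwo_eq_zero_or_eq_one (τ x)).resolve_right fun h ↦ hxS ⟨x, hx, .rfl, h⟩]
      exact degParity_eq_zero_of_notMem_support fun ⟨y, hxy⟩ ↦
        hxS ((spanningCoe_induce_adj_of_closed hS).1 hxy).2
  · rintro x ⟨y, hxy⟩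
    have hx : x ∈ S := ((spanningCoe_induce_adj_of_closed hS).1 hxy).2
    have ⟨z, hz, ⟨p⟩, hτz⟩ := hx
    exact ⟨z, hz, hreach hx p, hτz⟩

lemma IsJoin.isOdd (hF : IsJoin G D 1 F) : IsOdd F :=
  fun x hx ↦ hF.degParity_eq x (hF.support_subset hx)

theorem exists_isOdd_isOdd_sdiff_of_even {B : SimpleGraph V} (hB : ∀ x, degParity B x = 0)
    (hconn : (B.induce B.support).Connected) (hcard : Even B.support.ncard) :
    ∃ A ≤ B, IsOdd A ∧ IsOdd (B \ A) := by
  obtain ⟨A, hA⟩ := exists_isJoin (G := B) (D := B.support.toFinset) (τ := 1)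
    (by rwa [Set.coe_toFinset]) (by
      simp only [Pi.one_apply, Finset.sum_const, nsmul_one]
      rwa [ZMod.natCast_eq_zero_iff_even, ← Set.ncard_eq_toFinset_card'])
  refine ⟨A, hA.le, hA.isOdd, ?_⟩
  rintro x ⟨y, hxy⟩
  rw [degParity_sdiff hA.le, hB, hA.degParity_eq x (by simpa using ⟨y, hxy.1⟩), Pi.one_apply,
    zero_add]

end Join

section UniversalVertex

variable {V : Type*} [Fintype V] {G : SimpleGraph V} {a b v : V}

lemma sum_not_adj_eq_zero (hcard : Odd (Fintype.card V)) (ha : degParity G a = 1) :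
    ∑ w, (if G.Adj a w then 0 else 1 : ZMod 2) = 0 := by
  have hsum : ∑ w, ((if G.Adj a w then 0 else 1 : ZMod 2) + if G.Adj a w then 1 else 0) = 1 := by
    refine .trans ?_ (ZMod.natCast_eq_one_iff_odd.2 hcard)
    rw [Fintype.card_eq_sum_ones, Nat.cast_sum, Nat.cast_one]
    exact Finset.sum_congr rfl fun w _ ↦ by split_ifs <;> rfl
  rwa [Finset.sum_add_distrib, ← degParity_eq_sum, ha, add_eq_right] at hsum

lemma exists_ne_not_adj (hcard : Odd (Fintype.card V)) (ha : degParity G a = 1) :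
    ∃ b ≠ a, ¬ G.Adj a b := by
  by_contra! h
  have hsum := sum_not_adj_eq_zero hcard ha
  rw [Fintype.sum_eq_single a fun b hb ↦ if_pos (h b hb), if_neg G.irrefl] at hsum
  exact one_ne_zero hsum

theorem exists_isOdd_isOdd_sdiff_of_universal {B : SimpleGraph V} (hcard : Odd (Fintype.card V))
    (huniv : ∀ x ≠ v, B.Adj v x) (hab : b ≠ a) (hnadj : ¬ B.Adj a b) (hav : a ≠ v)
    (ha : degParity B a = 1) (hb : degParity B b = 1)
    (heven : ∀ x, x ≠ a → x ≠ b → degParity B x = 0) :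
    ∃ A ≤ B, IsOdd A ∧ IsOdd (B \ A) := by
  have hbv : b ≠ v := fun h ↦ hnadj (h ▸ (huniv a hav).symm)
  have hsum : ∑ w ∈ {a, b}ᶜ, (if B.Adj a w then 0 else 1 : ZMod 2) = 0 := by
    have hall := sum_not_adj_eq_zero hcard ha
    rw [← Finset.sum_add_sum_compl {a, b}, Finset.sum_pair hab.symm, if_neg B.irrefl,
      if_neg hnadj, CharTwo.add_self_eq_zero, zero_add] at hall
    exact hall
  obtain ⟨M, hM⟩ := exists_isJoin
    (connected_induce_of_universal (by simp [hav.symm, hbv.symm]) huniv) hsum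
  have haM : a ∉ M.support := fun h ↦ by simpa using hM.support_subset h
  have hbM : b ∉ M.support := fun h ↦ by simpa using hM.support_subset h
  have hle : M ⊔ starOn a {w | B.Adj a w} ≤ B := sup_le hM.le (starOn_le fun _ ↦ id)
  have hsup := degParity_sup (disjoint_starOn (S := {w | B.Adj a w}) haM).symm
  have hdeg : ∀ x ≠ b, degParity (M ⊔ starOn a {w | B.Adj a w}) x = 1 := by
    intro x hxb
    rw [hsup]
    by_cases hxa : x = a
    · rw [hxa, degParity_eq_zero_of_notMem_support haM, zero_add, ← ha]
      exact degParity_congr (starOn_adj_center (by simp))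
    · rw [hM.degParity_eq x (by simp [hxa, hxb]), degParity_starOn_of_ne hxa, Set.mem_ofPred_eq]
      split_ifs <;> rfl
  refine ⟨_, hle, fun x hx ↦ hdeg x ?_, ?_⟩
  · rintro rfl
    rcases hx with ⟨y, hy | hy⟩
    exacts [hbM ⟨y, hy⟩, hnadj ((starOn_adj_of_ne hab y).1 hy).2]
  · rintro x ⟨y, hxy, hnot⟩
    have hxa : x ≠ a := fun hxa ↦ hnot (Or.inr ⟨hxy.ne, Or.inl ⟨hxa, hxa ▸ hxy⟩⟩)
    rw [degParity_sdiff hle]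
    by_cases hxb : x = b
    · rw [hxb, hb, hsup, degParity_eq_zero_of_notMem_support hbM, degParity_starOn_of_ne hab]
      simp [hnadj]
    · rw [heven x hxa hxb, hdeg x hxb, zero_add]

theorem oddEdgeColorable_of_universal (hG : IsKConnected G 4) (hcard : Odd (Fintype.card V))
    (hv : degParity G v = 0) (huniv : ∀ x ≠ v, G.Adj v x) (hodd : ∀ x ≠ v, degParity G x = 1) :
    OddEdgeColorable G 3 := by
  obtain ⟨a, hva⟩ : ∃ a, v ≠ a := by
    have : Nontrivial V := Fintype.one_lt_card_iff_nontrivial.1 (by have := hG.1; omega)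
    exact (exists_ne v).imp fun _ ↦ Ne.symm
  have ha := hodd a hva.symm
  obtain ⟨b, hba, hab⟩ := exists_ne_not_adj hcard ha
  have hvb : v ≠ b := by
    rintro rfl
    exact hab (huniv a hva.symm).symm
  have hthree : ({v, a, b} : Finset V).card = 3 :=
    Finset.card_eq_three.2 ⟨v, a, b, hva, hvb, hba.symm, rfl⟩
  obtain ⟨H, hH⟩ := exists_isJoin (D := {v, a, b}ᶜ) (τ := 1)
    (hG.connected_induce_compl (by omega)) (by
      simp only [Pi.one_apply, Finset.sum_const, nsmul_one]
      rw [ZMod.natCast_eq_zero_iff_even, Finset.card_compl, hthree]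
      exact hcard.tsub_odd (by decide))
  have hdeg := degParity_sdiff hH.le
  have hH0 : ∀ x, x = v ∨ x = a ∨ x = b → degParity H x = 0 := fun x hx ↦
    hH.degParity_eq_zero (by
      simp only [Finset.mem_compl, Finset.mem_insert, Finset.mem_singleton, not_not, hx])
  obtain ⟨A, hA, hAodd, hBA⟩ := exists_isOdd_isOdd_sdiff_of_universal (B := G \ H) (v := v) hcard
    (fun x hx ↦ ⟨huniv x hx, fun h ↦ by simpa using hH.support_subset ⟨x, h⟩⟩) hba
    (fun h ↦ hab h.1) hva.symm (by rw [hdeg, ha, hH0 a (by simp), add_zero])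
    (by rw [hdeg, hodd b hvb.symm, hH0 b (by simp), add_zero]) fun x hxa hxb ↦ by
      rw [hdeg]
      by_cases hxv : x = v
      · rw [hxv, hv, hH0 v (by simp), add_zero]
      · rw [hodd x hxv, hH.degParity_eq x (by simp [hxv, hxa, hxb])]
        rfl
  refine oddEdgeColorable_of_le hA sdiff_le hAodd hBA ?_
  rw [sdiff_sdiff_eq_self hH.le]
  exact hH.isOdd

end UniversalVertex

section ReachableIn

variable {V : Type*} {Γ G : SimpleGraph V} {R S : Set V} {x y z : V}

/-- Some walk of `Γ` from `x` to `y` stays inside `R`. -/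
def ReachableIn (Γ : SimpleGraph V) (R : Set V) (x y : V) : Prop :=
  ∃ p : Γ.Walk x y, ∀ z ∈ p.support, z ∈ R

namespace ReachableIn

lemma refl (Γ : SimpleGraph V) (hx : x ∈ R) : ReachableIn Γ R x x :=
  ⟨.nil, by simpa using hx⟩

lemma symm (h : ReachableIn Γ R x y) : ReachableIn Γ R y x :=
  let ⟨p, hp⟩ := h
  ⟨p.reverse, by simpa using hp⟩

lemma trans (h : ReachableIn Γ R x y) (h' : ReachableIn Γ R y z) : ReachableIn Γ R x z := by
  obtain ⟨⟨p, hp⟩, q, hq⟩ := And.intro h h'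
  refine ⟨p.append q, fun w hw ↦ ?_⟩
  rw [SimpleGraph.Walk.mem_support_append_iff] at hw
  exact hw.elim (hp w) (hq w)

lemma mono (h : ReachableIn Γ R x y) (hRS : R ⊆ S) : ReachableIn Γ S x y :=
  h.imp fun _ hp z hz ↦ hRS (hp z hz)

lemma of_adj (h : Γ.Adj x y) (hx : x ∈ R) (hy : y ∈ R) : ReachableIn Γ R x y :=
  ⟨h.toWalk, by simp [hx, hy]⟩

lemma right_mem (h : ReachableIn Γ R x y) : y ∈ R :=
  h.elim fun p hp ↦ hp y p.end_mem_support

lemma of_getVert {a b : V} (p : Γ.Walk a b) {i j : ℕ} (hij : i ≤ j) (hj : j ≤ p.length)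
    (hR : ∀ k, i ≤ k → k ≤ j → p.getVert k ∈ R) :
    ReachableIn Γ R (p.getVert i) (p.getVert j) := by
  induction j, hij using Nat.le_induction with
  | base => exact refl Γ (hR i le_rfl le_rfl)
  | succ j hij ih =>
    exact (ih (by omega) fun k hik hkj ↦ hR k hik (by omega)).trans
      (of_adj (p.adj_getVert_succ (by omega)) (hR j hij (by omega)) (hR _ (by omega) le_rfl))

lemma of_connected_induce (h : (Γ.induce R).Preconnected) (hx : x ∈ R) (hy : y ∈ R) :
    ReachableIn Γ R x y := by
  by_contra hxy
  obtain ⟨u, ⟨hu, hxu⟩, w, ⟨hw, hxw⟩, huw⟩ := exists_adj_of_preconnected_induce h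
    (X := {z | ReachableIn Γ R x z}) ⟨x, hx, refl Γ hx⟩ ⟨y, hy, hxy⟩
  exact hxw (hxu.trans (of_adj huw hu hw))

end ReachableIn

end ReachableIn

section ShortestWalk

variable {V : Type*} {Γ : SimpleGraph V} {R A N : Set V} {a b : V}

/-- `p` is a shortest walk of `Γ` among those from `A` to `N` inside `R`. -/
structure IsShortestWalkIn (R A N : Set V) (p : Γ.Walk a b) : Prop where
  start_mem : a ∈ A
  end_mem : b ∈ N
  support_subset : ∀ z ∈ p.support, z ∈ R
  length_le : ∀ a' ∈ A, ∀ b' ∈ N, ∀ q : Γ.Walk a' b', (∀ z ∈ q.support, z ∈ R) →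
    p.length ≤ q.length

lemma exists_isShortestWalkIn (h : ∃ a ∈ A, ∃ b ∈ N, ReachableIn Γ R a b) :
    ∃ (a b : V) (p : Γ.Walk a b), IsShortestWalkIn R A N p := by
  obtain ⟨a, ha, b, hb, p, hp⟩ := h
  let L : Set ℕ := {n | ∃ a ∈ A, ∃ b ∈ N, ∃ p : Γ.Walk a b, (∀ z ∈ p.support, z ∈ R) ∧ p.length = n}
  have hL : L.Nonempty := ⟨_, a, ha, b, hb, p, hp, rfl⟩
  obtain ⟨a, ha, b, hb, p, hp, hlen⟩ := Nat.sInf_mem hL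
  exact ⟨a, b, p, ha, hb, hp, fun a' ha' b' hb' q hq ↦
    hlen.trans_le (Nat.sInf_le ⟨a', ha', b', hb', q, hq, rfl⟩)⟩

namespace IsShortestWalkIn

variable {p : Γ.Walk a b}

lemma reverse (hp : IsShortestWalkIn R A N p) : IsShortestWalkIn R N A p.reverse where
  start_mem := hp.end_mem
  end_mem := hp.start_mem
  support_subset := by simpa using hp.support_subset
  length_le a' ha' b' hb' q hq := by
    simpa using hp.length_le b' hb' a' ha' q.reverse (by simpa using hq)

lemma isPath (hp : IsShortestWalkIn R A N p) : p.IsPath := by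
  classical
  have hlen := hp.length_le a hp.start_mem b hp.end_mem p.bypass fun z hz ↦
    hp.support_subset z (p.support_bypass_subset_support hz)
  rw [← p.bypass_eq_self_of_length_le_length_bypass hlen]
  exact p.bypass_isPath

lemma eq_start_of_mem (hp : IsShortestWalkIn R A N p) {x : V} (hx : x ∈ p.support) (hA : x ∈ A) :
    x = a := by
  classical
  by_contra hxa
  exact (p.length_dropUntil_lt_length hx hxa).not_ge <|
    hp.length_le x hA b hp.end_mem (p.dropUntil x hx) fun z hz ↦
      hp.support_subset z (p.support_dropUntil_subset_support hx hz)

lemma eq_end_of_mem (hp : IsShortestWalkIn R A N p) {x : V} (hx : x ∈ p.support) (hN : x ∈ N) :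
    x = b := by
  classical
  by_contra hxb
  exact (p.length_takeUntil_lt_length hx hxb).not_ge <|
    hp.length_le a hp.start_mem x hN (p.takeUntil x hx) fun z hz ↦
      hp.support_subset z (p.support_takeUntil_subset_support hx hz)

lemma eq_succ_of_adj (hp : IsShortestWalkIn R A N p) {i j : ℕ} (hij : i < j) (hj : j ≤ p.length)
    (hadj : Γ.Adj (p.getVert i) (p.getVert j)) : j = i + 1 := by
  have hlen := hp.length_le a hp.start_mem b hp.end_mem
    ((p.take i).append (.cons hadj (p.drop j))) fun z hz ↦ by
      rw [SimpleGraph.Walk.mem_support_append_iff, SimpleGraph.Walk.support_cons,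
        List.mem_cons] at hz
      rcases hz with hz | rfl | hz
      · exact hp.support_subset z ((p.isSubwalk_take i).support_subset hz)
      · exact hp.support_subset _ (p.getVert_mem_support i)
      · exact hp.support_subset z ((p.isSubwalk_drop j).support_subset hz)
  rw [SimpleGraph.Walk.length_append, SimpleGraph.Walk.length_cons, p.take_length,
    p.drop_length] at hlen
  omega

end IsShortestWalkIn

end ShortestWalk

section NonseparatingPath

variable {V : Type*} {G Γ : SimpleGraph V} {A N R : Set V} {a b v : V} {p : Γ.Walk a b}

lemma reachableIn_of_isPath_of_getVert (hpath : p.IsPath) (hp : ∀ z ∈ p.support, z ∈ R)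
    {i j l : ℕ} (hij : i < j) (hjl : j < l) (hl : l ≤ p.length)
    (h : ReachableIn Γ (R \ {p.getVert j}) (p.getVert i) (p.getVert l)) :
    ReachableIn Γ (R \ {p.getVert j}) a b := by
  have hmem : ∀ k ≤ p.length, k ≠ j → p.getVert k ∈ R \ {p.getVert j} := fun k hk hkj ↦
    ⟨hp _ (p.getVert_mem_support k), fun heq ↦
      hkj (hpath.getVert_injOn hk (show j ≤ p.length by omega) heq)⟩
  have hleft := ReachableIn.of_getVert p (Nat.zero_le i) (by omega) fun k _ hki ↦
    hmem k (by omega) (by omega)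
  have hright := ReachableIn.of_getVert p hl le_rfl fun k hlk hk ↦ hmem k hk (by omega)
  rw [p.getVert_zero] at hleft
  rw [p.getVert_length] at hright
  exact hleft.trans (h.trans hright)

lemma exists_getVert_mem_of_two_lt_card (p : Γ.Walk a b) {S : Finset V}
    (hS : ∀ x ∈ S, x ∈ p.support) (hcard : 2 < S.card) :
    ∃ i j l, i < j ∧ j < l ∧ l ≤ p.length ∧
      p.getVert i ∈ S ∧ p.getVert j ∈ S ∧ p.getVert l ∈ S := by
  let I : Finset ℕ := (Finset.range (p.length + 1)).filter fun i ↦ p.getVert i ∈ S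
  have hI : 3 ≤ I.card := by
    refine hcard.trans_le ((Finset.card_le_card fun x hx ↦ ?_).trans
      (Finset.card_image_le (f := p.getVert)))
    obtain ⟨i, rfl, hi⟩ := SimpleGraph.Walk.mem_support_iff_exists_getVert.1 (hS x hx)
    exact Finset.mem_image_of_mem _ (Finset.mem_filter.2 ⟨Finset.mem_range_succ_iff.2 hi, hx⟩)
  have hmem : ∀ k : Fin 3, I.orderEmbOfCardLe hI k ≤ p.length ∧
      p.getVert (I.orderEmbOfCardLe hI k) ∈ S := fun k ↦ by
    simpa [I, Nat.lt_succ_iff] using I.orderEmbOfCardLe_mem hI k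
  exact ⟨_, _, _, (I.orderEmbOfCardLe hI).strictMono (by decide : (0 : Fin 3) < 1),
    (I.orderEmbOfCardLe hI).strictMono (by decide : (1 : Fin 3) < 2), (hmem 2).1,
    (hmem 0).2, (hmem 1).2, (hmem 2).2⟩

variable [Fintype V] {D : Set V} {x : V}

lemma exists_two_lt_card_attachments {K : Set V} (hG : IsKConnected G 4)
    (hΓ : ∀ z ∉ K, ∀ w, G.Adj z w → Γ.Adj z w) (hD : D.Nonempty) (hvD : v ∉ D)
    (hDK : Disjoint D K) (hDadj : ∀ z ∉ insert v D, z ∉ K → ∀ d ∈ D, ¬ G.Adj z d)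
    (hx : x ∉ insert v D) (hxK : x ∉ K) :
    ∃ S : Finset V, 2 < S.card ∧
      ∀ k ∈ S, k ∈ K ∧ ∃ z, ReachableIn Γ ((insert v D)ᶜ \ K) x z ∧ Γ.Adj z k := by
  let S : Finset V := {k | k ∈ K ∧ ∃ z, ReachableIn Γ ((insert v D)ᶜ \ K) x z ∧ Γ.Adj z k}
  let X : Set V := {z | ReachableIn Γ ((insert v D)ᶜ \ K) x z}
  have hXS : ∀ z ∈ X, ∀ w, G.Adj z w → w ∈ X ∨ w ∈ insert v S := by
    intro z hz w hzw
    have ⟨hzD, hzK⟩ := hz.right_mem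
    by_cases hwK : w ∈ K
    · exact Or.inr (by simpa [S, hwK] using Or.inr ⟨z, hz, hΓ z hzK w hzw⟩)
    by_cases hwv : w = v
    · exact Or.inr (hwv ▸ Finset.mem_insert_self v S)
    have hwD : w ∉ D := fun hwD ↦ hDadj z hzD hzK w hwD hzw
    exact Or.inl (hz.trans (.of_adj (hΓ z hzK w hzw) hz.right_mem ⟨by simp [hwv, hwD], hwK⟩))
  obtain ⟨d, hd⟩ := hD
  have hdX : d ∉ X := fun h ↦ h.right_mem.1 (Or.inr hd)
  have hdS : d ∉ S := fun h ↦ Set.disjoint_left.1 hDK hd (Finset.mem_filter.1 h).2.1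
  have hxS : x ∉ S := fun h ↦ hxK (Finset.mem_filter.1 h).2.1
  have := hG.le_card_of_separates (S := insert v S) (X := X) (.refl Γ ⟨hx, hxK⟩)
    (by grind) hdX (by grind) hXS
  have := Finset.card_insert_le v S
  exact ⟨S, by omega, fun k hk ↦ (Finset.mem_filter.1 hk).2⟩

lemma exists_reachableIn_getVert (hG : IsKConnected G 4)
    (hΓ : ∀ ⦃x y⦄, G.Adj x y → ¬ Γ.Adj x y → x = a ∨ x = b) (hD : D.Nonempty) (hvD : v ∉ D)
    (hpath : p.IsPath) (hp : ∀ z ∈ p.support, z ∉ insert v D)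
    (hx : x ∉ insert v D) (hxp : x ∉ p.support)
    (hDp : ∀ y ∉ insert v D, y ∉ p.support → ∀ d ∈ D, ¬ G.Adj y d) :
    ∃ i j l, i < j ∧ j < l ∧ l ≤ p.length ∧ (∃ d ∈ D, G.Adj (p.getVert j) d) ∧
      ReachableIn Γ ((insert v D)ᶜ \ {p.getVert j}) (p.getVert i) (p.getVert l) := by
  let K : Set V := {k | k ∈ p.support ∧ (k = a ∨ k = b ∨ ∃ d ∈ D, G.Adj k d)}
  have hΓK : ∀ z ∉ K, ∀ w, G.Adj z w → Γ.Adj z w := by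
    intro z hzK w hzw
    by_contra hnot
    refine hzK ?_
    rcases hΓ hzw hnot with rfl | rfl
    exacts [⟨p.start_mem_support, Or.inl rfl⟩, ⟨p.end_mem_support, Or.inr (Or.inl rfl)⟩]
  have hDK : Disjoint D K := Set.disjoint_left.2 fun d hd hdK ↦ hp d hdK.1 (Or.inr hd)
  have hDadj : ∀ z ∉ insert v D, z ∉ K → ∀ d ∈ D, ¬ G.Adj z d := fun z hzD hzK d hd hzd ↦
    hDp z hzD (fun hzp ↦ hzK ⟨hzp, Or.inr (Or.inr ⟨d, hd, hzd⟩)⟩) d hd hzd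
  obtain ⟨S, hcard, hS⟩ :=
    exists_two_lt_card_attachments hG hΓK hD hvD hDK hDadj hx fun h ↦ hxp h.1
  obtain ⟨i, j, l, hij, hjl, hl, hiS, hjS, hlS⟩ :=
    exists_getVert_mem_of_two_lt_card p (fun k hk ↦ (hS k hk).1.1) hcard
  obtain ⟨-, y, hxy, hyi⟩ := hS _ hiS
  obtain ⟨-, z, hxz, hzl⟩ := hS _ hlS
  have hjK := (hS _ hjS).1
  have hne : ∀ k ≤ p.length, k ≠ j → p.getVert j ≠ p.getVert k := fun k hk hkj heq ↦
    hkj (hpath.getVert_injOn hk (show j ≤ p.length by omega) heq.symm)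
  have hdj : ∃ d ∈ D, G.Adj (p.getVert j) d := by
    rcases hjK.2 with hja | hjb | hd
    · exact absurd (hja.trans p.getVert_zero.symm) (hne 0 (by omega) (by omega))
    · exact absurd (hjb.trans p.getVert_length.symm) (hne _ le_rfl (by omega))
    · exact hd
  have hsub : (insert v D)ᶜ \ K ⊆ (insert v D)ᶜ \ {p.getVert j} :=
    Set.sdiff_subset_sdiff_right (Set.singleton_subset_iff.2 hjK)
  have hmem : ∀ k ≤ p.length, k ≠ j → p.getVert k ∈ (insert v D)ᶜ \ {p.getVert j} :=
    fun k hk hkj ↦ ⟨hp _ (p.getVert_mem_support k), (hne k hk hkj).symm⟩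
  have hiy := ReachableIn.of_adj hyi.symm (hmem i (by omega) (by omega)) (hsub hxy.right_mem)
  have hzl := ReachableIn.of_adj hzl (hsub hxz.right_mem) (hmem l hl (by omega))
  exact ⟨i, j, l, hij, hjl, hl, hdj,
    hiy.trans ((hxy.mono hsub).symm.trans ((hxz.mono hsub).trans hzl))⟩

/-- A vertex off the linking path can be absorbed into `D`, unless all of its attachments lie on the
path; then three of them do, and the middle one can be bypassed. -/
lemma exists_adj_reachableIn_compl_diff (hG : IsKConnected G 4)
    (hΓ : ∀ ⦃x y⦄, G.Adj x y → ¬ Γ.Adj x y → x = a ∨ x = b) (hD : D.Nonempty) (hvD : v ∉ D)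
    (hpath : p.IsPath) (hp : ∀ z ∈ p.support, z ∉ insert v D)
    (hx : x ∉ insert v D) (hxp : x ∉ p.support) :
    ∃ y ∉ insert v D, (∃ d ∈ D, G.Adj y d) ∧
      ReachableIn Γ ((insert v D)ᶜ \ {y}) a b := by
  by_cases hDp : ∃ y ∉ insert v D, y ∉ p.support ∧ ∃ d ∈ D, G.Adj y d
  · obtain ⟨y, hyD, hyp, hy⟩ := hDp
    exact ⟨y, hyD, hy, p, fun z hz ↦ ⟨hp z hz, fun hzy ↦ hyp (hzy ▸ hz)⟩⟩
  · push Not at hDp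
    obtain ⟨i, j, l, hij, hjl, hl, hj, hil⟩ :=
      exists_reachableIn_getVert hG hΓ hD hvD hpath hp hx hxp hDp
    exact ⟨p.getVert j, hp _ (p.getVert_mem_support j), hj,
      reachableIn_of_isPath_of_getVert hpath hp hij hjl hl hil⟩

theorem exists_isShortestWalkIn_compl_of_isKConnected (hG : IsKConnected G 4)
    (hΓ : ∀ ⦃x y⦄, G.Adj x y → ¬ Γ.Adj x y → ∀ a ∈ A, ∀ b ∈ N, x = a ∨ x = b)
    {r : V} (hrv : r ≠ v) (hlink : ∃ a ∈ A, ∃ b ∈ N, ReachableIn Γ {v, r}ᶜ a b) :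
    ∃ (D : Set V) (a b : V) (p : Γ.Walk a b), (G.induce D).Connected ∧ v ∉ D ∧
      IsShortestWalkIn (insert v D)ᶜ A N p ∧ ∀ x ∉ p.support, x ∈ insert v D := by
  let Q : Set V → Prop := fun D ↦ v ∉ D ∧ (G.induce D).Connected ∧
    ∃ a ∈ A, ∃ b ∈ N, ReachableIn Γ (insert v D)ᶜ a b
  have hQr : Q {r} := ⟨by simpa using hrv.symm, by simp, hlink⟩
  obtain ⟨D, ⟨hvD, hconn, hDlink⟩, hmax⟩ := (Set.toFinite {D | Q D}).exists_maximal ⟨_, hQr⟩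
  obtain ⟨a, b, p, hp⟩ := exists_isShortestWalkIn hDlink
  refine ⟨D, a, b, p, hconn, hvD, hp, fun x hxp ↦ ?_⟩
  by_contra hx
  obtain ⟨y, hy, ⟨d, hd, hyd⟩, hab⟩ := exists_adj_reachableIn_compl_diff hG
    (fun x y hxy hnot ↦ hΓ hxy hnot a hp.start_mem b hp.end_mem)
    (Set.nonempty_coe_sort.1 hconn.nonempty) hvD hp.isPath hp.support_subset hx hxp
  have hvy : v ∉ insert y D := by
    rintro (rfl | h)
    exacts [hy (Or.inl rfl), hvD h]
  have hQy : Q (insert y D) := ⟨hvy, connected_induce_insert hconn hd hyd,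
    a, hp.start_mem, b, hp.end_mem, hab.mono fun z hz ↦ by
      simp only [Set.mem_sdiff, Set.mem_compl_iff, Set.mem_insert_iff,
        Set.mem_singleton_iff] at hz ⊢
      tauto⟩
  exact hy (Or.inr (hmax hQy (Set.subset_insert y D) (Set.mem_insert y D)))

end NonseparatingPath

section EvenVertices

variable {V : Type*} [Fintype V] {G : SimpleGraph V} {k : ℕ} {a u v : V}

lemma IsKConnected.exists_link (hG : IsKConnected G k) (hk : 3 ≤ k) (hav : a ≠ v)
    (huv : u ≠ v) : ∃ r ≠ v, ReachableIn G {v, r}ᶜ a u := by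
  obtain ⟨r, hr⟩ := hG.exists_notMem (S := {v, a, u}) (Finset.card_le_three.trans (by omega))
  simp only [Finset.mem_insert, Finset.mem_singleton, not_or] at hr
  obtain ⟨hrv, hra, hru⟩ := hr
  have hconn := hG.2 {v, r} (by rw [Set.ncard_pair (Ne.symm hrv)]; omega)
  refine ⟨r, hrv, .of_connected_induce hconn.preconnected ?_ ?_⟩
  · simp [hav, Ne.symm hra]
  · simp [huv, Ne.symm hru]

/-- A shortest path from an even vertex to a neighbour of `v` has only its ends of these types, so
it is one side of a partition as required for closing at `v`. -/
theorem oddEdgeColorable_of_two_even (hG : IsKConnected G 4) (hcard : Odd (Fintype.card V))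
    (hv : degParity G v = 0) (hav : a ≠ v) (ha : degParity G a = 0) :
    OddEdgeColorable G 3 := by
  obtain ⟨u, -, hvu⟩ := hG.exists_adj_notMem (S := ∅) (x := v) (by simp) (by simp)
  obtain ⟨r, hrv, hlink⟩ := hG.exists_link (by omega) hav hvu.ne'
  obtain ⟨E, s, t, p, hE, hvE, hp, hcover⟩ := exists_isShortestWalkIn_compl_of_isKConnected
    (Γ := G) (A := {x | x ≠ v ∧ degParity G x = 0}) (N := {x | G.Adj v x}) hG
    (fun _ _ h hnot ↦ absurd h hnot) hrv ⟨a, ⟨hav, ha⟩, u, hvu, hlink⟩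
  have hpv : v ∉ p.support := fun h ↦ hp.support_subset v h (Or.inl rfl)
  have hadj : ∀ x ∈ p.support, (G.Adj v x ↔ x = t) := fun x hx ↦
    ⟨hp.eq_end_of_mem hx, fun h ↦ h ▸ hp.end_mem⟩
  have hzero : ∀ x ∈ p.support, (degParity G x = 0 ↔ x = s) := fun x hx ↦
    ⟨fun h ↦ hp.eq_start_of_mem hx ⟨fun hxv ↦ hpv (hxv ▸ hx), h⟩, fun h ↦ h ▸ hp.start_mem.2⟩
  have hsum : ∑ x ∈ p.support.toFinset, (if G.Adj v x then (1 : ZMod 2) else 0) = 1 := by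
    rw [Finset.sum_congr rfl fun x hx ↦ by rw [hadj x (List.mem_toFinset.1 hx)]]
    simp
  have hsum' : ∑ x ∈ p.support.toFinset, (degParity G x + 1) = 1 := by
    have hterm : ∀ x ∈ p.support, degParity G x + 1 = if x = s then 1 else 0 := fun x hx ↦ by
      rw [← hzero x hx]
      rcases zmodTwo_eq_zero_or_eq_one (degParity G x) with h | h <;>
        simp [h, CharTwo.add_self_eq_zero]
    rw [Finset.sum_congr rfl fun x hx ↦ hterm x (List.mem_toFinset.1 hx)]
    simp
  refine oddEdgeColorable_of_partition (D := p.support.toFinset) (E := E.toFinset) hcard hv ?_ ?_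
    ?_ (by rwa [Set.coe_toFinset]) hsum ?_
  · refine Finset.disjoint_left.2 fun x hx hxE ↦ ?_
    exact hp.support_subset x (List.mem_toFinset.1 hx) (Or.inr (Set.mem_toFinset.1 hxE))
  · ext x
    have := hcover x
    simp only [Finset.mem_union, List.mem_toFinset, Set.mem_toFinset, Finset.mem_compl,
      Finset.mem_singleton, Set.mem_insert_iff] at this ⊢
    grind
  · rw [List.coe_toFinset]
    exact p.connected_induce_support
  · simp only [residualParity, add_right_comm (degParity G _) _ (1 : ZMod 2)]
    rw [Finset.sum_add_distrib, hsum, hsum']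
    rfl

end EvenVertices

section EvenSubgraph

variable {V : Type*} {B : SimpleGraph V} {v x y : V}

lemma mem_support_of_reachable (h : B.Reachable x y) (hx : x ∈ B.support) : y ∈ B.support := by
  rcases eq_or_ne y x with rfl | hyx
  · exact hx
  · obtain ⟨p⟩ := h
    exact (p.adj_penultimate (p.not_nil_of_ne hyx.symm)).right_mem_support

lemma connected_induce_support (hv : v ∈ B.support) (h : ∀ x ∈ B.support, B.Reachable x v) :
    (B.induce B.support).Connected := by
  refine (B.induce B.support).connected_iff_exists_forall_reachable.2 ⟨⟨v, hv⟩, fun ⟨x, hx⟩ ↦ ?_⟩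
  obtain ⟨p⟩ := (h x hx).symm
  exact ⟨p.induce _ fun z hz ↦ mem_support_of_reachable (p.takeUntil z hz).reachable hv⟩

variable [Fintype V]

lemma exists_ne_reachable_degParity_eq_one (hy : degParity B y = 1) (t : V) :
    ∃ z ≠ t, B.Reachable y z ∧ degParity B z = 1 := by
  by_contra! h
  have heven : ∀ z, B.Reachable y z → z ≠ y → degParity B z = 0 := by
    intro z hz hzy
    refine (zmodTwo_eq_zero_or_eq_one _).resolve_right (h z ?_ hz)
    rintro rfl
    exact h y hzy.symm .rfl hy
  have hsum := sum_degParity_of_closed (J := B) (K := {z | B.Reachable y z}) fun z hz w hzw ↦ by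
    simp only [Finset.mem_filter, Finset.mem_univ, true_and] at hz ⊢
    exact hz.trans hzw.reachable
  rw [Finset.sum_eq_single y (fun z hz hzy ↦ heven z (by simpa using hz) hzy) (by simp), hy] at hsum
  exact one_ne_zero hsum

theorem oddEdgeColorable_of_even_subgraph {G : SimpleGraph V}
    (hodd : ∀ x ≠ v, degParity G x = 1) (hBG : B ≤ G) (hB : ∀ x, degParity B x = 0)
    (hconn : (B.induce B.support).Connected) (hcard : Even B.support.ncard)
    (hv : ∀ y, G.Adj v y → B.Adj v y) : OddEdgeColorable G 3 := by
  obtain ⟨A, hA, hAodd, hBA⟩ := exists_isOdd_isOdd_sdiff_of_even hB hconn hcard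
  refine oddEdgeColorable_of_le hA hBG hAodd hBA ?_
  rintro x ⟨y, hG, hnot⟩
  rw [degParity_sdiff hBG, hB, add_zero]
  refine hodd x ?_
  rintro rfl
  exact hnot (hv y hG)

end EvenSubgraph

section StarExtension

variable {V : Type*} [Fintype V] {H : SimpleGraph V} {U : Finset V} {s t v : V}

/-- `t` is forced into the support by an odd target, and the target at `s` balances the sum. Each
component then meets `W`, because it has an odd vertex other than `t`. -/
lemma exists_join_indicator {W : Set V} (hU : (H.induce (U : Set V)).Connected) (hs : s ∈ U)
    (hsW : s ∈ W) (htW : t ∉ W) :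
    ∃ K ≤ H, K.support ⊆ U ∧ (t ∈ U → t ∈ K.support) ∧
      (∀ x ∈ U, x ≠ s → x ≠ t → degParity K x = if x ∈ W then 1 else 0) ∧
      ∀ x ∈ K.support, ∃ z ∈ W, K.Reachable x z := by
  let τ : V → ZMod 2 := fun x ↦ if x = t ∨ x ∈ W then 1 else 0
  have hτ : ∑ x ∈ U, Function.update τ s (∑ x ∈ U \ {s}, τ x) x = 0 := by
    rw [Finset.sum_update_of_mem hs, CharTwo.add_self_eq_zero]
  obtain ⟨K, hK, hreach⟩ := exists_isJoin_reachable hU hτ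
  have hdeg : ∀ x ∈ U, x ≠ s → degParity K x = τ x := fun x hx hxs ↦ by
    rw [hK.degParity_eq x hx, Function.update_of_ne hxs]
  refine ⟨K, hK.le, hK.support_subset, fun ht ↦ ?_, fun x hx hxs hxt ↦ ?_, fun x hx ↦ ?_⟩
  · refine mem_support_of_degParity_ne_zero ?_
    rw [hdeg t ht fun hts ↦ htW (hts ▸ hsW)]
    simp [τ]
  · rw [hdeg x hx hxs]
    simp [τ, hxt]
  · obtain ⟨y, hyU, hxy, hy⟩ := hreach x hx
    obtain ⟨z, hzt, hyz, hz⟩ :=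
      exists_ne_reachable_degParity_eq_one ((hK.degParity_eq y hyU).trans hy) t
    refine ⟨z, ?_, hxy.trans hyz⟩
    by_cases hzs : z = s
    · rwa [hzs]
    · have hzU := hK.support_subset (mem_support_of_degParity_ne_zero (hz.trans_ne one_ne_zero))
      rw [hdeg z hzU hzs] at hz
      simpa [τ, hzt] using hz

theorem exists_star_extension (hU : (H.induce (U : Set V)).Connected) (hvU : v ∉ U) (hs : s ∈ U)
    (hvs : H.Adj v s) (hvt : ¬ H.Adj v t) :
    ∃ C ≤ H, (∀ y, C.Adj v y ↔ H.Adj v y) ∧ (∀ x ∈ C.support, C.Reachable x v) ∧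
      (∀ x ∈ U, x ≠ s → x ≠ t → degParity C x = 0) ∧ (t ∈ U → t ∈ C.support) ∧
      ∀ x ∈ C.support, x = v ∨ H.Adj v x ∨ x ∈ U := by
  let W : Set V := {y | H.Adj v y}
  obtain ⟨K, hKH, hKU, htK, hdeg, hreach⟩ := exists_join_indicator (W := W) hU hs hvs hvt
  have hvK : v ∉ K.support := fun h ↦ hvU (hKU h)
  have hcenter : ∀ y, (starOn v W ⊔ K).Adj v y ↔ H.Adj v y := fun y ↦ by
    have hnot : ¬ K.Adj v y := fun h ↦ hvK ⟨y, h⟩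
    rw [SimpleGraph.sup_adj, starOn_adj_center (show v ∉ W from H.irrefl), or_iff_left hnot]
    rfl
  have hsupport : ∀ x ∈ (starOn v W ⊔ K).support, x = v ∨ H.Adj v x ∨ x ∈ K.support := by
    rintro x ⟨y, hxy | hxy⟩
    · exact or_iff_not_imp_left.2 fun hxv ↦ Or.inl ((starOn_adj_of_ne hxv y).1 hxy).2
    · exact Or.inr (Or.inr ⟨y, hxy⟩)
  have hadj : ∀ y, H.Adj v y → (starOn v W ⊔ K).Reachable y v := fun y hy ↦
    ((hcenter y).2 hy).symm.reachable
  refine ⟨starOn v W ⊔ K, sup_le (starOn_le fun _ ↦ id) hKH, hcenter, fun x hx ↦ ?_,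
    fun x hx hxs hxt ↦ ?_, fun ht ↦ ?_, fun x hx ↦ ?_⟩
  · rcases hsupport x hx with rfl | hx | hx
    · rfl
    · exact hadj x hx
    · obtain ⟨z, hz, hxz⟩ := hreach x hx
      exact (hxz.mono le_sup_right).trans (hadj z hz)
  · have hxv : x ≠ v := fun h ↦ hvU (h ▸ hx)
    rw [degParity_sup (disjoint_starOn hvK), degParity_starOn_of_ne hxv, hdeg x hx hxs hxt,
      CharTwo.add_self_eq_zero]
  · exact SimpleGraph.support_mono le_sup_right (htK ht)
  · exact (hsupport x hx).imp_right (Or.imp_right (@hKU x))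

end StarExtension

section Cycle

variable {V : Type*} {C J Y : SimpleGraph V} {S : Set V} {v x : V}

lemma support_sup (C J : SimpleGraph V) : (C ⊔ J).support = C.support ∪ J.support := by
  ext x
  simp only [SimpleGraph.mem_support, SimpleGraph.sup_adj, Set.mem_union, exists_or]

variable [Fintype V]

lemma degParity_eq_zero_of_isCycles (hY : Y.IsCycles) (x : V) : degParity Y x = 0 := by
  by_cases hx : (Y.neighborSet x).Nonempty
  · rw [degParity_eq_zero_iff, ← SimpleGraph.card_neighborSet_eq_degree, ← Nat.card_eq_fintype_card,
      Nat.card_coe_set_eq, hY hx]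
    exact even_two
  · exact degParity_eq_zero_of_notMem_support fun h ↦ hx h

lemma adj_iff_of_isCycles (hY : Y.IsCycles) (hJ : J ≤ Y) (hx : degParity J x = 0)
    (hxJ : x ∈ J.support) (y : V) : J.Adj x y ↔ Y.Adj x y := by
  have hsub : J.neighborSet x ⊆ Y.neighborSet x := fun _ h ↦ hJ h
  have hpos : 0 < (J.neighborSet x).ncard := (Set.ncard_pos).2 hxJ
  have heven : Even (J.neighborSet x).ncard := by
    rwa [degParity_eq_zero_iff, ← SimpleGraph.card_neighborSet_eq_degree,
      ← Nat.card_eq_fintype_card, Nat.card_coe_set_eq] at hx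
  have hle : (Y.neighborSet x).ncard ≤ (J.neighborSet x).ncard := by
    rw [hY (Set.Nonempty.mono hsub hxJ)]
    grind
  exact Set.ext_iff.1 (Set.eq_of_subset_of_ncard_le hsub hle) y

lemma exists_mem_reachable_of_isCycles (hY : Y.IsCycles)
    (hconn : (Y.induce Y.support).Connected) (hJ : J ≤ Y) (heven : ∀ z ∉ S, degParity J z = 0)
    (hS : (Y.support ∩ S).Nonempty) (hx : x ∈ J.support) : ∃ z ∈ S, J.Reachable x z := by
  by_contra! h
  obtain ⟨s, hsY, hsS⟩ := hS
  obtain ⟨z, ⟨-, hxz⟩, w, ⟨-, hxw⟩, hzw⟩ :=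
    exists_adj_of_preconnected_induce hconn.preconnected (X := {z | J.Reachable x z})
      ⟨x, SimpleGraph.support_mono hJ hx, .rfl⟩ ⟨s, hsY, h s hsS⟩
  have hz : degParity J z = 0 := heven z fun hzS ↦ h z hzS hxz
  exact hxw (hxz.trans ((adj_iff_of_isCycles hY hJ hz (mem_support_of_reachable hxz hx) w).2
    hzw).reachable)

lemma reachable_sup_of_isCycles (hY : Y.IsCycles)
    (hconn : (Y.induce Y.support).Connected) (hJ : J ≤ Y)
    (heven : ∀ z ∉ C.support, degParity J z = 0) (hS : (Y.support ∩ C.support).Nonempty)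
    (hC : ∀ x ∈ C.support, C.Reachable x v) (hx : x ∈ (C ⊔ J).support) :
    (C ⊔ J).Reachable x v := by
  have hCJ : ∀ z ∈ C.support, (C ⊔ J).Reachable z v := fun z hz ↦ (hC z hz).mono le_sup_left
  obtain ⟨y, hxy | hxy⟩ := hx
  · exact hCJ x ⟨y, hxy⟩
  · obtain ⟨z, hz, hxz⟩ := exists_mem_reachable_of_isCycles hY hconn hJ heven hS ⟨y, hxy⟩
    exact (hxz.mono le_sup_right).trans (hCJ z hz)

/-- Off `C`, each vertex of the cycle lies on exactly one of `J` and `Y \ J`. -/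
lemma even_ncard_support_sup_or (hY : Y.IsCycles) (hJ : J ≤ Y)
    (heven : ∀ z ∉ C.support, degParity J z = 0) (hodd : Odd (Y.support \ C.support).ncard) :
    Even (C ⊔ J).support.ncard ∨ Even (C ⊔ Y \ J).support.ncard := by
  have hunion : (J.support \ C.support) ∪ ((Y \ J).support \ C.support) =
      Y.support \ C.support := by
    rw [← Set.union_sdiff_distrib, ← support_sup, sup_sdiff_cancel_right hJ]
  have hdisj : Disjoint (J.support \ C.support) ((Y \ J).support \ C.support) := by
    refine Set.disjoint_left.2 ?_
    rintro x ⟨hxJ, hxC⟩ ⟨⟨y, hYxy, hJxy⟩, -⟩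
    exact hJxy ((adj_iff_of_isCycles hY hJ (heven x hxC) hxJ y).2 hYxy)
  have hcard : ∀ K : SimpleGraph V, (C ⊔ K).support.ncard =
      C.support.ncard + (K.support \ C.support).ncard := fun K ↦ by
    rw [support_sup, ← Set.union_sdiff_self, Set.ncard_union_eq disjoint_sdiff_self_right]
  rw [← hunion, Set.ncard_union_eq hdisj] at hodd
  rw [hcard, hcard]
  grind

/-- Complementing inside the cycle does not change the degree parities. -/
theorem exists_even_sup_cycle (hY : Y.IsCycles) (hconn : (Y.induce Y.support).Connected)
    (hCY : Disjoint C Y) (hCeven : ∀ x ∉ Y.support, degParity C x = 0)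
    (hC : ∀ x ∈ C.support, C.Reachable x v) (hS : (Y.support ∩ C.support).Nonempty)
    (hodd : Odd (Y.support \ C.support).ncard) :
    ∃ J ≤ Y, (∀ x, degParity (C ⊔ J) x = 0) ∧
      ((C ⊔ J).induce (C ⊔ J).support).Connected ∧ Even (C ⊔ J).support.ncard := by
  have hgood : ∀ K ≤ Y, (∀ x, degParity K x = degParity C x) →
      (∀ x, degParity (C ⊔ K) x = 0) ∧ ((C ⊔ K).induce (C ⊔ K).support).Connected := by
    intro K hK hdeg
    refine ⟨fun x ↦ ?_, connected_induce_support (v := v) ?_ fun x hx ↦ ?_⟩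
    · rw [degParity_sup (hCY.mono_right hK), hdeg, CharTwo.add_self_eq_zero]
    · obtain ⟨z, -, hz⟩ := hS
      exact SimpleGraph.support_mono le_sup_left (mem_support_of_reachable (hC z hz) hz)
    · exact reachable_sup_of_isCycles hY hconn hK
        (fun z hz ↦ (hdeg z).trans (degParity_eq_zero_of_notMem_support hz)) hS hC hx
  have hsum : ∑ x ∈ Y.support.toFinset, degParity C x = 0 := by
    rw [← sum_degParity C]
    exact Finset.sum_subset (Finset.subset_univ _) fun x _ hx ↦ hCeven x (by simpa using hx)
  obtain ⟨J, hJ⟩ := exists_isJoin (D := Y.support.toFinset) (by rwa [Set.coe_toFinset]) hsum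
  have hdegJ : ∀ x, degParity J x = degParity C x := fun x ↦ by
    by_cases hx : x ∈ Y.support
    · exact hJ.degParity_eq x (Set.mem_toFinset.2 hx)
    · rw [hCeven x hx, hJ.degParity_eq_zero (by simpa using hx)]
  have hdegYJ : ∀ x, degParity (Y \ J) x = degParity C x := fun x ↦ by
    rw [degParity_sdiff hJ.le, degParity_eq_zero_of_isCycles hY, zero_add, hdegJ]
  have hJeven : ∀ z ∉ C.support, degParity J z = 0 := fun z hz ↦
    (hdegJ z).trans (degParity_eq_zero_of_notMem_support hz)
  rcases even_ncard_support_sup_or hY hJ.le hJeven hodd with hcard | hcard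
  · have ⟨heven, hconn'⟩ := hgood J hJ.le hdegJ
    exact ⟨J, hJ.le, heven, hconn', hcard⟩
  · have ⟨heven, hconn'⟩ := hgood (Y \ J) sdiff_le hdegYJ
    exact ⟨Y \ J, sdiff_le, heven, hconn', hcard⟩

end Cycle

section NonadjacentVertex

variable {V : Type*} {G H Y : SimpleGraph V} {D M : Set V} {s t v x y : V}

lemma sdiff_adj_of_notMem_support (hx : x ∉ Y.support) : (G \ Y).Adj x y ↔ G.Adj x y :=
  and_iff_left fun h ↦ hx ⟨y, h⟩

lemma connected_induce_sdiff_of_disjoint_support (hD : (G.induce D).Connected)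
    (hDY : Disjoint D Y.support) : ((G \ Y).induce D).Connected := by
  refine hD.mono ?_
  intro x y hxy
  exact (sdiff_adj_of_notMem_support (Set.disjoint_left.1 hDY x.2)).2 hxy

lemma exists_connected_superset_odd_ncard_sdiff [Finite V] (hD : (H.induce D).Connected)
    (hDM : Disjoint D M) (hsM : s ∉ M) (htM : t ∈ M) (hsD : ∃ d ∈ D, H.Adj s d)
    (htD : ∃ d ∈ D, H.Adj t d) :
    ∃ U, D ⊆ U ∧ s ∈ U ∧ U ⊆ insert t (insert s D) ∧ (H.induce U).Connected ∧
      Odd (M \ U).ncard := by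
  obtain ⟨⟨d, hd, hsd⟩, e, he, hte⟩ := And.intro hsD htD
  have hsconn := connected_induce_insert hD hd hsd
  have hMs : M \ insert s D = M := by
    rw [sdiff_eq_left]
    exact Set.disjoint_right.2 fun x hx hxM ↦
      hx.elim (fun h ↦ hsM (h ▸ hxM)) fun h ↦ Set.disjoint_left.1 hDM h hxM
  rcases Nat.even_or_odd M.ncard with heven | hodd
  · refine ⟨insert t (insert s D), ?_, ?_, subset_rfl,
      connected_induce_insert hsconn (Set.mem_insert_of_mem s he) hte, ?_⟩
    · exact (Set.subset_insert s D).trans (Set.subset_insert t _)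
    · exact Set.mem_insert_of_mem t (Set.mem_insert s D)
    · have hMt : M \ insert t (insert s D) = M \ {t} := by
        rw [← Set.union_singleton, ← Set.sdiff_sdiff, hMs]
      have := Set.ncard_sdiff_singleton_add_one htM
      rw [hMt]
      grind
  · exact ⟨insert s D, Set.subset_insert s D, Set.mem_insert s D, Set.subset_insert t _, hsconn,
      hMs.symm ▸ hodd⟩

variable [Fintype V]

theorem exists_star_extension_of_cycle (hv : degParity G v = 0)
    (hD : (G.induce D).Connected) (hDY : Disjoint D Y.support) (hvD : v ∉ D)
    (hvY : v ∉ Y.support) (hcover : ∀ x ∉ Y.support, x ∈ insert v D)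
    (hsY : s ∈ Y.support) (hvs : G.Adj v s) (hsD : ∃ d ∈ D, G.Adj s d)
    (htY : t ∈ Y.support) (hvt : ¬ G.Adj v t) (htD : ∃ d ∈ D, G.Adj t d) :
    ∃ C ≤ G \ Y, (∀ y, G.Adj v y → C.Adj v y) ∧ (∀ x ∈ C.support, C.Reachable x v) ∧
      (∀ x ∉ Y.support, degParity C x = 0) ∧ Odd (Y.support \ C.support).ncard := by
  have hadj : ∀ y, (G \ Y).Adj v y ↔ G.Adj v y := fun y ↦ sdiff_adj_of_notMem_support hvY
  have hDadj : ∀ x d, d ∈ D ∧ G.Adj x d → d ∈ D ∧ (G \ Y).Adj x d := fun x d ⟨hd, hxd⟩ ↦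
    ⟨hd, ((sdiff_adj_of_notMem_support (Set.disjoint_left.1 hDY hd)).2 hxd.symm).symm⟩
  let M : Set V := {x ∈ Y.support | ¬ G.Adj v x}
  obtain ⟨U, hDU, hsU, hUsub, hU, hodd⟩ := exists_connected_superset_odd_ncard_sdiff (M := M)
    (connected_induce_sdiff_of_disjoint_support hD hDY) (hDY.mono_right fun x hx ↦ hx.1)
    (fun h ↦ h.2 hvs) ⟨htY, hvt⟩ (hsD.imp (hDadj s)) (htD.imp (hDadj t))
  have hvU : v ∉ U := by
    intro h
    rcases hUsub h with rfl | rfl | h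
    exacts [hvY htY, hvY hsY, hvD h]
  obtain ⟨C, hC, hcenter, hreach, hdeg, htC, hCsub⟩ := exists_star_extension (U := U.toFinset)
    (by rwa [Set.coe_toFinset]) (by simpa using hvU) (by simpa using hsU)
    ((hadj s).2 hvs) (mt (hadj t).1 hvt)
  have hcenter' : ∀ y, C.Adj v y ↔ G.Adj v y := fun y ↦ (hcenter y).trans (hadj y)
  refine ⟨C, hC, fun y ↦ (hcenter' y).2, hreach, fun x hx ↦ ?_, ?_⟩
  · rcases hcover x hx with rfl | hxD
    · rw [degParity_congr hcenter', hv]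
    · exact hdeg x (by simpa using hDU hxD) (fun h ↦ hx (h ▸ hsY)) fun h ↦ hx (h ▸ htY)
  · suffices Y.support \ C.support = M \ U by rwa [this]
    ext x
    have hvx : G.Adj v x → x ∈ C.support := fun h ↦ ⟨v, ((hcenter' x).2 h).symm⟩
    have hx := hCsub x
    rw [hadj] at hx
    simp only [Set.mem_toFinset] at hx htC
    have hxU : x ∈ U → x = t ∨ x = s ∨ x ∈ D := @hUsub x
    grind

theorem oddEdgeColorable_of_cycle (hv : degParity G v = 0) (hodd : ∀ x ≠ v, degParity G x = 1)
    (hYG : Y ≤ G) (hY : Y.IsCycles) (hYconn : (Y.induce Y.support).Connected)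
    (hD : (G.induce D).Connected) (hDY : Disjoint D Y.support) (hvD : v ∉ D)
    (hvY : v ∉ Y.support) (hcover : ∀ x ∉ Y.support, x ∈ insert v D)
    (hsY : s ∈ Y.support) (hvs : G.Adj v s) (hsD : ∃ d ∈ D, G.Adj s d)
    (htY : t ∈ Y.support) (hvt : ¬ G.Adj v t) (htD : ∃ d ∈ D, G.Adj t d) :
    OddEdgeColorable G 3 := by
  obtain ⟨C, hC, hcenter, hreach, heven, hcard⟩ := exists_star_extension_of_cycle hv hD hDY hvD
    hvY hcover hsY hvs hsD htY hvt htD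
  obtain ⟨J, hJ, hB, hBconn, hBcard⟩ := exists_even_sup_cycle hY hYconn
    (disjoint_sdiff_self_left.mono_left hC) heven hreach ⟨s, hsY, v, (hcenter s hvs).symm⟩ hcard
  exact oddEdgeColorable_of_even_subgraph hodd (sup_le (hC.trans sdiff_le) (hJ.trans hYG)) hB
    hBconn hBcard fun y hy ↦ Or.inl (hcenter y hy)

end NonadjacentVertex

section CycleThroughEdge

variable {V : Type*} {G Γ : SimpleGraph V} {A N D : Set V} {a b s t v : V}

lemma exists_isCycles_of_isCycle {c : G.Walk a a} (hc : c.IsCycle) :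
    ∃ Y ≤ G, Y.IsCycles ∧ (Y.induce Y.support).Connected ∧ Y.support = {x | x ∈ c.support} := by
  have hsupport : c.toSubgraph.spanningCoe.support = {x | x ∈ c.support} := by
    ext x
    refine ⟨fun ⟨y, hxy⟩ ↦ c.mem_verts_toSubgraph.1 (c.toSubgraph.edge_vert hxy), fun hx ↦ ?_⟩
    exact Set.nonempty_of_ncard_ne_zero
      ((hc.ncard_neighborSet_toSubgraph_eq_two hx).trans_ne two_ne_zero)
  refine ⟨c.toSubgraph.spanningCoe, c.toSubgraph.spanningCoe_le,
    hc.isCycles_spanningCoe_toSubgraph, ?_, hsupport⟩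
  rw [hsupport, ← c.verts_toSubgraph]
  exact c.toSubgraph_connected.coe

lemma exists_isCycles_of_isPath_deleteEdges (hst : G.Adj s t)
    {p : (G.deleteEdges {s(s, t)}).Walk s t} (hp : p.IsPath) :
    ∃ Y ≤ G, Y.IsCycles ∧ (Y.induce Y.support).Connected ∧ Y.support = {x | x ∈ p.support} := by
  have hle := G.deleteEdges_le {s(s, t)}
  have hcycle : (SimpleGraph.Walk.cons hst.symm (p.mapLe hle)).IsCycle := by
    refine (SimpleGraph.Walk.cons_isCycle_iff _ _).2 ⟨hp.mapLe hle, fun h ↦ ?_⟩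
    rw [SimpleGraph.Walk.edges_mapLe_eq_edges] at h
    simpa [Sym2.eq_swap] using p.adj_of_mem_edges h
  obtain ⟨Y, hYG, hY, hconn, hsupport⟩ := exists_isCycles_of_isCycle hcycle
  refine ⟨Y, hYG, hY, hconn, hsupport.trans ?_⟩
  ext x
  rw [Set.mem_ofPred_eq, SimpleGraph.Walk.support_cons, List.mem_cons,
    SimpleGraph.Walk.support_mapLe_eq_support, or_iff_right_of_imp, Set.mem_ofPred_eq]
  rintro rfl
  exact p.end_mem_support

variable [Fintype V] {k : ℕ} {p : Γ.Walk a b}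

lemma exists_adj_start_of_isShortestWalkIn (hG : IsKConnected G 4)
    (hΓ : ∀ y ≠ b, G.Adj a y → Γ.Adj a y) (hp : IsShortestWalkIn (insert v D)ᶜ A N p)
    (hcover : ∀ x ∉ p.support, x ∈ insert v D) : ∃ d ∈ D, G.Adj a d := by
  let S : Finset V := {v, b, p.getVert 1}
  obtain ⟨y, hyS, hay⟩ := hG.exists_adj_notMem (S := S.erase a) (x := a)
    (S.card_erase_le.trans_lt (Finset.card_le_three.trans_lt (by omega))) (S.notMem_erase a)
  simp only [S, Finset.mem_erase, Finset.mem_insert, Finset.mem_singleton, not_and, not_or] at hyS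
  obtain ⟨hyv, hyb, hy1⟩ := hyS hay.ne'
  refine ⟨y, (hcover y fun hyp ↦ ?_).resolve_left hyv, hay⟩
  obtain ⟨i, rfl, hi⟩ := SimpleGraph.Walk.mem_support_iff_exists_getVert.1 hyp
  rcases Nat.eq_zero_or_pos i with rfl | hpos
  · exact hay.ne p.getVert_zero.symm
  · have := hp.eq_succ_of_adj hpos hi (by simpa using hΓ _ hyb hay)
    exact hy1 (by rw [this])

lemma IsKConnected.exists_link_deleteEdges (hG : IsKConnected G k) (hk : 4 ≤ k) (hsv : s ≠ v)
    (htv : t ≠ v) (hst : s ≠ t) : ∃ r ≠ v, ReachableIn (G.deleteEdges {s(s, t)}) {v, r}ᶜ s t := by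
  obtain ⟨r, hr⟩ := hG.exists_notMem (S := {v, s, t}) (Finset.card_le_three.trans (by omega))
  simp only [Finset.mem_insert, Finset.mem_singleton, not_or] at hr
  obtain ⟨hrv, hrs, hrt⟩ := hr
  obtain ⟨w, hw, hsw⟩ := hG.exists_adj_notMem (S := {v, r, t}) (x := s)
    (Finset.card_le_three.trans_lt (by omega)) (by simp [hsv, Ne.symm hrs, hst])
  simp only [Finset.mem_insert, Finset.mem_singleton, not_or] at hw
  obtain ⟨hwv, hwr, hwt⟩ := hw
  have hconn : ((G.deleteEdges {s(s, t)}).induce {v, r, s}ᶜ).Connected := by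
    refine (hG.2 {v, r, s} ?_).mono ?_
    · exact (Set.ncard_insert_le _ _).trans_lt (by rw [Set.ncard_pair hrs]; omega)
    · rintro ⟨x, hx⟩ ⟨y, hy⟩ hxy
      simp only [Set.mem_compl_iff, Set.mem_insert_iff, Set.mem_singleton_iff, not_or] at hx hy
      simpa [hx, hy] using hxy
  have hsw' : (G.deleteEdges {s(s, t)}).Adj s w := by simp [hsw, hwt, hst]
  have hwt' : ReachableIn (G.deleteEdges {s(s, t)}) {v, r, s}ᶜ w t :=
    .of_connected_induce hconn.preconnected (by simp [hwv, hwr, hsw.ne'])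
      (by simp [htv, Ne.symm hrt, hst.symm])
  refine ⟨r, hrv, .trans (.of_adj hsw' ?_ ?_) (hwt'.mono ?_)⟩
  · simp [hsv, Ne.symm hrs]
  · simp [hwv, hwr]
  · exact Set.compl_subset_compl.2 (by simp [Set.subset_def])

lemma IsKConnected.exists_adj_boundary_neighborSet (hG : IsKConnected G k) (hk : 2 ≤ k)
    (hsv : s ≠ v) (hvs : ¬ G.Adj v s) :
    ∃ a b, G.Adj v a ∧ b ≠ v ∧ ¬ G.Adj v b ∧ G.Adj a b := by
  obtain ⟨u, -, hvu⟩ := hG.exists_adj_notMem (S := ∅) (x := v)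
    (by rw [Finset.card_empty]; omega) (Finset.notMem_empty v)
  obtain ⟨a, ⟨-, hva⟩, b, ⟨hbv, hvb⟩, hab⟩ := exists_adj_of_preconnected_induce
    (hG.2 {v} (by rw [Set.ncard_singleton]; omega)).preconnected (X := {x | G.Adj v x})
    ⟨u, hvu.ne', hvu⟩ ⟨s, hsv, hvs⟩
  exact ⟨a, b, hva, hbv, hvb, hab⟩

theorem oddEdgeColorable_of_not_adj (hG : IsKConnected G 4) (hv : degParity G v = 0)
    (hodd : ∀ x ≠ v, degParity G x = 1) (hav : a ≠ v) (hva : ¬ G.Adj v a) :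
    OddEdgeColorable G 3 := by
  obtain ⟨s, t, hvs, htv, hvt, hst⟩ := hG.exists_adj_boundary_neighborSet (by omega) hav hva
  let Γ := G.deleteEdges {s(s, t)}
  have hΓ : ∀ ⦃x y⦄, G.Adj x y → ¬ Γ.Adj x y → x = s ∧ y = t ∨ x = t ∧ y = s := by
    intro x y hxy hnot
    simp only [Γ, SimpleGraph.deleteEdges_adj, Set.mem_singleton_iff, Sym2.eq_iff] at hnot
    tauto
  obtain ⟨r, hrv, hlink⟩ := hG.exists_link_deleteEdges le_rfl hvs.ne' htv hst.ne
  obtain ⟨D, s', t', p, hD, hvD, hp, hcover⟩ := exists_isShortestWalkIn_compl_of_isKConnected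
    (Γ := Γ) (A := {s}) (N := {t}) hG (by rintro x y hxy hnot _ rfl _ rfl; grind) hrv
    ⟨s, rfl, t, rfl, hlink⟩
  obtain rfl : s' = s := hp.start_mem
  obtain rfl : t' = t := hp.end_mem
  obtain ⟨Y, hYG, hY, hYconn, hsupport⟩ := exists_isCycles_of_isPath_deleteEdges hst hp.isPath
  have hYp : ∀ x, x ∈ Y.support ↔ x ∈ p.support := Set.ext_iff.1 hsupport
  have hYD : ∀ x ∈ Y.support, x ∉ insert v D := fun x hx ↦ hp.support_subset x ((hYp x).1 hx)
  refine oddEdgeColorable_of_cycle hv hodd hYG hY hYconn hD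
    (Set.disjoint_right.2 fun x hx hxD ↦ hYD x hx (Or.inr hxD)) hvD
    (fun h ↦ hYD v h (Or.inl rfl)) (fun x hx ↦ hcover x (mt (hYp x).2 hx))
    ((hYp _).2 p.start_mem_support) hvs ?_ ((hYp _).2 p.end_mem_support) hvt ?_
  · refine exists_adj_start_of_isShortestWalkIn hG (fun y hy hadj ↦ ?_) hp hcover
    by_contra hnot
    grind [hadj.ne]
  · refine exists_adj_start_of_isShortestWalkIn hG (fun y hy hadj ↦ ?_) hp.reverse
      (by simpa using hcover)
    by_contra hnot
    grind [hadj.ne]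

end CycleThroughEdge

section OddOrder

variable {V : Type*} [Fintype V]

lemma exists_degParity_eq_zero (G : SimpleGraph V) (hcard : Odd (Fintype.card V)) :
    ∃ v, degParity G v = 0 := by
  by_contra! h
  have hsum := sum_degParity G
  rw [Finset.sum_congr rfl fun x _ ↦ (zmodTwo_eq_zero_or_eq_one _).resolve_left (h x)] at hsum
  simp only [Finset.sum_const, Finset.card_univ, nsmul_one, ZMod.natCast_eq_zero_iff_even] at hsum
  exact Nat.not_even_iff_odd.2 hcard hsum

end OddOrder

/-- Every 4-connected simple graph of odd order is odd 3-edge-colorable. -/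
theorem stmt6 {V : Type*} [Fintype V] (G : SimpleGraph V)
    (hconn : IsKConnected G 4) (hodd : Odd (Fintype.card V)) :
    OddEdgeColorable G 3 := by
  obtain ⟨v, hv⟩ := exists_degParity_eq_zero G hodd
  by_cases heven : ∃ a ≠ v, degParity G a = 0
  · obtain ⟨a, hav, ha⟩ := heven
    exact oddEdgeColorable_of_two_even hconn hodd hv hav ha
  have hothers : ∀ x ≠ v, degParity G x = 1 := fun x hx ↦
    (zmodTwo_eq_zero_or_eq_one _).resolve_left fun h ↦ heven ⟨x, hx, h⟩
  by_cases huniv : ∀ x ≠ v, G.Adj v x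
  · exact oddEdgeColorable_of_universal hconn hodd hv huniv hothers
  · push Not at huniv
    obtain ⟨a, hav, hva⟩ := huniv
    exact oddEdgeColorable_of_not_adj hconn hv hothers hav hva
end
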